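/- arXiv:2207.11852 — 16 statements merged into one kernel-verified Lean document; each statement's English description precedes it below -/
import Mathlib

section
/- Let (G,X) be a flow where G is compactly generated by Γ and X is 0-dimensional. Then the following nine conditions are pairwise equivalent: (1) every point of X is Γ-recurrent of type I; (2) every point of X is Γ-recurrent of type II; (3) every point of X is almost periodic; (4) X is a union of G-minimal sets; (5) the orbit closure relation R_o(X) is closed in X × X; (6) the orbit closure mapping x ↦ closure(G•x) is ⌜continuous⌝; (7) the orbit closure mapping x ↦ closure(G•x) is upper semicontinuous; (8) for every compact open subset U of X the set U_G^* = {x ∈ X | closure(G•x) ⊆ U} is compact and open; (9) (G,X) is locally weakly almost periodic with G discrete. -/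
open Pointwise Filter Topology Uniformity

/-- A directed (preordered, nonempty) index relation for nets. -/
def DirIdx {ι : Type} (le : ι → ι → Prop) : Prop :=
  Nonempty ι ∧ (∀ i, le i i) ∧ (∀ i j k, le i j → le j k → le i k) ∧
    ∀ i j, ∃ k, le i k ∧ le j k

/-- The limsup of a net of subsets of a topological space: the set of points every
neighborhood of which meets the sets frequently along the net. -/
def NetLimsup {ι α : Type} [TopologicalSpace α] (le : ι → ι → Prop) (Y : ι → Set α) :
    Set α :=
  {y | ∀ U ∈ 𝓝 y, ∀ i, ∃ j, le i j ∧ (U ∩ Y j).Nonempty}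

/-- The Γ-length of a group element: the least `r ≥ 1` with `g ∈ Γ ^ r`. -/
noncomputable def len {G : Type} [Group G] (Γ : Set G) (g : G) : ℕ :=
  sInf {r : ℕ | 1 ≤ r ∧ g ∈ Γ ^ r}

/-- `K(g) = Γ^{|g|-1} · g`. -/
def Kset {G : Type} [Group G] (Γ : Set G) (g : G) : Set G :=
  Γ ^ (len Γ g - 1) * {g}

/-- A Γ-cone: the limsup of `K(g_i)` along a net `(g_i)` whose Γ-lengths are
nondecreasing and tend to infinity. -/
def IsCone {G : Type} [Group G] [TopologicalSpace G] (Γ : Set G) (C : Set G) : Prop :=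
  ∃ (ι : Type) (le : ι → ι → Prop) (g : ι → G),
    DirIdx le ∧
    (∀ i j, le i j → len Γ (g i) ≤ len Γ (g j)) ∧
    (∀ n : ℕ, ∃ i, ∀ j, le i j → n ≤ len Γ (g j)) ∧
    C = NetLimsup le fun i => Kset Γ (g i)

/-- Γ-recurrence of type I: every Γ-cone sends `x` back to every neighborhood of `x`. -/
def RecurrentI {G X : Type} [Group G] [TopologicalSpace G] [TopologicalSpace X]
    [MulAction G X] (Γ : Set G) (x : X) : Prop :=
  ∀ C : Set G, IsCone Γ C → ∀ U ∈ 𝓝 x, ∃ c ∈ C, c • x ∈ U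

/-- Γ-recurrence of type II. -/
def RecurrentII {G X : Type} [Group G] [TopologicalSpace X] [MulAction G X]
    (Γ : Set G) (x : X) : Prop :=
  ∀ U ∈ 𝓝 x, ∀ (ι : Type) (le : ι → ι → Prop) (g : ι → G),
    DirIdx le →
    (∀ n : ℕ, ∃ i, ∀ j, le i j → n ≤ len Γ (g j)) →
    ∃ n : ℕ, 1 ≤ n ∧ ∀ i, ∃ j, le i j ∧ ∃ c ∈ Kset Γ (g j), c • x ∈ U ∧ len Γ c ≤ n

/-- Almost periodicity: every return-time set `N(x,U)` is syndetic. -/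
def AlmostPeriodicPt (G : Type) {X : Type} [Group G] [TopologicalSpace G]
    [TopologicalSpace X] [MulAction G X] (x : X) : Prop :=
  ∀ U ∈ 𝓝 x, ∃ K : Set G, IsCompact K ∧ K⁻¹ * {g : G | g • x ∈ U} = Set.univ

/-- A minimal set: the orbit closure of each of its points equals it. -/
def IsMinimalSet (G : Type) {X : Type} [Group G] [TopologicalSpace X] [MulAction G X]
    (M : Set X) : Prop :=
  ∀ x ∈ M, closure (MulAction.orbit G x) = M


section helpers

set_option linter.unusedSectionVars false

variable {G X : Type} [Group G] [TopologicalSpace G] [ContinuousMul G] [TopologicalSpace X]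
  [T2Space X] [MulAction G X] [ContinuousSMul G X]

theorem aux_orbit_sub {x y : X} (hy : y ∈ closure (MulAction.orbit G x)) :
    closure (MulAction.orbit G y) ⊆ closure (MulAction.orbit G x) := by
  refine closure_minimal ?_ isClosed_closure
  rintro _ ⟨g, rfl⟩
  refine map_mem_closure (continuous_const_smul g) hy ?_
  rintro _ ⟨h, rfl⟩
  exact ⟨g * h, mul_smul g h x⟩

theorem aux_self (x : X) : x ∈ closure (MulAction.orbit G x) :=
  subset_closure (MulAction.mem_orbit_self x)

/-- From symmetry of the orbit closure relation: finitely many return translates. -/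
theorem aux_finite (hLag : ∀ x : X, IsCompact (closure (MulAction.orbit G x)))
    (hS : ∀ x y : X, y ∈ closure (MulAction.orbit G x) → x ∈ closure (MulAction.orbit G y))
    (x : X) (U : Set X) (hU : U ∈ 𝓝 x) :
    ∃ F : Finset G, closure (MulAction.orbit G x) ⊆ ⋃ f ∈ F, (fun y => f • y) ⁻¹' interior U := by
  refine (hLag x).elim_finite_subcover (fun f : G => (fun y : X => f • y) ⁻¹' interior U)
    (fun f => isOpen_interior.preimage (continuous_const_smul f)) ?_
  intro y hy
  obtain ⟨_, hz, ⟨g, rfl⟩⟩ := mem_closure_iff.1 (hS x y hy) (interior U) isOpen_interior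
    (mem_interior_iff_mem_nhds.2 hU)
  exact Set.mem_iUnion.2 ⟨g, hz⟩

theorem aux_pow_mono {Γ : Set G} (h1 : (1 : G) ∈ Γ) {m n : ℕ} (h : m ≤ n) : Γ ^ m ⊆ Γ ^ n :=
  Set.pow_subset_pow_right h1 h

theorem aux_pow_compact {Γ : Set G} (hc : IsCompact Γ) (n : ℕ) : IsCompact (Γ ^ n) := by
  induction n with
  | zero => rw [pow_zero]; exact isCompact_singleton
  | succ k ih => rw [pow_succ]; exact ih.mul hc

theorem aux_len_spec {Γ : Set G} (hgen : ∀ g : G, ∃ r : ℕ, 1 ≤ r ∧ g ∈ Γ ^ r) (g : G) :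
    1 ≤ len Γ g ∧ g ∈ Γ ^ len Γ g :=
  Nat.sInf_mem (s := {r : ℕ | 1 ≤ r ∧ g ∈ Γ ^ r}) (hgen g)

theorem aux_len_le {Γ : Set G} {g : G} {n : ℕ} (hn : 1 ≤ n) (h : g ∈ Γ ^ n) : len Γ g ≤ n :=
  Nat.sInf_le (s := {r : ℕ | 1 ≤ r ∧ g ∈ Γ ^ r}) ⟨hn, h⟩

theorem aux_inv_mem {Γ : Set G} (hinv : Γ⁻¹ = Γ) {n : ℕ} {g : G} : g⁻¹ ∈ Γ ^ n ↔ g ∈ Γ ^ n := by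
  rw [← Set.mem_inv, ← inv_pow, hinv]

theorem aux_len_inv {Γ : Set G} (hinv : Γ⁻¹ = Γ) (g : G) : len Γ g⁻¹ = len Γ g := by
  unfold len
  simp only [aux_inv_mem hinv]

/-- Return times bounded in length inside `K(g)`. -/
theorem aux_bdd {Γ : Set G} (h1 : (1 : G) ∈ Γ) (hinv : Γ⁻¹ = Γ)
    (hgen : ∀ g : G, ∃ r : ℕ, 1 ≤ r ∧ g ∈ Γ ^ r)
    (hLag : ∀ x : X, IsCompact (closure (MulAction.orbit G x)))
    (hS : ∀ x y : X, y ∈ closure (MulAction.orbit G x) → x ∈ closure (MulAction.orbit G y))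
    (x : X) (U : Set X) (hU : U ∈ 𝓝 x) :
    ∃ n : ℕ, ∀ g : G, n + 1 ≤ len Γ g →
      ∃ c ∈ Kset Γ g, c • x ∈ U ∧ c ∈ Γ ^ (2 * n + 1) := by
  obtain ⟨F, hF⟩ := aux_finite hLag hS x U hU
  refine ⟨F.sup (len Γ), fun g hg => ?_⟩
  set n := F.sup (len Γ) with hn
  have hgm := (aux_len_spec hgen g).2
  obtain ⟨k, hk⟩ := Nat.exists_eq_add_of_le hg
  have hk' : len Γ g = k + (n + 1) := by omega
  rw [hk', pow_add] at hgm
  obtain ⟨a, ha, h, hh, rfl⟩ := Set.mem_mul.1 hgm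
  have hx : h • x ∈ closure (MulAction.orbit G x) := subset_closure ⟨h, rfl⟩
  obtain ⟨f, hf, hfU⟩ := Set.mem_iUnion₂.1 (hF hx)
  have hfn : f ∈ Γ ^ n :=
    aux_pow_mono h1 (Finset.le_sup (f := len Γ) hf) (aux_len_spec hgen f).2
  refine ⟨f * h, ?_, ?_, ?_⟩
  · refine Set.mem_mul.2 ⟨f * a⁻¹, ?_, a * h, rfl, by group⟩
    have : len Γ (a * h) - 1 = n + k := by omega
    rw [this, pow_add]
    exact Set.mul_mem_mul hfn ((aux_inv_mem hinv).2 ha)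
  · rw [mul_smul]; exact interior_subset hfU
  · have : 2 * n + 1 = n + (n + 1) := by omega
    rw [this, pow_add]
    exact Set.mul_mem_mul hfn hh

/-- The key construction: if `{x | closure (G x) ⊆ U}` is not open, we get a bad net. -/
theorem aux_net {Γ : Set G} (hc : IsCompact Γ) (h1 : (1 : G) ∈ Γ) (hinv : Γ⁻¹ = Γ)
    (hgen : ∀ g : G, ∃ r : ℕ, 1 ≤ r ∧ g ∈ Γ ^ r)
    (U : Set X) (hUc : IsCompact U) (hUo : IsOpen U)
    (hno : ¬ IsOpen {x : X | closure (MulAction.orbit G x) ⊆ U}) :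
    ∃ y : X, y ∉ U ∧ ∃ (ι : Type) (le : ι → ι → Prop) (g : ι → G) (w : ι → X),
      DirIdx le ∧ (∀ i j, le i j → len Γ (g i) ≤ len Γ (g j)) ∧
      (∀ n : ℕ, ∃ i, ∀ j, le i j → n ≤ len Γ (g j)) ∧
      (∀ W ∈ 𝓝 y, ∃ i, ∀ j, le i j → w j ∈ W) ∧
      (∀ i, ∀ c ∈ Kset Γ (g i), c • w i ∈ U) := by
  have hUcl : IsClosed U := hUc.isClosed
  let P : G → X → Prop := fun g w => w ∉ U ∧ ∀ c ∈ Kset Γ g, c • w ∈ U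
  let A : ℕ → Set X := fun n => {w | ∃ g, n ≤ len Γ g ∧ P g w}
  have hAne : ∀ n, (A n).Nonempty := by
    intro n
    rw [isOpen_iff_mem_nhds] at hno
    push Not at hno
    obtain ⟨x, hx, hxn⟩ := hno
    have hx' : ∀ g : G, g • x ∈ U := fun g => hx (subset_closure ⟨g, rfl⟩)
    have htube : ∀ᶠ z in 𝓝 x, ∀ g ∈ Γ ^ n, g • z ∈ U := by
      apply (aux_pow_compact hc n).eventually_forall_of_forall_eventually
      intro g _
      have : Tendsto (fun p : X × G => p.2 • p.1) (𝓝 (x, g)) (𝓝 (g • x)) :=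
        (continuous_snd.smul continuous_fst).tendsto (x, g)
      exact this (hUo.mem_nhds (hx' g))
    have hfreq : ∃ᶠ z in 𝓝 x, ¬ closure (MulAction.orbit G z) ⊆ U := by
      intro hcon
      apply hxn
      filter_upwards [hcon] with z hz
      exact not_not.1 hz
    obtain ⟨z, hz, hzU⟩ := (hfreq.and_eventually htube).exists
    have hex : ∃ r, ∃ g : G, len Γ g = r ∧ g • z ∉ U := by
      by_contra hcon
      push Not at hcon
      apply hz
      refine closure_minimal ?_ hUcl
      rintro _ ⟨g, rfl⟩
      exact hcon _ g rfl
    classical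
    obtain ⟨g, hgr, hg⟩ := Nat.find_spec hex
    have hmin : ∀ h : G, len Γ h < len Γ g → h • z ∈ U := by
      intro h hh
      by_contra hcon
      exact Nat.find_min hex (hgr ▸ hh) ⟨h, rfl, hcon⟩
    have hzz : z ∈ U := by
      have := hzU 1 (by simpa using aux_pow_mono h1 (Nat.zero_le n) (show (1 : G) ∈ Γ ^ 0 by simp))
      simpa using this
    refine ⟨g • z, g⁻¹, ?_, hg, ?_⟩
    · rw [aux_len_inv hinv]
      by_contra hlt
      push Not at hlt
      exact hg (hzU g (aux_pow_mono h1 hlt.le (aux_len_spec hgen g).2))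
    · rintro _ ⟨a, ha, _, rfl, rfl⟩
      rw [aux_len_inv hinv] at ha
      change (a * g⁻¹) • g • z ∈ U
      rw [mul_smul, inv_smul_smul]
      rcases Nat.eq_zero_or_pos (len Γ g - 1) with h0 | hpos
      · rw [h0, pow_zero] at ha
        rw [Set.mem_one.1 ha, one_smul]; exact hzz
      · have := aux_len_le hpos ha
        exact hmin a (by omega)
  have hAmono : ∀ m n, m ≤ n → A n ⊆ A m := by
    rintro m n hmn w ⟨g, hg, hP⟩
    exact ⟨g, hmn.trans hg, hP⟩
  have hcomp : IsCompact (Γ • U ∩ Uᶜ) := by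
    have : IsCompact (Γ • U) := by
      have h2 := (hc.prod hUc).image (f := fun p : G × X => p.1 • p.2) continuous_smul
      rwa [Set.image_smul_prod] at h2
    exact this.inter_right hUo.isClosed_compl
  have hAsub : ∀ n, A n ⊆ Γ • U ∩ Uᶜ := by
    rintro n w ⟨g, -, hwU, hK⟩
    refine ⟨?_, hwU⟩
    have hgs := aux_len_spec hgen g
    have hg' : g⁻¹ ∈ Γ ^ len Γ g := (aux_inv_mem hinv).2 hgs.2
    have e : len Γ g = 1 + (len Γ g - 1) := by omega
    rw [e, pow_add, pow_one] at hg'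
    obtain ⟨γ, hγ, a, ha, hga⟩ := Set.mem_mul.1 hg'
    have h3 := hK (a * g) (Set.mul_mem_mul ha rfl)
    refine Set.mem_smul.2 ⟨γ, hγ, _, h3, ?_⟩
    rw [← mul_smul, ← mul_assoc, hga]; simp
  have hy : (⋂ n, closure (A n)).Nonempty := by
    refine IsCompact.nonempty_iInter_of_sequence_nonempty_isCompact_isClosed
      (fun n => closure (A n)) (fun n => closure_mono (hAmono _ _ (Nat.le_succ n)))
      (fun n => (hAne n).closure) ?_ (fun n => isClosed_closure)
    exact hcomp.of_isClosed_subset isClosed_closure (closure_minimal (hAsub 0) hcomp.isClosed)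
  obtain ⟨y, hy⟩ := hy
  rw [Set.mem_iInter] at hy
  have hyU : y ∉ U :=
    (closure_minimal (hAsub 0) hcomp.isClosed (hy 0)).2
  have hget : ∀ W ∈ 𝓝 y, ∀ n, ∃ g w, w ∈ W ∧ n ≤ len Γ g ∧ P g w := by
    intro W hW n
    obtain ⟨w, hw, g, hg, hP⟩ := mem_closure_iff_nhds.1 (hy n) W hW
    exact ⟨g, w, hw, hg, hP⟩
  let ι : Type := {t : Set X × G × X // t.1 ∈ 𝓝 y ∧ t.2.2 ∈ t.1 ∧ P t.2.1 t.2.2}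
  refine ⟨y, hyU, ι, fun s t => t.1.1 ⊆ s.1.1 ∧ len Γ s.1.2.1 ≤ len Γ t.1.2.1,
    fun t => t.1.2.1, fun t => t.1.2.2, ⟨?_, ?_, ?_, ?_⟩, ?_, ?_, ?_, ?_⟩
  · obtain ⟨g, w, hw, -, hP⟩ := hget Set.univ univ_mem 0
    exact ⟨⟨(Set.univ, g, w), univ_mem, hw, hP⟩⟩
  · exact fun i => ⟨subset_rfl, le_rfl⟩
  · exact fun i j k h h' => ⟨h'.1.trans h.1, h.2.trans h'.2⟩
  · rintro ⟨⟨W, g, w⟩, hW, -, -⟩ ⟨⟨W', g', w'⟩, hW', -, -⟩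
    obtain ⟨g2, w2, hw2, hl, hP⟩ := hget (W ∩ W') (inter_mem hW hW') (max (len Γ g) (len Γ g'))
    exact ⟨⟨(W ∩ W', g2, w2), inter_mem hW hW', hw2, hP⟩,
      ⟨Set.inter_subset_left, (le_max_left _ _).trans hl⟩,
      ⟨Set.inter_subset_right, (le_max_right _ _).trans hl⟩⟩
  · exact fun i j h => h.2
  · intro n
    obtain ⟨g, w, hw, hl, hP⟩ := hget Set.univ univ_mem n
    exact ⟨⟨(Set.univ, g, w), univ_mem, hw, hP⟩, fun j hj => hl.trans hj.2⟩
  · intro W hW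
    obtain ⟨g, w, hw, hl, hP⟩ := hget W hW 0
    exact ⟨⟨(W, g, w), hW, hw, hP⟩, fun j hj => hj.1 j.2.2.1⟩
  · exact fun i c hcK => i.2.2.2.2 c hcK

theorem aux_star_compact (U : Set X) (hUc : IsCompact U) :
    IsCompact {x : X | closure (MulAction.orbit G x) ⊆ U} := by
  have e : {x : X | closure (MulAction.orbit G x) ⊆ U} = ⋂ g : G, (fun x => g • x) ⁻¹' U := by
    ext x
    rw [Set.mem_ofPred_eq, hUc.isClosed.closure_subset_iff, Set.mem_iInter]
    exact Set.range_subset_iff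
  rw [e]
  refine hUc.of_isClosed_subset
    (isClosed_iInter fun g => hUc.isClosed.preimage (continuous_const_smul g)) ?_
  intro x hx
  simpa using Set.mem_iInter.1 hx 1

/-- Compact open sets between a compact set and an open set. -/
theorem aux_between [LocallyCompactSpace X]
    (h0dim : ∀ x : X, ∀ U ∈ 𝓝 x, ∃ V : Set X, IsClopen V ∧ x ∈ V ∧ V ⊆ U)
    (C U : Set X) (hC : IsCompact C) (hU : IsOpen U) (hCU : C ⊆ U) :
    ∃ V, IsCompact V ∧ IsOpen V ∧ C ⊆ V ∧ V ⊆ U := by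
  have key : ∀ x ∈ C, ∃ V : Set X, IsCompact V ∧ IsOpen V ∧ x ∈ V ∧ V ⊆ U := by
    intro x hx
    obtain ⟨L, hL, hLU, hLc⟩ := local_compact_nhds (hU.mem_nhds (hCU hx))
    obtain ⟨V, hV, hxV, hVL⟩ := h0dim x L hL
    exact ⟨V, hLc.of_isClosed_subset hV.1 hVL, hV.2, hxV, hVL.trans hLU⟩
  refine hC.induction_on (p := fun C => ∃ V, IsCompact V ∧ IsOpen V ∧ C ⊆ V ∧ V ⊆ U) ?_ ?_ ?_ ?_
  · exact ⟨∅, isCompact_empty, isOpen_empty, subset_rfl, Set.empty_subset _⟩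
  · rintro s t hst ⟨V, a, b, c, d⟩
    exact ⟨V, a, b, hst.trans c, d⟩
  · rintro s t ⟨V, a, b, c, d⟩ ⟨V', a', b', c', d'⟩
    exact ⟨V ∪ V', a.union a', b.union b', Set.union_subset_union c c', Set.union_subset d d'⟩
  · intro x hx
    obtain ⟨V, a, b, c, d⟩ := key x hx
    exact ⟨V, mem_nhdsWithin_of_mem_nhds (b.mem_nhds c), V, a, b, subset_rfl, d⟩

theorem aux_sym_iff :
    (∀ x : X, ∃ M : Set X, IsMinimalSet G M ∧ x ∈ M) ↔
    (∀ x y : X, y ∈ closure (MulAction.orbit G x) → x ∈ closure (MulAction.orbit G y)) := by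
  constructor
  · intro h x y hy
    obtain ⟨M, hM, hx⟩ := h x
    rw [hM x hx] at hy
    rw [hM y hy]; exact hx
  · intro h x
    exact ⟨_, fun y hy => (aux_orbit_sub hy).antisymm (aux_orbit_sub (h x y hy)), aux_self x⟩

theorem aux_ap_sym [LocallyCompactSpace X] (h : ∀ x : X, AlmostPeriodicPt G x) (x y : X)
    (hy : y ∈ closure (MulAction.orbit G x)) : x ∈ closure (MulAction.orbit G y) := by
  rw [mem_closure_iff_nhds]
  intro U0 hU0
  obtain ⟨U, hU, hUU0, hUc⟩ := local_compact_nhds hU0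
  refine Set.Nonempty.mono (Set.inter_subset_inter_left _ hUU0) ?_
  obtain ⟨K, hK, hKN⟩ := h x U hU
  by_contra hcon
  have hcon' : ∀ k : G, k • y ∉ U := fun k hk => hcon ⟨k • y, hk, ⟨k, rfl⟩⟩
  have hev : ∀ᶠ z in 𝓝 y, ∀ k ∈ K, k • z ∈ Uᶜ := by
    apply hK.eventually_forall_of_forall_eventually
    intro k _
    have : Tendsto (fun p : X × G => p.2 • p.1) (𝓝 (y, k)) (𝓝 (k • y)) :=
      (continuous_snd.smul continuous_fst).tendsto (y, k)
    exact this (hUc.isClosed.isOpen_compl.mem_nhds (hcon' k))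
  obtain ⟨_, hz, ⟨g, rfl⟩⟩ := mem_closure_iff_nhds.1 hy _ hev
  have hg : g ∈ K⁻¹ * {g : G | g • x ∈ U} := hKN ▸ Set.mem_univ g
  obtain ⟨a, ha, n, hn, rfl⟩ := Set.mem_mul.1 hg
  apply hz a⁻¹ ha
  change a⁻¹ • (a * n) • x ∈ U
  rw [mul_smul, inv_smul_smul]; exact hn

end helpers

theorem statement0 {G X : Type} [Group G] [TopologicalSpace G] [T2Space G]
    [ContinuousMul G] [UniformSpace X] [T2Space X] [LocallyCompactSpace X]
    [MulAction G X] [ContinuousSMul G X]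
    (hLag : ∀ x : X, IsCompact (closure (MulAction.orbit G x)))
    (Γ : Set G) (hΓc : IsCompact Γ) (hΓ1 : (1 : G) ∈ Γ) (hΓinv : Γ⁻¹ = Γ)
    (hΓgen : ∀ g : G, ∃ r : ℕ, 1 ≤ r ∧ g ∈ Γ ^ r)
    (h0dim : ∀ x : X, ∀ U ∈ 𝓝 x, ∃ V : Set X, IsClopen V ∧ x ∈ V ∧ V ⊆ U) :
    List.TFAE
      [ (∀ x : X, RecurrentI Γ x),
        (∀ x : X, RecurrentII Γ x),
        (∀ x : X, AlmostPeriodicPt G x),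
        (∀ x : X, ∃ M : Set X, IsMinimalSet G M ∧ x ∈ M),
        IsClosed {p : X × X | p.2 ∈ closure (MulAction.orbit G p.1)},
        (∀ (ι : Type) (le : ι → ι → Prop) (xs : ι → X) (x : X),
          DirIdx le → (∀ U ∈ 𝓝 x, ∃ i, ∀ j, le i j → xs j ∈ U) →
          NetLimsup le (fun i => closure (MulAction.orbit G (xs i)))
            = closure (MulAction.orbit G x)),
        (∀ (x : X) (U : Set X), IsOpen U → closure (MulAction.orbit G x) ⊆ U →
          ∃ V ∈ 𝓝 x, ∀ y ∈ V, closure (MulAction.orbit G y) ⊆ U),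
        (∀ U : Set X, IsCompact U → IsOpen U →
          IsCompact {x : X | closure (MulAction.orbit G x) ⊆ U} ∧
            IsOpen {x : X | closure (MulAction.orbit G x) ⊆ U}),
        (∀ x : X, ∀ U ∈ 𝓝 x, ∃ F : Finset G, ∃ V ∈ 𝓝 x,
          ∀ g : G, ∀ v ∈ V, ∃ f ∈ F, f • g • v ∈ U) ] := by
  have hsym := aux_sym_iff (G := G) (X := X)
  tfae_have 3 → 4 := fun h => hsym.2 (aux_ap_sym h)
  tfae_have 4 → 2 := by
    intro h x U hU ι le g hd hl
    obtain ⟨n, hn⟩ := aux_bdd hΓ1 hΓinv hΓgen hLag (hsym.1 h) x U hU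
    refine ⟨2 * n + 1, by omega, fun i => ?_⟩
    obtain ⟨i', hi'⟩ := hl (n + 1)
    obtain ⟨j, hj, hj'⟩ := hd.2.2.2 i i'
    obtain ⟨c, hcK, hcU, hc⟩ := hn (g j) (hi' j hj')
    exact ⟨j, hj, c, hcK, hcU, aux_len_le (by omega) hc⟩
  tfae_have 4 → 1 := by
    rintro h x C ⟨ι, le, g, hd, -, hl, rfl⟩ U0 hU0
    obtain ⟨U, hU, hUU0, hUc⟩ := local_compact_nhds hU0
    obtain ⟨n, hn⟩ := aux_bdd hΓ1 hΓinv hΓgen hLag (hsym.1 h) x U hU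
    by_contra hcon
    push Not at hcon
    have hD : IsCompact (Γ ^ (2 * n + 1) ∩ {c : G | c • x ∈ U}) :=
      (aux_pow_compact hΓc _).inter_right
        (hUc.isClosed.preimage (continuous_id.smul continuous_const))
    have key : ∃ i, ∀ j, le i j →
        (Γ ^ (2 * n + 1) ∩ {c : G | c • x ∈ U}) ∩ Kset Γ (g j) = ∅ := by
      refine hD.induction_on (p := fun D => ∃ i, ∀ j, le i j → D ∩ Kset Γ (g j) = ∅) ?_ ?_ ?_ ?_
      · obtain ⟨i⟩ := hd.1
        exact ⟨i, fun j _ => Set.empty_inter _⟩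
      · rintro s t hst ⟨i, hi⟩
        exact ⟨i, fun j hj => Set.subset_empty_iff.1
          ((Set.inter_subset_inter_left _ hst).trans (hi j hj).subset)⟩
      · rintro s t ⟨i, hi⟩ ⟨i', hi'⟩
        obtain ⟨k, hk, hk'⟩ := hd.2.2.2 i i'
        refine ⟨k, fun j hj => ?_⟩
        rw [Set.union_inter_distrib_right, hi j (hd.2.2.1 _ _ _ hk hj),
          hi' j (hd.2.2.1 _ _ _ hk' hj), Set.union_empty]
      · rintro c ⟨-, hcU⟩
        have hcn : c ∉ NetLimsup le fun i => Kset Γ (g i) := fun hc => hcon c hc (hUU0 hcU)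
        simp only [NetLimsup, Set.mem_ofPred_eq] at hcn
        push Not at hcn
        obtain ⟨O, hO, i, hi⟩ := hcn
        exact ⟨O, mem_nhdsWithin_of_mem_nhds hO, i, hi⟩
    obtain ⟨i, hi⟩ := key
    obtain ⟨i', hi'⟩ := hl (n + 1)
    obtain ⟨j, hj, hj'⟩ := hd.2.2.2 i i'
    obtain ⟨c, hcK, hcU, hc⟩ := hn (g j) (hi' j hj')
    have : c ∈ (∅ : Set G) := hi j hj ▸ ⟨⟨hc, hcU⟩, hcK⟩
    exact this
  tfae_have 1 → 8 := by
    intro h U hUc hUo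
    refine ⟨aux_star_compact U hUc, ?_⟩
    by_contra hno
    obtain ⟨y, hyU, ι, le, g, w, hd, hm, hl, hw, hK⟩ :=
      aux_net hΓc hΓ1 hΓinv hΓgen U hUc hUo hno
    obtain ⟨c, hc, hcy⟩ := h y _ ⟨ι, le, g, hd, hm, hl, rfl⟩ Uᶜ
      (hUc.isClosed.isOpen_compl.mem_nhds hyU)
    have ht : Tendsto (fun p : G × X => p.1 • p.2) (𝓝 (c, y)) (𝓝 (c • y)) :=
      continuous_smul.tendsto (c, y)
    have h2 := ht (hUc.isClosed.isOpen_compl.mem_nhds hcy)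
    rw [Filter.mem_map, mem_nhds_prod_iff] at h2
    obtain ⟨O, hO, W, hW, hOW⟩ := h2
    obtain ⟨i, hi⟩ := hw W hW
    obtain ⟨j, hj, c', hc'O, hc'K⟩ := hc O hO i
    exact hOW (Set.mk_mem_prod hc'O (hi j hj)) (hK j c' hc'K)
  tfae_have 2 → 8 := by
    intro h U hUc hUo
    refine ⟨aux_star_compact U hUc, ?_⟩
    by_contra hno
    obtain ⟨y, hyU, ι, le, g, w, hd, hm, hl, hw, hK⟩ :=
      aux_net hΓc hΓ1 hΓinv hΓgen U hUc hUo hno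
    obtain ⟨n, -, hn⟩ := h y Uᶜ (hUc.isClosed.isOpen_compl.mem_nhds hyU) ι le g hd hl
    have hD : IsCompact (Γ ^ n ∩ {c : G | c • y ∈ Uᶜ}) :=
      (aux_pow_compact hΓc _).inter_right
        (hUo.isClosed_compl.preimage (continuous_id.smul continuous_const))
    have hev : ∀ᶠ z in 𝓝 y, ∀ k ∈ Γ ^ n ∩ {c : G | c • y ∈ Uᶜ}, k • z ∈ Uᶜ := by
      apply hD.eventually_forall_of_forall_eventually
      rintro k ⟨-, hk⟩
      have : Tendsto (fun p : X × G => p.2 • p.1) (𝓝 (y, k)) (𝓝 (k • y)) :=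
        (continuous_snd.smul continuous_fst).tendsto (y, k)
      exact this (hUc.isClosed.isOpen_compl.mem_nhds hk)
    obtain ⟨i, hi⟩ := hw _ hev
    obtain ⟨j, hj, c, hcK, hcU, hcn⟩ := hn i
    exact hi j hj c ⟨aux_pow_mono hΓ1 hcn (aux_len_spec hΓgen c).2, hcU⟩ (hK j c hcK)
  tfae_have 8 → 7 := by
    intro h x U hU hxU
    obtain ⟨V, hVc, hVo, hxV, hVU⟩ := aux_between h0dim _ U (hLag x) hU hxU
    exact ⟨_, (h V hVc hVo).2.mem_nhds hxV, fun y hy => Set.Subset.trans hy hVU⟩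
  tfae_have 7 → 5 := by
    intro h
    rw [← isOpen_compl_iff, isOpen_iff_mem_nhds]
    rintro ⟨x, y⟩ hxy
    have hxy' : y ∉ closure (MulAction.orbit G x) := hxy
    obtain ⟨A, B, hA, hB, hxA, hyB, hAB⟩ :=
      (hLag x).separation_of_notMem hxy'
    obtain ⟨V, hV, hVA⟩ := h x A hA hxA
    filter_upwards [prod_mem_nhds hV (hB.mem_nhds hyB)]
    rintro ⟨x', y'⟩ ⟨hx', hy'⟩ hcl
    exact Set.disjoint_left.1 hAB (hVA x' hx' hcl) hy'
  tfae_have 5 → 6 := by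
    intro h ι le xs x hd hx
    apply Set.Subset.antisymm
    · intro y hy
      by_contra hcon
      have h2 : {p : X × X | p.2 ∈ closure (MulAction.orbit G p.1)}ᶜ ∈ 𝓝 (x, y) :=
        h.isOpen_compl.mem_nhds hcon
      obtain ⟨V, hV, W, hW, hVW⟩ := mem_nhds_prod_iff.1 h2
      obtain ⟨i, hi⟩ := hx V hV
      obtain ⟨j, hj, z, hzW, hz⟩ := hy W hW i
      exact hVW (Set.mk_mem_prod (hi j hj) hzW) hz
    · intro y hy U hU i
      obtain ⟨_, hgU, ⟨g, rfl⟩⟩ := mem_closure_iff.1 hy _ isOpen_interior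
        (mem_interior_iff_mem_nhds.2 hU)
      obtain ⟨i', hi'⟩ := hx ((fun z => g • z) ⁻¹' interior U)
        ((isOpen_interior.preimage (continuous_const_smul g)).mem_nhds hgU)
      obtain ⟨j, hj, hj'⟩ := hd.2.2.2 i i'
      exact ⟨j, hj, g • xs j, interior_subset (hi' j hj'), subset_closure ⟨g, rfl⟩⟩
  tfae_have 6 → 4 := by
    intro h
    rw [hsym]
    intro x y hy
    have hget : ∀ W ∈ 𝓝 y, ∃ g : G, g • x ∈ W := by
      intro W hW
      obtain ⟨_, hz, ⟨g, rfl⟩⟩ := mem_closure_iff_nhds.1 hy W hW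
      exact ⟨g, hz⟩
    have h2 := h {t : Set X × G // t.1 ∈ 𝓝 y ∧ t.2 • x ∈ t.1} (fun s t => t.1.1 ⊆ s.1.1)
      (fun t => t.1.2 • x) y ⟨?_, fun i => subset_rfl, fun i j k a b => b.trans a, ?_⟩ ?_
    · rw [← h2]
      intro U hU i
      exact ⟨i, subset_rfl, x, mem_of_mem_nhds hU, subset_closure
        ⟨(i.1.2)⁻¹, inv_smul_smul _ _⟩⟩
    · obtain ⟨g, hg⟩ := hget _ univ_mem
      exact ⟨⟨(Set.univ, g), univ_mem, hg⟩⟩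
    · rintro ⟨⟨W, g⟩, hW, -⟩ ⟨⟨W', g'⟩, hW', -⟩
      obtain ⟨k, hk⟩ := hget _ (inter_mem hW hW')
      exact ⟨⟨(W ∩ W', k), inter_mem hW hW', hk⟩, Set.inter_subset_left, Set.inter_subset_right⟩
    · intro U hU
      obtain ⟨k, hk⟩ := hget _ hU
      exact ⟨⟨(U, k), hU, hk⟩, fun j hj => hj j.2.2⟩
  tfae_have 7 → 9 := by
    intro h x U hU
    have h4 := tfae_6_to_4 (tfae_5_to_6 (tfae_7_to_5 h))
    obtain ⟨F, hF⟩ := aux_finite hLag (hsym.1 h4) x U hU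
    obtain ⟨V, hV, hVF⟩ := h x _ (isOpen_biUnion fun f _ =>
      isOpen_interior.preimage (continuous_const_smul f)) hF
    refine ⟨F, V, hV, fun g v hv => ?_⟩
    obtain ⟨f, hf, hfU⟩ := Set.mem_iUnion₂.1 (hVF v hv (subset_closure ⟨g, rfl⟩))
    exact ⟨f, hf, interior_subset hfU⟩
  tfae_have 9 → 3 := by
    intro h x U hU
    obtain ⟨F, V, hV, hF⟩ := h x U hU
    refine ⟨F, F.finite_toSet.isCompact, Set.eq_univ_of_forall fun g => ?_⟩
    obtain ⟨f, hf, hfU⟩ := hF g x (mem_of_mem_nhds hV)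
    refine Set.mem_mul.2 ⟨f⁻¹, Set.inv_mem_inv.2 hf, f * g, ?_, by group⟩
    rw [Set.mem_ofPred_eq, mul_smul]; exact hfU
  tfae_finish
end

section
/- Let G be a para-topological group compactly generated by Γ, acting jointly continuously on a locally compact Hausdorff space X (orbit closures are not assumed compact). Let V ⊆ X be an open set such that V_G^∞ = ⋂_{g∈G} g•V is compact. Then V_G^∞ is open if and only if closure(G•x) ∩ V_G^∞ = ∅ for every x ∈ X \ V_G^∞. -/
open Pointwise Filter Topology

/-- for a jointly continuous action of a compactly generated
para-topological group `G` on a locally compact Hausdorff space `X` and an open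
set `V` with `V_G^∞ = ⋂_g g•V` compact, `V_G^∞` is open iff the orbit closure of
every point outside `V_G^∞` is disjoint from `V_G^∞`. -/
theorem statement1 {G X : Type} [Group G] [TopologicalSpace G] [T2Space G]
    [ContinuousMul G] [TopologicalSpace X] [T2Space X] [LocallyCompactSpace X]
    [MulAction G X] [ContinuousSMul G X]
    (Γ : Set G) (hΓc : IsCompact Γ) (hΓ1 : (1 : G) ∈ Γ) (hΓinv : Γ⁻¹ = Γ)
    (hΓgen : ∀ g : G, ∃ r : ℕ, 1 ≤ r ∧ g ∈ Γ ^ r)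
    (V : Set X) (hV : IsOpen V) (hVc : IsCompact (⋂ g : G, g • V)) :
    IsOpen (⋂ g : G, g • V) ↔
      ∀ x : X, x ∉ (⋂ g : G, g • V) →
        closure (MulAction.orbit G x) ∩ (⋂ g : G, g • V) = ∅ := by
  have memK : ∀ x : X, x ∈ (⋂ g : G, g • V) ↔ ∀ g : G, g • x ∈ V := by
    intro x
    simp only [Set.mem_iInter, Set.mem_smul_set_iff_inv_smul_mem]
    exact ⟨fun h g => by simpa using h g⁻¹, fun h g => h g⁻¹⟩
  generalize (⋂ g : G, g • V) = K at *
  have Kinv : ∀ (g : G) (x : X), x ∈ K → g • x ∈ K := by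
    intro g x hx
    rw [memK] at hx ⊢
    intro h
    rw [smul_smul]
    exact hx _
  have Kclosed : IsClosed K := hVc.isClosed
  constructor
  · intro hK x hx
    rw [Set.eq_empty_iff_forall_notMem]
    rintro y ⟨hy, hyK⟩
    obtain ⟨z, hzK, hz⟩ := mem_closure_iff.1 hy K hK hyK
    obtain ⟨g, rfl⟩ := hz
    apply hx
    have := Kinv g⁻¹ _ hzK
    simpa using this
  intro hcl
  by_contra hKo
  have hpc : ∀ k : ℕ, IsCompact (Γ ^ k) := by
    intro k
    induction k with
    | zero => simp
    | succ k ih => rw [pow_succ]; exact ih.mul hΓc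
  have hmono : ∀ {a b : ℕ}, a ≤ b → Γ ^ a ⊆ Γ ^ b :=
    fun h => Set.pow_subset_pow_right hΓ1 h
  have hone : ∀ k : ℕ, (1 : G) ∈ Γ ^ k := fun k => Set.one_mem_pow hΓ1
  have hinv : ∀ (k : ℕ) (g : G), g ∈ Γ ^ k → g⁻¹ ∈ Γ ^ k := by
    intro k g hg
    have h2 : (Γ ^ k)⁻¹ = Γ ^ k := by rw [← inv_pow, hΓinv]
    rw [← h2]
    simpa using hg
  have hKV : K ⊆ V := fun x hx => by simpa using (memK x).1 hx 1
  obtain ⟨N, hNc, hKN, hNV⟩ := exists_compact_between hVc hV hKV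
  have tube : ∀ (S : Set G), IsCompact S → ∀ W : Set X, IsOpen W → K ⊆ W →
      ∃ U : Set X, IsOpen U ∧ K ⊆ U ∧ ∀ g ∈ S, ∀ x ∈ U, g • x ∈ W := by
    intro S hS W hW hKW
    have ho : IsOpen ((fun p : G × X => p.1 • p.2) ⁻¹' W) := hW.preimage continuous_smul
    obtain ⟨u, v, -, hv, hSu, hKv, huv⟩ := generalized_tube_lemma hS hVc ho (by
      rintro ⟨g, x⟩ ⟨-, hx⟩
      exact hKW (Kinv g x hx))
    exact ⟨v, hv, hKv, fun g hg x hx => huv (Set.mk_mem_prod (hSu hg) hx)⟩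
  obtain ⟨U, hUo, hKU, hUN'⟩ := tube Γ hΓc (interior N) isOpen_interior hKN
  have hUN : ∀ g ∈ Γ, ∀ x ∈ U, g • x ∈ N := fun g hg x hx => interior_subset (hUN' g hg x hx)
  have hUN1 : U ⊆ N := fun x hx => by simpa using hUN 1 hΓ1 x hx
  let P : ℕ → Set (G × X) := fun k =>
    (Γ ^ (k + 1)) ×ˢ (N \ U) ∩ {p | ∀ h ∈ Γ ^ k, h • p.1 • p.2 ∈ N}
  have hPc : ∀ k, IsCompact (P k) := by
    intro k
    refine ((hpc (k + 1)).prod (hNc.diff hUo)).inter_right ?_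
    simp only [Set.setOf_forall]
    refine isClosed_biInter fun h _ => hNc.isClosed.preimage ?_
    fun_prop
  let E : ℕ → Set X := fun k => Prod.snd '' P k
  have hEc : ∀ k, IsCompact (E k) := fun k => (hPc k).image continuous_snd
  have hEne : ∀ k, (E k).Nonempty := by
    intro k
    obtain ⟨W, hWo, hKW, hW⟩ := tube (Γ ^ (k + 1)) (hpc _) U hUo hKU
    have : ∃ x ∈ W, x ∉ K := by
      by_contra hne
      push Not at hne
      exact hKo ((Set.Subset.antisymm hKW hne) ▸ hWo)
    obtain ⟨x, hxW, hxK⟩ := this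
    have hex : ∃ r : ℕ, ∃ g ∈ Γ ^ r, g • x ∉ U := by
      rw [memK] at hxK
      push Not at hxK
      obtain ⟨g, hg⟩ := hxK
      obtain ⟨r, -, hr⟩ := hΓgen g
      exact ⟨r, g, hr, fun h => hg (hNV (hUN1 h))⟩
    classical
    obtain ⟨r, ⟨g, hg, hgx⟩, hmin⟩ : ∃ r : ℕ, (∃ g ∈ Γ ^ r, g • x ∉ U) ∧
        ∀ m < r, ∀ g ∈ Γ ^ m, g • x ∈ U := by
      refine ⟨Nat.find hex, Nat.find_spec hex, fun m hm g hg => ?_⟩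
      by_contra hc
      exact Nat.find_min hex hm ⟨g, hg, hc⟩
    have hr : k + 1 < r := by
      by_contra hle
      exact hgx (hW g (hmono (not_lt.1 hle) hg) x hxW)
    obtain ⟨m, rfl⟩ : ∃ m, r = (k + 1) + m := ⟨r - (k + 1), by omega⟩
    have hgN : g • x ∈ N := by
      have h1 : g ∈ Γ * Γ ^ (k + m) := by
        rw [← pow_succ']
        convert hg using 2
        omega
      obtain ⟨a, ha, b, hb, rfl⟩ := Set.mem_mul.1 h1
      rw [mul_smul]
      exact hUN a ha _ (hmin (k + m) (by omega) b hb)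
    have h2 := hg
    rw [pow_add] at h2
    obtain ⟨a, ha, b, hb, hab⟩ := Set.mem_mul.1 h2
    refine ⟨g • x, (a⁻¹, g • x), ⟨⟨hinv _ _ ha, hgN, hgx⟩, ?_⟩, rfl⟩
    intro h hh
    have h3 : h • a⁻¹ • g • x = (h * b) • x := by
      rw [← hab]
      simp [mul_smul]
    show h • a⁻¹ • g • x ∈ N
    rw [h3]
    refine hUN1 (hmin (k + m) (by omega) _ ?_)
    rw [pow_add]
    exact Set.mul_mem_mul hh hb
  have hEanti : ∀ k, E (k + 1) ⊆ E k := by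
    rintro k _ ⟨⟨g, y⟩, ⟨⟨hg, hy⟩, hh⟩, rfl⟩
    have hg' : g ∈ Γ * Γ ^ (k + 1) := by
      rw [← pow_succ']
      exact hg
    obtain ⟨a, ha, b, hb, rfl⟩ := Set.mem_mul.1 hg'
    refine ⟨(b, y), ⟨⟨hb, hy⟩, ?_⟩, rfl⟩
    intro h hhk
    have hai : a⁻¹ ∈ Γ := by
      rw [← hΓinv]
      simpa using ha
    have := hh (h * a⁻¹) (by rw [pow_succ]; exact Set.mul_mem_mul hhk hai)
    simpa [mul_smul] using this
  obtain ⟨y, hy⟩ := IsCompact.nonempty_iInter_of_sequence_nonempty_isCompact_isClosed E hEanti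
    hEne (hEc 0) (fun k => (hEc k).isClosed)
  rw [Set.mem_iInter] at hy
  have hyK : y ∉ K := by
    obtain ⟨⟨g, y'⟩, ⟨⟨-, hy'⟩, -⟩, rfl⟩ := hy 0
    exact fun h => hy'.2 (hKU h)
  let F : ℕ → Set X := fun k => closure (MulAction.orbit G y) ∩ {w | ∀ h ∈ Γ ^ k, h • w ∈ N}
  have hFcl : ∀ k, IsClosed (F k) := by
    intro k
    refine isClosed_closure.inter ?_
    simp only [Set.setOf_forall]
    refine isClosed_biInter fun h _ => hNc.isClosed.preimage ?_
    fun_prop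
  have hFne : ∀ k, (F k).Nonempty := by
    intro k
    obtain ⟨⟨g, y'⟩, ⟨-, hh⟩, rfl⟩ := hy k
    exact ⟨g • y', subset_closure ⟨g, rfl⟩, hh⟩
  obtain ⟨w, hw⟩ := IsCompact.nonempty_iInter_of_sequence_nonempty_isCompact_isClosed F
    (fun k w hw => ⟨hw.1, fun h hh => hw.2 h (hmono (Nat.le_succ k) hh)⟩)
    hFne (hNc.of_isClosed_subset (hFcl 0) fun w hw => by simpa using hw.2 1 (hone 0)) hFcl
  rw [Set.mem_iInter] at hw
  have hwK : w ∈ K := by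
    rw [memK]
    intro g
    obtain ⟨r, -, hr⟩ := hΓgen g
    exact hNV ((hw r).2 g hr)
  have := hcl y hyK
  rw [Set.eq_empty_iff_forall_notMem] at this
  exact this w ⟨(hw 0).1, hwK⟩
end

section
/- Let (G,X) be a flow with G compactly generated. Then the orbit closure mapping x ↦ closure(G•x) is ⌜continuous⌝ if and only if it is upper semicontinuous. -/
open Pointwise Filter Topology

/-- for a flow with compactly generated phase group, the orbit closure
mapping is ⌜continuous⌝ iff it is upper semicontinuous. -/
theorem statement2 {G X : Type} [Group G] [TopologicalSpace G] [T2Space G]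
    [ContinuousMul G] [UniformSpace X] [T2Space X] [LocallyCompactSpace X]
    [MulAction G X] [ContinuousSMul G X]
    (hLag : ∀ x : X, IsCompact (closure (MulAction.orbit G x)))
    (Γ : Set G) (hΓc : IsCompact Γ) (hΓ1 : (1 : G) ∈ Γ) (hΓinv : Γ⁻¹ = Γ)
    (hΓgen : ∀ g : G, ∃ r : ℕ, 1 ≤ r ∧ g ∈ Γ ^ r) :
    (∀ (ι : Type) (le : ι → ι → Prop) (xs : ι → X) (x : X),
        DirIdx le → (∀ U ∈ 𝓝 x, ∃ i, ∀ j, le i j → xs j ∈ U) →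
        NetLimsup le (fun i => closure (MulAction.orbit G (xs i)))
          = closure (MulAction.orbit G x)) ↔
      (∀ (x : X) (U : Set X), IsOpen U → closure (MulAction.orbit G x) ⊆ U →
        ∃ V ∈ 𝓝 x, ∀ y ∈ V, closure (MulAction.orbit G y) ⊆ U) := by
  constructor
  · intro hcont x U hU hKU
    by_contra hcon
    push Not at hcon
    obtain ⟨L, hLc, hKL, hLU⟩ := exists_compact_between (hLag x) hU hKU
    have hxL : interior L ∈ 𝓝 x :=
      isOpen_interior.mem_nhds (hKL (subset_closure (MulAction.mem_orbit_self x)))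
    -- escaping points
    have key : ∀ V : {V : Set X // V ∈ 𝓝 x}, ∃ y ∈ V.1, ∃ w ∈ MulAction.orbit G y,
        w ∈ (Γ • L) \ interior L := by
      intro V
      obtain ⟨y, hy, hyU⟩ := hcon (V.1 ∩ interior L) (inter_mem V.2 hxL)
      refine ⟨y, hy.1, ?_⟩
      by_contra hno
      push Not at hno
      apply hyU
      have hstep : ∀ r : ℕ, ∀ g ∈ Γ ^ r, g • y ∈ interior L := by
        intro r
        induction r with
        | zero =>
          intro g hg
          rw [pow_zero, Set.mem_one] at hg
          rw [hg, one_smul]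
          exact hy.2
        | succ n ih =>
          intro g hg
          rw [pow_succ', Set.mem_mul] at hg
          obtain ⟨a, ha, b, hb, rfl⟩ := hg
          by_contra hc
          refine hno ((a * b) • y) (MulAction.mem_orbit y _) ⟨?_, hc⟩
          rw [mul_smul]
          exact Set.smul_mem_smul ha (interior_subset (ih b hb))
      have hsub : MulAction.orbit G y ⊆ L := by
        rintro _ ⟨g, rfl⟩
        obtain ⟨r, -, hr⟩ := hΓgen g
        exact interior_subset (hstep r g hr)
      exact (closure_minimal hsub hLc.isClosed).trans hLU
    choose ys hys ws hws hwC using key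
    have hC : IsCompact ((Γ • L) \ interior L) := (hΓc.smul_set hLc).diff isOpen_interior
    have hlim := hcont {V : Set X // V ∈ 𝓝 x} (fun A B => B.1 ⊆ A.1) ys x
      ⟨⟨⟨Set.univ, univ_mem⟩⟩, fun _ => subset_rfl, fun _ _ _ h1 h2 => h2.trans h1,
        fun A B => ⟨⟨A.1 ∩ B.1, inter_mem A.2 B.2⟩, Set.inter_subset_left,
          Set.inter_subset_right⟩⟩
      (fun W hW => ⟨⟨W, hW⟩, fun j hj => hj (hys j)⟩)
    haveI : Nonempty {V : Set X // V ∈ 𝓝 x} := ⟨⟨Set.univ, univ_mem⟩⟩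
    -- a cluster point
    obtain ⟨w, hw, hwcl⟩ : ∃ w ∈ (Γ • L) \ interior L, ∀ A : {V : Set X // V ∈ 𝓝 x},
        w ∈ closure (ws '' {B | B.1 ⊆ A.1}) := by
      have := hC.inter_iInter_nonempty
        (fun A : {V : Set X // V ∈ 𝓝 x} => closure (ws '' {B | B.1 ⊆ A.1}))
        (fun _ => isClosed_closure) (by
          intro u
          let B : {V : Set X // V ∈ 𝓝 x} :=
            ⟨⋂ A ∈ u, A.1, (Filter.biInter_finset_mem u).2 fun A _ => A.2⟩
          refine ⟨ws B, hwC B, ?_⟩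
          simp only [Set.mem_iInter]
          intro A hA
          exact subset_closure ⟨B, Set.biInter_subset_of_mem hA, rfl⟩)
      obtain ⟨w, hw, hw2⟩ := this
      exact ⟨w, hw, fun A => Set.mem_iInter.1 hw2 A⟩
    have hwlim : w ∈ closure (MulAction.orbit G x) := by
      rw [← hlim]
      intro W hW A
      obtain ⟨_, hz, B, hB, rfl⟩ := mem_closure_iff_nhds.1 (hwcl A) W hW
      exact ⟨B, hB, ws B, hz, subset_closure (hws B)⟩
    exact hw.2 (hKL hwlim)
  · intro husc ι le xs x hdir hx
    obtain ⟨-, -, htr, hdd⟩ := hdir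
    apply Set.Subset.antisymm
    · intro y hy
      by_contra hyK
      obtain ⟨U, W, hU, hW, hKU, hyW, hd⟩ :=
        SeparatedNhds.of_isCompact_isCompact (hLag x) (isCompact_singleton (x := y))
          (Set.disjoint_singleton_right.2 hyK)
      obtain ⟨V, hV, hVU⟩ := husc x U hU hKU
      obtain ⟨i, hi⟩ := hx V hV
      obtain ⟨j, hij, z, hzW, hz⟩ := hy W (hW.mem_nhds (hyW rfl)) i
      exact Set.disjoint_left.1 hd (hVU _ (hi j hij) hz) hzW
    · intro y hy W hW i
      obtain ⟨O, hOW, hO, hyO⟩ := mem_nhds_iff.1 hW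
      obtain ⟨_, hzO, g, rfl⟩ := mem_closure_iff.1 hy O hO hyO
      have hpre : (fun z : X => g • z) ⁻¹' O ∈ 𝓝 x :=
        (continuous_const_smul g).continuousAt.preimage_mem_nhds (hO.mem_nhds hzO)
      obtain ⟨k, hk⟩ := hx _ hpre
      obtain ⟨j, hij, hkj⟩ := hdd i k
      exact ⟨j, hij, g • xs j, hOW (hk j hkj), subset_closure (MulAction.mem_orbit _ g)⟩
end

section
/- Let (G,X) be a minimal flow (closure(G•x) = X for every x ∈ X, so X is compact) and let H be a syndetic normal subgroup of G, i.e. H ⊴ G and K⁻¹H = G for some compact K ⊆ G. Then the H-orbit closure mapping x ↦ closure(H•x) is continuous from X into the closed subsets of X with the Vietoris topology; explicitly, whenever a net x_i → x in X: (a) for every open U ⊇ closure(H•x), eventually closure(H•x_i) ⊆ U, and (b) for every open U with U ∩ closure(H•x) ≠ ∅, eventually closure(H•x_i) ∩ U ≠ ∅. -/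
open Pointwise Filter Topology

/-- The orbit of a point under a subset of the group. -/
def subOrbit {G X : Type} [Group G] [MulAction G X] (S : Set G) (x : X) : Set X :=
  (fun g : G => g • x) '' S

/-- Existence of a minimal set for a subgroup acting on a compact space. -/
theorem exists_minimal_sub {G X : Type} [Group G] [TopologicalSpace X] [CompactSpace X]
    [Nonempty X] [MulAction G X] (H : Subgroup G) :
    ∃ M : Set X, (IsClosed M ∧ M.Nonempty ∧ ∀ h ∈ H, ∀ y ∈ M, h • y ∈ M) ∧
      ∀ S : Set X, IsClosed S → S.Nonempty → (∀ h ∈ H, ∀ y ∈ S, h • y ∈ S) → S ⊆ M → S = M := by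
  obtain ⟨M, hM⟩ := zorn_superset
    {S : Set X | IsClosed S ∧ S.Nonempty ∧ ∀ h ∈ H, ∀ y ∈ S, h • y ∈ S} (by
    intro c hc hchain
    rcases c.eq_empty_or_nonempty with rfl | hne
    · exact ⟨Set.univ, ⟨isClosed_univ, Set.univ_nonempty, by simp⟩, by simp⟩
    · refine ⟨⋂₀ c, ⟨isClosed_sInter fun s hs => (hc hs).1, ?_, ?_⟩,
        fun s hs => Set.sInter_subset_of_mem hs⟩
      · have := hne.to_subtype
        refine IsCompact.nonempty_sInter_of_directed_nonempty_isCompact_isClosed ?_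
          (fun s hs => (hc hs).2.1) (fun s hs => (hc hs).1.isCompact) (fun s hs => (hc hs).1)
        exact IsChain.directedOn hchain.symm
      · intro h hh y hy s hs
        exact (hc hs).2.2 h hh y (hy s hs))
  refine ⟨M, hM.prop, fun S h1 h2 h3 h4 => ?_⟩
  exact Set.Subset.antisymm h4 (hM.le_of_le ⟨h1, h2, h3⟩ h4)

/-- in a minimal flow, the orbit-closure map of a syndetic normal
subgroup `H` is continuous into the Vietoris hyperspace: along any convergent net
`x_i → x`, (a) eventually `closure (H•x_i) ⊆ U` for each open `U ⊇ closure (H•x)`,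
and (b) eventually `closure (H•x_i)` meets each open `U` meeting `closure (H•x)`. -/
theorem statement3 {G X : Type} [Group G] [TopologicalSpace G] [T2Space G]
    [ContinuousMul G] [UniformSpace X] [T2Space X] [LocallyCompactSpace X]
    [MulAction G X] [ContinuousSMul G X]
    (hLag : ∀ x : X, IsCompact (closure (MulAction.orbit G x)))
    (hmin : ∀ x : X, closure (MulAction.orbit G x) = Set.univ)
    (H : Subgroup G) (hnorm : H.Normal)
    (hsynd : ∃ K : Set G, IsCompact K ∧ K⁻¹ * (H : Set G) = Set.univ) :
    ∀ (ι : Type) (le : ι → ι → Prop) (xs : ι → X) (x : X),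
      DirIdx le → (∀ U ∈ 𝓝 x, ∃ i, ∀ j, le i j → xs j ∈ U) →
      (∀ U : Set X, IsOpen U → closure (subOrbit (H : Set G) x) ⊆ U →
        ∃ i, ∀ j, le i j → closure (subOrbit (H : Set G) (xs j)) ⊆ U) ∧
      (∀ U : Set X, IsOpen U → (U ∩ closure (subOrbit (H : Set G) x)).Nonempty →
        ∃ i, ∀ j, le i j → (closure (subOrbit (H : Set G) (xs j)) ∩ U).Nonempty) := by
  intro ι le xs x hdir hconv
  have : CompactSpace X := ⟨by rw [← hmin x]; exact hLag x⟩
  have : Nonempty X := ⟨x⟩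
  refine ⟨?_, ?_⟩
  · intro U hU hxU
    obtain ⟨M, ⟨hMc, ⟨m0, hm0⟩, hMinv⟩, hMmin⟩ := exists_minimal_sub (X := X) H
    obtain ⟨K, hK, hKH⟩ := hsynd
    have hdec : ∀ g : G, ∃ k ∈ K, ∃ h ∈ H, g = k * h := by
      intro g
      have : g⁻¹ ∈ K⁻¹ * (H : Set G) := by rw [hKH]; trivial
      obtain ⟨a, ha, b, hb, hab⟩ := Set.mem_mul.1 this
      refine ⟨a⁻¹, ha, a * b⁻¹ * a⁻¹, hnorm.conj_mem _ (H.inv_mem hb) a, ?_⟩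
      rw [← inv_inv g, ← hab]; group
    have hCM : ∀ y ∈ M, closure (subOrbit (H : Set G) y) = M := by
      intro y hy
      refine hMmin _ isClosed_closure ?_ ?_ ?_
      · exact ⟨y, subset_closure ⟨1, H.one_mem, one_smul _ _⟩⟩
      · intro h hh z hz
        refine map_mem_closure (continuous_const_smul h) hz ?_
        rintro _ ⟨g, hg, rfl⟩
        exact ⟨h * g, H.mul_mem hh hg, mul_smul _ _ _⟩
      · refine closure_minimal ?_ hMc
        rintro _ ⟨g, hg, rfl⟩
        exact hMinv g hg y hy
    have hCg : ∀ (g : G) (y : X),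
        closure (subOrbit (H : Set G) (g • y)) = g • closure (subOrbit (H : Set G) y) := by
      intro g y
      rw [← closure_smul]
      congr 1
      ext z
      constructor
      · rintro ⟨h, hh, rfl⟩
        refine ⟨(g⁻¹ * h * g) • y, ⟨g⁻¹ * h * g, ?_, rfl⟩, ?_⟩
        · simpa using hnorm.conj_mem h hh g⁻¹
        · simp only [smul_smul]; congr 1; group
      · rintro ⟨_, ⟨h, hh, rfl⟩, rfl⟩
        refine ⟨g * h * g⁻¹, hnorm.conj_mem h hh g, ?_⟩
        simp only [smul_smul]; congr 1; group
    have hcov : ∀ y : X, ∃ k ∈ K, ∃ m ∈ M, k • m = y := by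
      have hcl : IsClosed ((fun p : G × X => p.1 • p.2) '' (K ×ˢ M)) :=
        ((hK.prod hMc.isCompact).image continuous_smul).isClosed
      intro y
      have hy : y ∈ closure (MulAction.orbit G m0) := by rw [hmin]; trivial
      have hsub : MulAction.orbit G m0 ⊆ (fun p : G × X => p.1 • p.2) '' (K ×ˢ M) := by
        rintro _ ⟨g, rfl⟩
        obtain ⟨k, hk, h, hh, rfl⟩ := hdec g
        exact ⟨(k, h • m0), ⟨hk, hMinv h hh m0 hm0⟩, (mul_smul _ _ _).symm⟩
      obtain ⟨⟨k, m⟩, ⟨hk, hm⟩, rfl⟩ := closure_minimal hsub hcl hy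
      exact ⟨k, hk, m, hm, rfl⟩
    have hR : IsCompact ((fun p : G × X × X => (p.1 • p.2.1, p.1 • p.2.2)) '' (K ×ˢ M ×ˢ M)) :=
      (hK.prod (hMc.isCompact.prod hMc.isCompact)).image (by fun_prop)
    have hbad : IsClosed (Prod.fst '' (((fun p : G × X × X => (p.1 • p.2.1, p.1 • p.2.2)) ''
        (K ×ˢ M ×ˢ M)) ∩ (Prod.snd ⁻¹' Uᶜ))) :=
      ((hR.inter_right (hU.isClosed_compl.preimage continuous_snd)).image continuous_fst).isClosed
    obtain ⟨i, hi⟩ := hconv _ (hbad.isOpen_compl.mem_nhds (by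
      rintro ⟨⟨a, b⟩, ⟨⟨⟨k, m, m'⟩, ⟨hk, hm, hm'⟩, hab⟩, hb⟩, rfl⟩
      simp only [Prod.mk.injEq] at hab
      obtain ⟨rfl, rfl⟩ := hab
      simp only at hm hm' hxU
      apply hb
      apply hxU
      rw [hCg, hCM m hm]
      exact Set.smul_mem_smul_set hm'))
    refine ⟨i, fun j hj z hz => ?_⟩
    by_contra hzU
    apply hi j hj
    obtain ⟨k, hk, m, hm, hkm⟩ := hcov (xs j)
    rw [← hkm, hCg, hCM m hm] at hz
    obtain ⟨m', hm', rfl⟩ := hz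
    exact ⟨(xs j, k • m'), ⟨⟨(k, m, m'), ⟨hk, hm, hm'⟩, by simp [hkm]⟩, hzU⟩, rfl⟩
  · rintro U hU ⟨z, hzU, hz⟩
    obtain ⟨_, hw, ⟨h, hh, rfl⟩⟩ := mem_closure_iff.1 hz U hU hzU
    obtain ⟨i, hi⟩ := hconv ((fun y => h • y) ⁻¹' U)
      ((hU.preimage (continuous_const_smul h)).mem_nhds hw)
    exact ⟨i, fun j hj => ⟨h • xs j, subset_closure ⟨h, hh, rfl⟩, hi j hj⟩⟩
end

section
/- Let (G,X) be a flow with X compact and not connected, and with G compactly generated. If (G,X) is distal, then (G,X) has a non-trivial equicontinuous factor: there exist a compact Hausdorff space Y that is not a singleton, a jointly continuous G-action on Y that is equicontinuous with respect to the unique uniformity of Y, and a continuous surjection π : X → Y with π(g•x) = g•π(x) for all g ∈ G and x ∈ X. -/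
open Pointwise Filter Topology

/-- A non-trivial equicontinuous factor of a `G`-flow on `X`: a compact Hausdorff
non-singleton space `Y` with a jointly continuous `G`-action that is equicontinuous
with respect to the unique uniformity of `Y` (whose entourages are the neighborhoods
of the diagonal), together with a continuous equivariant surjection `X → Y`. -/
structure NontrivialEquicontinuousFactor (G X : Type) [Group G] [TopologicalSpace G]
    [TopologicalSpace X] [MulAction G X] where
  Y : Type
  [tY : TopologicalSpace Y]
  [mY : MulAction G Y]
  compactY : CompactSpace Y
  t2Y : T2Space Y
  contSMulY : ContinuousSMul G Y
  nontrivialY : Nontrivial Y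
  π : X → Y
  contπ : Continuous π
  surjπ : Function.Surjective π
  equivar : ∀ (g : G) (x : X), π (g • x) = g • π x
  equicont : ∀ (y : Y) (ε : Set (Y × Y)), ε ∈ 𝓝ˢ (Set.diagonal Y) →
    ∃ U ∈ 𝓝 y, ∀ z ∈ U, ∀ g : G, (g • z, g • y) ∈ ε

/-- In a distal flow the orbit closure relation on pairs is symmetric. -/
theorem distal_symm {G X : Type} [Group G] [TopologicalSpace G]
    [TopologicalSpace X] [T2Space X] [CompactSpace X]
    [MulAction G X] [ContinuousSMul G X]
    (hdistal : ∀ x y : X, x ≠ y →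
      closure (Set.range fun g : G => (g • x, g • y)) ∩ Set.diagonal X = ∅)
    (p w : X × X) (hw : w ∈ closure (Set.range fun g : G => g • p)) :
    p ∈ closure (Set.range fun g : G => g • w) := by
  have hcs : ∀ g : G, Continuous fun x : X => g • x := fun g =>
    continuous_const.smul continuous_id
  let j : G → (X → X) := fun g x => g • x
  let E : Set (X → X) := closure (Set.range j)
  have hEc : IsCompact E := isClosed_closure.isCompact
  have hmul1 : ∀ g : G, ∀ h ∈ E, (fun x => g • h x) ∈ E := by
    intro g h hh
    have hc : Continuous fun h : X → X => (fun x => g • h x) :=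
      continuous_pi fun x => (hcs g).comp (continuous_apply x)
    refine map_mem_closure hc hh ?_
    rintro _ ⟨k, rfl⟩
    exact ⟨g * k, by funext x; simp [j, mul_smul]⟩
  have hmul : ∀ f ∈ E, ∀ h ∈ E, f ∘ h ∈ E := by
    intro f hf h hh
    have hc : Continuous fun f : X → X => f ∘ h :=
      continuous_pi fun x => continuous_apply (h x)
    have := map_mem_closure (t := E) hc hf (by
      rintro _ ⟨g, rfl⟩
      exact hmul1 g h hh)
    rwa [isClosed_closure.closure_eq] at this
  have hinj : ∀ f ∈ E, Function.Injective f := by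
    intro f hf x y hxy
    by_contra hne
    have hc : Continuous fun f : X → X => (f x, f y) :=
      (continuous_apply x).prodMk (continuous_apply y)
    have h1 : (f x, f y) ∈ closure (Set.range fun g : G => (g • x, g • y)) := by
      refine map_mem_closure (f := fun f : X → X => (f x, f y)) hc hf ?_
      rintro _ ⟨g, rfl⟩
      exact ⟨g, rfl⟩
    have h2 : (f x, f y) ∈ closure (Set.range fun g : G => (g • x, g • y)) ∩ Set.diagonal X :=
      ⟨h1, hxy⟩
    rw [hdistal x y hne] at h2
    exact h2
  -- an element of the Ellis semigroup carrying `p` to `w`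
  have hev : ∀ q : X × X, Continuous fun f : X → X => (f q.1, f q.2) := fun q =>
    (continuous_apply q.1).prodMk (continuous_apply q.2)
  obtain ⟨s, hs, hsw⟩ : ∃ s ∈ E, (s p.1, s p.2) = w := by
    have hcl : IsClosed ((fun f : X → X => (f p.1, f p.2)) '' E) :=
      (hEc.image (hev p)).isClosed
    have : closure (Set.range fun g : G => g • p) ⊆ (fun f : X → X => (f p.1, f p.2)) '' E := by
      refine closure_minimal ?_ hcl
      rintro _ ⟨g, rfl⟩
      exact ⟨j g, subset_closure ⟨g, rfl⟩, rfl⟩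
    exact this hw
  letI : Semigroup (X → X) :=
    { mul := fun f g => f ∘ g
      mul_assoc := fun f g h => rfl }
  have hcR : ∀ r : X → X, Continuous fun f : X → X => f ∘ r := fun r =>
    continuous_pi fun x => continuous_apply (r x)
  obtain ⟨m, ⟨t, ht, rfl⟩, hm⟩ := exists_idempotent_in_compact_subsemigroup (M := X → X)
    hcR ((fun f : X → X => f ∘ s) '' E) ⟨_, s, hs, rfl⟩ (hEc.image (hcR s)) (by
      rintro _ ⟨f, hf, rfl⟩ _ ⟨h, hh, rfl⟩
      exact ⟨f ∘ (s ∘ h), hmul f hf _ (hmul s hs h hh), rfl⟩)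
  have hid : ∀ x, t (s x) = x := by
    intro x
    have h1 : t (s (t (s x))) = t (s x) := congrFun hm x
    exact hinj s hs (hinj t ht h1)
  have : (t w.1, t w.2) ∈ closure (Set.range fun g : G => g • w) := by
    refine map_mem_closure (f := fun f : X → X => (f w.1, f w.2)) (hev w) ht ?_
    rintro _ ⟨g, rfl⟩
    exact ⟨g, rfl⟩
  rw [← hsw] at this ⊢
  simpa [hid] using this

/-- Equicontinuity with respect to a clopen set. -/
theorem clopen_equicont {G X : Type} [Group G] [TopologicalSpace G] [T2Space G]
    [ContinuousMul G] [TopologicalSpace X] [T2Space X] [CompactSpace X]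
    [MulAction G X] [ContinuousSMul G X]
    (Γ : Set G) (hΓc : IsCompact Γ) (hΓ1 : (1 : G) ∈ Γ) (hΓinv : Γ⁻¹ = Γ)
    (hΓgen : ∀ g : G, ∃ r : ℕ, 1 ≤ r ∧ g ∈ Γ ^ r)
    (hdistal : ∀ x y : X, x ≠ y →
      closure (Set.range fun g : G => (g • x, g • y)) ∩ Set.diagonal X = ∅)
    (A : Set X) (hA : IsClopen A) (z : X) :
    ∀ᶠ x in 𝓝 z, ∀ g : G, (g • x ∈ A ↔ g • z ∈ A) := by
  let ε : Set (X × X) := {w | w.1 ∈ A ↔ w.2 ∈ A}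
  have hεclopen : IsClopen ε := by
    have h1 : IsClopen (Prod.fst ⁻¹' A : Set (X × X)) := hA.preimage continuous_fst
    have h2 : IsClopen (Prod.snd ⁻¹' A : Set (X × X)) := hA.preimage continuous_snd
    have : ε = ((Prod.fst ⁻¹' A) ∩ (Prod.snd ⁻¹' A)) ∪ ((Prod.fst ⁻¹' A)ᶜ ∩ (Prod.snd ⁻¹' A)ᶜ) := by
      ext w
      simp only [ε, Set.mem_ofPred_eq, Set.mem_union, Set.mem_inter_iff, Set.mem_preimage,
        Set.mem_compl_iff]
      tauto
    rw [this]
    exact (h1.inter h2).union (h1.compl.inter h2.compl)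
  have hpc : ∀ m : ℕ, IsCompact (Γ ^ m) := by
    intro m
    induction m with
    | zero => simp
    | succ k ih => rw [pow_succ]; exact ih.mul hΓc
  have hinv : ∀ m : ℕ, ∀ g ∈ Γ ^ m, g⁻¹ ∈ Γ ^ m := by
    intro m g hg
    have : (Γ ^ m)⁻¹ = Γ ^ m := by rw [← inv_pow, hΓinv]
    rw [← this]
    simpa using hg
  have hmono : ∀ {a b : ℕ}, a ≤ b → Γ ^ a ⊆ Γ ^ b := fun h => Set.pow_subset_pow_right hΓ1 h
  by_contra hcon
  let C : ℕ → Set (X × X) := fun m =>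
    εᶜ ∩ Prod.snd '' ((Γ ^ (m + 1)) ×ˢ (Set.univ : Set (X × X)) ∩
      ⋂ b ∈ Γ ^ m, {cw : G × (X × X) | (b * cw.1) • cw.2 ∈ ε})
  have hCcl : ∀ m, IsClosed (C m) := by
    intro m
    refine hεclopen.compl.isClosed.inter (IsCompact.isClosed ?_)
    refine IsCompact.image ?_ continuous_snd
    refine ((hpc (m + 1)).prod isCompact_univ).inter_right ?_
    refine isClosed_biInter fun b _ => ?_
    exact hεclopen.isClosed.preimage
      ((continuous_const.mul continuous_fst).smul continuous_snd)
  have hCmem : ∀ m w, w ∈ C m ↔ w ∉ ε ∧ ∃ c ∈ Γ ^ (m + 1), ∀ b ∈ Γ ^ m, (b * c) • w ∈ ε := by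
    intro m w
    simp [C]
  have hCanti : ∀ m, C (m + 1) ⊆ C m := by
    intro m w hw
    rw [hCmem] at hw ⊢
    obtain ⟨h1, c, hc, h2⟩ := hw
    refine ⟨h1, ?_⟩
    rw [pow_succ'] at hc
    obtain ⟨γ, hγ, c', hc', rfl⟩ := hc
    refine ⟨c', hc', fun b hb => ?_⟩
    have hγ' : γ⁻¹ ∈ Γ := by
      rw [← hΓinv]; simpa using hγ
    have := h2 (b * γ⁻¹) (by rw [pow_succ]; exact Set.mul_mem_mul hb hγ')
    simpa [mul_assoc] using this
  have hnear : ∀ m : ℕ, ∀ᶠ x in 𝓝 z, ∀ b ∈ Γ ^ m, b • (x, z) ∈ ε := by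
    intro m
    refine (hpc m).eventually_forall_of_forall_eventually ?_
    intro y _
    have hc : Continuous fun q : X × G => q.2 • (q.1, z) :=
      continuous_snd.smul (continuous_fst.prodMk continuous_const)
    exact hc.continuousAt.eventually_mem (hεclopen.isOpen.mem_nhds (by simp [ε]))
  have hCne : ∀ m, (C m).Nonempty := by
    intro m
    obtain ⟨x, hx1, hx2⟩ : ∃ x, (∀ b ∈ Γ ^ (m + 1), b • (x, z) ∈ ε) ∧
        ¬ ∀ g : G, (g • x ∈ A ↔ g • z ∈ A) := by
      by_contra hno
      push Not at hno
      exact hcon ((hnear (m + 1)).mono hno)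
    classical
    have hex : ∃ n : ℕ, ∃ g ∈ Γ ^ n, g • (x, z) ∉ ε := by
      rw [not_forall] at hx2
      obtain ⟨g, hg⟩ := hx2
      obtain ⟨r, _, hr⟩ := hΓgen g
      exact ⟨r, g, hr, hg⟩
    obtain ⟨g, hg, hgε⟩ := Nat.find_spec hex
    set n := Nat.find hex with hn
    have hlt : m + 1 < n := by
      by_contra hle
      exact hgε (hx1 g (hmono (not_lt.mp hle) hg))
    have hsplit : Γ ^ n = Γ ^ (m + 1) * Γ ^ (n - (m + 1)) := by
      rw [← pow_add]; congr 1; omega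
    rw [hsplit] at hg
    obtain ⟨a, ha, h, hh, rfl⟩ := hg
    refine ⟨(a * h) • (x, z), (hCmem _ _).2 ⟨hgε, a⁻¹, hinv _ _ ha, fun b hb => ?_⟩⟩
    have hmin : ∀ k < n, ∀ g ∈ Γ ^ k, g • (x, z) ∈ ε := by
      intro k hk g hg
      by_contra hne
      exact Nat.find_min hex hk ⟨g, hg, hne⟩
    have := hmin (m + (n - (m + 1))) (by omega) (b * h)
      (by rw [pow_add]; exact Set.mul_mem_mul hb hh)
    simpa [← mul_smul, mul_assoc] using this
  obtain ⟨w, hw⟩ := IsCompact.nonempty_iInter_of_sequence_nonempty_isCompact_isClosed C hCanti hCne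
    (hCcl 0).isCompact hCcl
  rw [Set.mem_iInter] at hw
  have hw' := fun m => (hCmem m w).1 (hw m)
  have hwε := (hw' 0).1
  choose c hc hcb using fun m => (hw' m).2
  obtain ⟨u, hu⟩ := exists_clusterPt_of_compactSpace (Filter.map (fun m => c m • w) atTop)
  have hucl : ∀ S : Set (X × X), IsClosed S → (∀ᶠ m in atTop, c m • w ∈ S) → u ∈ S := by
    intro S hS hev
    have : S ∈ Filter.map (fun m => c m • w) atTop := hev
    have h2 := hu.mono (le_principal_iff.2 this)
    exact hS.closure_eq ▸ mem_closure_iff_clusterPt.2 h2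
  have huorb : u ∈ closure (Set.range fun g : G => g • w) :=
    hucl _ isClosed_closure (Eventually.of_forall fun m => subset_closure ⟨c m, rfl⟩)
  have huε : ∀ g : G, g • u ∈ ε := by
    intro g
    obtain ⟨r, _, hr⟩ := hΓgen g
    have hcg : Continuous fun w : X × X => g • w := continuous_const_smul g
    refine hucl {w | g • w ∈ ε} (hεclopen.isClosed.preimage hcg) ?_
    filter_upwards [eventually_ge_atTop r] with m hm
    have := hcb m g (hmono hm hr)
    simpa [mul_smul] using this
  have hback := distal_symm hdistal w u huorb
  apply hwε
  refine closure_minimal ?_ hεclopen.isClosed hback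
  rintro _ ⟨g, rfl⟩
  exact huε g

/-- a distal compact non-connected flow with compactly generated phase
group has a non-trivial equicontinuous factor. -/
theorem statement5 {G X : Type} [Group G] [TopologicalSpace G] [T2Space G]
    [ContinuousMul G] [UniformSpace X] [T2Space X] [CompactSpace X]
    [MulAction G X] [ContinuousSMul G X]
    (hnc : ¬ PreconnectedSpace X)
    (Γ : Set G) (hΓc : IsCompact Γ) (hΓ1 : (1 : G) ∈ Γ) (hΓinv : Γ⁻¹ = Γ)
    (hΓgen : ∀ g : G, ∃ r : ℕ, 1 ≤ r ∧ g ∈ Γ ^ r)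
    (hdistal : ∀ x y : X, x ≠ y →
      closure (Set.range fun g : G => (g • x, g • y)) ∩ Set.diagonal X = ∅) :
    Nonempty (NontrivialEquicontinuousFactor G X) := by
  classical
  obtain ⟨A, hA, hAe, hAu⟩ : ∃ A : Set X, IsClopen A ∧ A ≠ ∅ ∧ A ≠ Set.univ := by
    by_contra hno
    push Not at hno
    refine hnc (preconnectedSpace_iff_clopen.2 fun s hs => ?_)
    by_cases h : s = ∅
    · exact Or.inl h
    · exact Or.inr (hno s hs (Set.nonempty_iff_ne_empty.2 h))
  have key := clopen_equicont Γ hΓc hΓ1 hΓinv hΓgen hdistal A hA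
  let S : Setoid X :=
    { r := fun x y => ∀ g : G, (g • x ∈ A ↔ g • y ∈ A)
      iseqv := ⟨fun x g => Iff.rfl, fun h g => (h g).symm, fun h k g => (h g).trans (k g)⟩ }
  let Y := Quotient S
  let π : X → Y := fun x => Quotient.mk S x
  have hπ : ∀ x y, π x = π y ↔ ∀ g : G, (g • x ∈ A ↔ g • y ∈ A) := fun x y => Quotient.eq
  letI tY : TopologicalSpace Y := ⊥
  haveI : DiscreteTopology Y := ⟨rfl⟩
  have hcont : Continuous π := by
    rw [continuous_iff_continuousAt]
    intro z
    have h1 : ∀ᶠ x in 𝓝 z, π x = π z := (key z).mono fun x hx => (hπ x z).2 hx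
    exact tendsto_nhds_of_eventually_eq h1
  have hsurj : Function.Surjective π := Quotient.mk_surjective
  letI mY : MulAction G Y :=
    { smul := fun g => Quotient.map (fun x => g • x) (by
        intro x y hxy h
        have := hxy (h * g)
        simpa [mul_smul] using this)
      one_smul := by
        intro y
        obtain ⟨x, rfl⟩ := hsurj y
        exact congrArg π (one_smul G x)
      mul_smul := by
        intro g h y
        obtain ⟨x, rfl⟩ := hsurj y
        exact congrArg π (mul_smul g h x) }
  have heq : ∀ (g : G) (x : X), π (g • x) = g • π x := fun g x => rfl
  refine ⟨{ Y := Y, tY := tY, mY := mY, compactY := ?_, t2Y := inferInstance, contSMulY := ?_,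
            nontrivialY := ?_, π := π, contπ := hcont, surjπ := hsurj, equivar := heq,
            equicont := ?_ }⟩
  · exact hsurj.compactSpace hcont
  · refine ⟨?_⟩
    rw [continuous_iff_continuousAt]
    rintro ⟨g, y⟩
    obtain ⟨x, rfl⟩ := hsurj y
    have h1 : Continuous fun g : G => π (g • x) :=
      hcont.comp (continuous_id.smul continuous_const)
    have h2 : ∀ᶠ h in 𝓝 g, π (h • x) = π (g • x) :=
      h1.continuousAt.eventually_mem ((isOpen_discrete {π (g • x)}).mem_nhds rfl)
    have h3 : ∀ᶠ y in 𝓝 (π x), y = π x := by simp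
    refine tendsto_nhds_of_eventually_eq ?_
    rw [nhds_prod_eq]
    filter_upwards [h2.prod_mk h3] with q hq
    obtain ⟨hq1, hq2⟩ := hq
    rw [hq2]
    exact hq1
  · obtain ⟨a, ha⟩ := Set.nonempty_iff_ne_empty.2 hAe
    obtain ⟨b, hb⟩ := (Set.ne_univ_iff_exists_notMem A).1 hAu
    refine ⟨π a, π b, fun h => hb ?_⟩
    have := (hπ a b).1 h 1
    simpa [ha] using this
  · intro y ε hε
    refine ⟨{y}, (isOpen_discrete _).mem_nhds rfl, ?_⟩
    rintro z rfl g
    exact subset_of_mem_nhdsSet hε rfl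
end

section
/- Let G be a para-topological group that is compactly generated, acting jointly continuously on a Hausdorff uniform space X (not necessarily locally compact) such that closure(G•x) is compact and 0-dimensional for every x ∈ X. If the action is distal, then every point of X is regularly almost periodic with respect to the discrete topology on G: for every x ∈ X and every neighborhood U of x there is a normal subgroup H of G of finite index (equivalently, a discretely syndetic normal subgroup) with H•x ⊆ U. -/
open Pointwise Filter Topology

/-- A subset of a topological space is 0-dimensional if, as a subspace, it has a
neighborhood base of clopen sets at every point. -/
def ZeroDimSubset {X : Type} [TopologicalSpace X] (A : Set X) : Prop :=
  ∀ a : A, ∀ U ∈ 𝓝 a, ∃ V : Set A, IsClopen V ∧ a ∈ V ∧ V ⊆ U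

/-- In a compact distal system, orbit closures of pairs are symmetric (minimal). -/
theorem distal_pair_symm {G Y : Type} [Group G] [TopologicalSpace Y] [T2Space Y]
    [CompactSpace Y] [MulAction G Y] [ContinuousConstSMul G Y]
    (hdistal : ∀ x y : Y, x ≠ y →
      closure (Set.range fun g : G => (g • x, g • y)) ∩ Set.diagonal Y = ∅)
    (u z : Y × Y) (hz : z ∈ closure (MulAction.orbit G u)) :
    u ∈ closure (MulAction.orbit G z) := by
  letI : Semigroup (Y → Y) := { mul := fun f g => f ∘ g, mul_assoc := fun _ _ _ => rfl }
  have mul_def : ∀ f g : Y → Y, f * g = f ∘ g := fun _ _ => rfl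
  set E : Set (Y → Y) := closure (Set.range fun g : G => fun y : Y => g • y) with hE
  have hEc : IsCompact E := isClosed_closure.isCompact
  have hcont : ∀ r : Y → Y, Continuous (fun q : Y → Y => q * r) := fun r =>
    continuous_pi fun y => continuous_apply (r y)
  have hev : ∀ w : Y × Y, Continuous (fun p : Y → Y => (p w.1, p w.2)) := fun w =>
    (continuous_apply w.1).prodMk (continuous_apply w.2)
  have hEorb : ∀ w : Y × Y, ∀ p ∈ E, (p w.1, p w.2) ∈ closure (MulAction.orbit G w) := by
    intro w p hp
    refine map_mem_closure (f := fun p : Y → Y => (p w.1, p w.2)) (hev w) hp ?_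
    rintro _ ⟨g, rfl⟩
    exact ⟨g, rfl⟩
  have hgE : ∀ g : G, ∀ q ∈ E, (fun y => g • q y) ∈ E := by
    intro g q hq
    have hc : Continuous (fun q : Y → Y => fun y => g • q y) :=
      continuous_pi fun y => (continuous_apply y).const_smul g
    refine map_mem_closure hc hq ?_
    rintro _ ⟨g', rfl⟩
    exact ⟨g * g', by funext y; exact mul_smul g g' y⟩
  have hEmul : ∀ p ∈ E, ∀ q ∈ E, p * q ∈ E := by
    intro p hp q hq
    have := map_mem_closure (t := E) (hcont q) hp (by
      rintro _ ⟨g, rfl⟩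
      exact hgE g q hq)
    rwa [isClosed_closure.closure_eq] at this
  obtain ⟨p, hp, hpz⟩ : ∃ p ∈ E, (p u.1, p u.2) = z := by
    have hcl : IsClosed ((fun p : Y → Y => (p u.1, p u.2)) '' E) :=
      (hEc.image (hev u)).isClosed
    have : closure (MulAction.orbit G u) ⊆ (fun p : Y → Y => (p u.1, p u.2)) '' E := by
      refine closure_minimal ?_ hcl
      rintro _ ⟨g, rfl⟩
      exact ⟨fun y => g • y, subset_closure ⟨g, rfl⟩, rfl⟩
    exact this hz
  obtain ⟨e, ⟨q, hq, rfl⟩, hidem⟩ := exists_idempotent_in_compact_subsemigroup hcont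
    ((fun q : Y → Y => q * p) '' E) ⟨_, p, hp, rfl⟩ (hEc.image (hcont p)) (by
      rintro _ ⟨a, ha, rfl⟩ _ ⟨b, hb, rfl⟩
      exact ⟨a * p * b, hEmul _ (hEmul _ ha _ hp) _ hb, rfl⟩)
  have hfix : ∀ y, q (p y) = y := by
    intro y
    by_contra hne
    have h1 := hEorb (y, q (p y)) (q * p) (hEmul _ hq _ hp)
    have h2 : (q * p) (q (p y)) = (q * p) y := congrFun hidem y
    have h3 := hdistal y (q (p y)) (fun h => hne h.symm)
    exact Set.eq_empty_iff_forall_notMem.1 h3 _ ⟨h1, h2.symm⟩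
  have := hEorb z q hq
  rw [← hpz] at this
  simpa only [hfix, ← hpz] using this

theorem compact_pow {G : Type} [Group G] [TopologicalSpace G] [ContinuousMul G]
    {Γ : Set G} (hΓc : IsCompact Γ) (n : ℕ) : IsCompact (Γ ^ n) := by
  induction n with
  | zero => rw [pow_zero]; exact isCompact_singleton
  | succ n ih => rw [pow_succ]; exact ih.mul hΓc

/-- Auslander-Glasner-Weiss type argument. -/
theorem orbit_in_clopen {G W : Type} [Group G] [TopologicalSpace G]
    [ContinuousMul G] [TopologicalSpace W] [CompactSpace W] [MulAction G W] [ContinuousSMul G W]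
    (Γ : Set G) (hΓc : IsCompact Γ) (hΓ1 : (1 : G) ∈ Γ) (hΓinv : Γ⁻¹ = Γ)
    (hΓgen : ∀ g : G, ∃ r : ℕ, 1 ≤ r ∧ g ∈ Γ ^ r)
    (hsymm : ∀ u z : W, z ∈ closure (MulAction.orbit G u) → u ∈ closure (MulAction.orbit G z))
    (P : Set W) (hP : IsClopen P) (w : W) (hw : ∀ g : G, g • w ∈ P) :
    ∀ᶠ w' in 𝓝 w, ∀ g : G, g • w' ∈ P := by
  by_contra hcon
  have hinv : ∀ n, ∀ g ∈ Γ ^ n, g⁻¹ ∈ Γ ^ n := by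
    intro n g hg
    have : (Γ ^ n)⁻¹ = Γ ^ n := by rw [← inv_pow, hΓinv]
    rw [← this]; simpa using hg
  have hmono : ∀ {m n : ℕ}, m ≤ n → Γ ^ m ⊆ Γ ^ n := fun h => Set.pow_subset_pow_right hΓ1 h
  let S : ℕ → Set W := fun k => {u | u ∈ Pᶜ ∧ ∃ a ∈ Γ ^ (k + 1), ∀ h ∈ Γ ^ k, h • a • u ∈ P}
  have hScl : ∀ k, IsClosed (S k) := by
    intro k
    have hK : IsClosed {q : G × W | ∀ h ∈ Γ ^ k, h • q.1 • q.2 ∈ P} := by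
      simp only [Set.setOf_forall]
      refine isClosed_iInter fun h => isClosed_iInter fun _ => ?_
      exact hP.1.preimage ((continuous_fst.smul continuous_snd).const_smul h)
    haveI : CompactSpace (Γ ^ (k + 1) : Set G) :=
      isCompact_iff_compactSpace.1 (compact_pow hΓc (k + 1))
    have hK' : IsClosed {q : (Γ ^ (k + 1) : Set G) × W | ∀ h ∈ Γ ^ k, h • (q.1 : G) • q.2 ∈ P} :=
      hK.preimage (continuous_subtype_val.prodMap continuous_id)
    have := isClosedMap_snd_of_compactSpace _ hK'
    have hS : S k = Pᶜ ∩ Prod.snd ''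
        {q : (Γ ^ (k + 1) : Set G) × W | ∀ h ∈ Γ ^ k, h • (q.1 : G) • q.2 ∈ P} := by
      ext u
      constructor
      · rintro ⟨h1, a, ha, h2⟩
        exact ⟨h1, ⟨⟨a, ha⟩, u⟩, h2, rfl⟩
      · rintro ⟨h1, ⟨⟨a, ha⟩, u'⟩, h2, rfl⟩
        exact ⟨h1, a, ha, h2⟩
    rw [hS]
    exact hP.compl.1.inter this
  have hSanti : ∀ k, S (k + 1) ⊆ S k := by
    rintro k u ⟨h1, a, ha, h2⟩
    refine ⟨h1, ?_⟩
    rw [pow_succ'] at ha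
    obtain ⟨γ, hγ, a', ha', rfl⟩ := ha
    refine ⟨a', ha', fun h hh => ?_⟩
    have h3 := h2 (h * γ⁻¹) (by
      rw [pow_succ]
      exact Set.mul_mem_mul hh (by rw [← hΓinv]; simpa using hγ))
    simpa [mul_smul] using h3
  have hSne : ∀ k, (S k).Nonempty := by
    intro k
    have hev : ∀ᶠ w' in 𝓝 w, ∀ g ∈ Γ ^ k, g • w' ∈ P := by
      refine (compact_pow hΓc k).eventually_forall_of_forall_eventually fun g _ => ?_
      exact (continuous_snd.smul continuous_fst).continuousAt.eventually
        (hP.2.mem_nhds (hw g))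
    obtain ⟨w', hw', hbad⟩ : ∃ w', (∀ g ∈ Γ ^ k, g • w' ∈ P) ∧ ¬ ∀ g : G, g • w' ∈ P := by
      by_contra hno
      push Not at hno
      exact hcon (hev.mono fun w' h => hno w' h)
    push Not at hbad
    obtain ⟨g₀, hg₀⟩ := hbad
    have hex : ∃ n, ∃ g ∈ Γ ^ n, g • w' ∉ P := by
      obtain ⟨r, _, hr⟩ := hΓgen g₀
      exact ⟨r, g₀, hr, hg₀⟩
    classical
    obtain ⟨g, hg, hgP⟩ := Nat.find_spec hex
    have hmin : ∀ m < Nat.find hex, ∀ g ∈ Γ ^ m, g • w' ∈ P := by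
      intro m hm g hg
      by_contra h
      exact Nat.find_min hex hm ⟨g, hg, h⟩
    generalize Nat.find hex = n at hg hmin
    have hkn : k < n := by
      by_contra h
      exact hgP (hw' g (hmono (not_lt.1 h) hg))
    obtain ⟨m, rfl⟩ := Nat.exists_eq_add_of_le (Nat.succ_le_of_lt hkn)
    rw [pow_add] at hg
    obtain ⟨b, hb, c, hc, rfl⟩ := hg
    refine ⟨(b * c) • w', hgP, b⁻¹, hinv _ _ hb, fun h hh => ?_⟩
    have := hmin (k + m) (by omega) (h * c) (by rw [pow_add]; exact Set.mul_mem_mul hh hc)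
    simpa [mul_smul] using this
  obtain ⟨u, hu⟩ := IsCompact.nonempty_iInter_of_sequence_nonempty_isCompact_isClosed S
    hSanti hSne (hScl 0).isCompact hScl
  rw [Set.mem_iInter] at hu
  have huP : u ∉ P := (hu 0).1
  choose a ha haP using fun k => (hu k).2
  -- nested closed sets: closures of tails
  let T : ℕ → Set W := fun k =>
    closure (MulAction.orbit G u) ∩ {z | ∀ h ∈ Γ ^ k, h • z ∈ P}
  have hTcl : ∀ k, IsClosed (T k) := by
    intro k
    refine isClosed_closure.inter ?_
    simp only [Set.setOf_forall]
    exact isClosed_iInter fun h => isClosed_iInter fun _ => hP.1.preimage (continuous_const_smul h)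
  obtain ⟨z, hz⟩ := IsCompact.nonempty_iInter_of_sequence_nonempty_isCompact_isClosed T
    (fun k z hz => ⟨hz.1, fun h hh => hz.2 h (hmono (Nat.le_succ k) hh)⟩)
    (fun k => ⟨a k • u, subset_closure ⟨a k, rfl⟩, haP k⟩) (hTcl 0).isCompact hTcl
  rw [Set.mem_iInter] at hz
  have hzP : closure (MulAction.orbit G z) ⊆ P := by
    refine closure_minimal ?_ hP.1
    rintro _ ⟨g, rfl⟩
    obtain ⟨r, _, hr⟩ := hΓgen g
    exact (hz r).2 g hr
  exact huP (hzP (hsymm u z (hz 0).1))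

theorem compact_distal_clopen {G Y : Type} [Group G] [TopologicalSpace G]
    [ContinuousMul G] [TopologicalSpace Y] [T2Space Y] [CompactSpace Y]
    [MulAction G Y] [ContinuousSMul G Y]
    (Γ : Set G) (hΓc : IsCompact Γ) (hΓ1 : (1 : G) ∈ Γ) (hΓinv : Γ⁻¹ = Γ)
    (hΓgen : ∀ g : G, ∃ r : ℕ, 1 ≤ r ∧ g ∈ Γ ^ r)
    (hdistal : ∀ x y : Y, x ≠ y →
      closure (Set.range fun g : G => (g • x, g • y)) ∩ Set.diagonal Y = ∅)
    (V : Set Y) (hV : IsClopen V) :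
    ∃ H : Subgroup G, H.Normal ∧ H.FiniteIndex ∧ ∀ h ∈ H, ∀ y ∈ V, h • y ∈ V := by
  have hP : IsClopen {w : Y × Y | w.1 ∈ V ↔ w.2 ∈ V} := by
    have h1 : IsClopen (Prod.fst ⁻¹' V : Set (Y × Y)) := hV.preimage continuous_fst
    have h2 : IsClopen (Prod.snd ⁻¹' V : Set (Y × Y)) := hV.preimage continuous_snd
    have : {w : Y × Y | w.1 ∈ V ↔ w.2 ∈ V} =
        (Prod.fst ⁻¹' V ∩ Prod.snd ⁻¹' V) ∪ ((Prod.fst ⁻¹' V)ᶜ ∩ (Prod.snd ⁻¹' V)ᶜ) := by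
      ext w
      simp only [Set.mem_setOf_eq, Set.mem_union, Set.mem_inter_iff, Set.mem_preimage,
        Set.mem_compl_iff]
      tauto
    rw [this]
    exact (h1.inter h2).union (h1.compl.inter h2.compl)
  have hloc : ∀ z : Y, {y | ∀ g : G, g • z ∈ V ↔ g • y ∈ V} ∈ 𝓝 z := by
    intro z
    have hs : ∀ u z : Y × Y, z ∈ closure (MulAction.orbit G u) →
        u ∈ closure (MulAction.orbit G z) :=
      fun u z => distal_pair_symm hdistal u z
    have h := orbit_in_clopen (W := Y × Y) Γ hΓc hΓ1 hΓinv hΓgen hs _ hP (z, z) (fun g => Iff.rfl)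
    have hc : Tendsto (fun y : Y => (z, y)) (𝓝 z) (𝓝 (z, z)) :=
      (Continuous.prodMk_right z).tendsto z
    exact hc.eventually h
  obtain ⟨t, ht⟩ := isCompact_univ.elim_nhds_subcover _ (fun z _ => hloc z)
  have hfin : (MulAction.orbit G V).Finite := by
    have hmaps : Set.InjOn (fun A : Set Y => A ∩ (t : Set Y)) (MulAction.orbit G V) := by
      rintro _ ⟨g, rfl⟩ _ ⟨g', rfl⟩ heq
      ext y
      obtain ⟨z, hz, hzy⟩ := Set.mem_iUnion₂.1 (ht.2 (Set.mem_univ y))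
      have e := Set.ext_iff.1 heq z
      simp only [Set.mem_inter_iff, Finset.mem_coe, hz, and_true,
        Set.mem_smul_set_iff_inv_smul_mem] at e ⊢
      rw [← hzy g⁻¹, ← hzy g'⁻¹, e]
    refine Set.Finite.of_finite_image ?_ hmaps
    refine (t.finite_toSet.finite_subsets).subset ?_
    rintro _ ⟨A, _, rfl⟩
    exact Set.inter_subset_right
  haveI : (MulAction.stabilizer G V).FiniteIndex := by
    rw [Subgroup.finiteIndex_iff, MulAction.index_stabilizer]
    exact ((Set.ncard_pos hfin).2 ⟨V, MulAction.mem_orbit_self V⟩).ne'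
  refine ⟨(MulAction.stabilizer G V).normalCore, inferInstance, inferInstance, ?_⟩
  intro h hh y hy
  have hs : h • V = V := Subgroup.normalCore_le _ hh
  rw [← hs]
  exact Set.smul_mem_smul_set hy

/-- if a compactly generated para-topological group acts jointly
continuously and distally on a Hausdorff uniform space whose orbit closures are all
compact and 0-dimensional, then every point is regularly almost periodic with
respect to the discrete topology on `G`: every neighborhood of `x` contains `H • x`
for some finite-index normal subgroup `H` of `G`. -/
theorem statement6 {G X : Type} [Group G] [TopologicalSpace G] [T2Space G]
    [ContinuousMul G] [UniformSpace X] [T2Space X]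
    [MulAction G X] [ContinuousSMul G X]
    (Γ : Set G) (hΓc : IsCompact Γ) (hΓ1 : (1 : G) ∈ Γ) (hΓinv : Γ⁻¹ = Γ)
    (hΓgen : ∀ g : G, ∃ r : ℕ, 1 ≤ r ∧ g ∈ Γ ^ r)
    (hLag : ∀ x : X, IsCompact (closure (MulAction.orbit G x)))
    (h0dim : ∀ x : X, ZeroDimSubset (closure (MulAction.orbit G x)))
    (hdistal : ∀ x y : X, x ≠ y →
      closure (Set.range fun g : G => (g • x, g • y)) ∩ Set.diagonal X = ∅) :
    ∀ x : X, ∀ U ∈ 𝓝 x, ∃ H : Subgroup G, H.Normal ∧ H.FiniteIndex ∧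
      ∀ h ∈ H, h • x ∈ U := by

  intro x U hU
  let Y : SubMulAction G X :=
    { carrier := closure (MulAction.orbit G x)
      smul_mem' := by
        intro g y hy
        refine map_mem_closure (continuous_const_smul g) hy ?_
        rintro _ ⟨g', rfl⟩
        exact ⟨g * g', mul_smul g g' x⟩ }
  haveI : CompactSpace Y := isCompact_iff_compactSpace.1 (hLag x)
  let x₀ : Y := ⟨x, subset_closure (MulAction.mem_orbit_self x)⟩
  obtain ⟨V, hV, hxV, hVU⟩ := h0dim x x₀ (Subtype.val ⁻¹' U)
    (continuous_subtype_val.continuousAt.preimage_mem_nhds hU)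
  obtain ⟨H, hn, hf, hH⟩ := compact_distal_clopen (Y := Y) Γ hΓc hΓ1 hΓinv hΓgen (by
    intro a b hab
    rw [Set.eq_empty_iff_forall_notMem]
    rintro ⟨c, d⟩ ⟨hcl, hd⟩
    have hne : (a : X) ≠ b := fun h => hab (Subtype.ext h)
    refine Set.eq_empty_iff_forall_notMem.1 (hdistal a b hne) ((c : X), (d : X)) ⟨?_, ?_⟩
    · refine map_mem_closure (f := fun w : Y × Y => ((w.1 : X), (w.2 : X)))
        (by fun_prop) hcl ?_
      rintro _ ⟨g, rfl⟩
      exact ⟨g, rfl⟩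
    · exact congrArg Subtype.val hd) V hV
  exact ⟨H, hn, hf, fun h hh => hVU (hH h hh x₀ hxV)⟩
end

section
/- Let (G,X) be a flow with X a metric space. Suppose every point of X is regularly almost periodic with respect to the discrete topology on G, i.e. for every x ∈ X and every neighborhood U of x there is a finite-index normal subgroup H of G with H•x ⊆ U, and suppose G has only countably many finite-index normal subgroups. Then the set of points at which (G,X) is equicontinuous is residual (comeager) in X. -/
open Pointwise Filter Topology Uniformity

lemma aux_symm {G X : Type} [Group G] [MetricSpace X]
    [MulAction G X] [ContinuousConstSMul G X]
    (hrap : ∀ x : X, ∀ U ∈ 𝓝 x, ∃ H : Subgroup G, H.Normal ∧ H.FiniteIndex ∧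
      ∀ h ∈ H, h • x ∈ U)
    (H : Subgroup G) (w y : X)
    (hy : y ∈ closure ((fun g : G => g • w) '' (H : Set G))) :
    w ∈ closure ((fun g : G => g • y) '' (H : Set G)) := by
  rw [Metric.mem_closure_iff]
  intro ε hε
  obtain ⟨K, hKn, hKf, hK⟩ := hrap w (Metric.closedBall w (ε/2))
    (Metric.closedBall_mem_nhds w (by positivity))
  -- cosets of `K` meeting `H`
  let T : Set (G ⧸ K) := (fun g : G => (g : G ⧸ K)) '' (H : Set G)
  have hT : ∀ q : T, ∃ c ∈ H, (c : G ⧸ K) = q := fun q => q.2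
  choose c hcH hcq using hT
  have hsub : ((fun g : G => g • w) '' (H : Set G)) ⊆
      ⋃ q : T, (fun z : X => (c q)⁻¹ • z) ⁻¹' (Metric.closedBall w (ε/2)) := by
    rintro _ ⟨g, hg, rfl⟩
    let q : T := ⟨(g : G ⧸ K), g, hg, rfl⟩
    refine Set.mem_iUnion.2 ⟨q, ?_⟩
    have := hK _ (QuotientGroup.eq.1 (hcq q))
    simpa [mul_smul] using this
  have hcl : IsClosed (⋃ q : T, (fun z : X => (c q)⁻¹ • z) ⁻¹' (Metric.closedBall w (ε/2))) :=
    isClosed_iUnion_of_finite fun q =>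
      Metric.isClosed_closedBall.preimage (continuous_const_smul _)
  obtain ⟨q, hq⟩ := Set.mem_iUnion.1 (closure_minimal hsub hcl hy)
  refine ⟨(c q)⁻¹ • y, ⟨_, H.inv_mem (hcH q), rfl⟩, ?_⟩
  have : dist ((c q)⁻¹ • y) w ≤ ε/2 := hq
  rw [dist_comm]; linarith

lemma aux_trans {G X : Type} [Group G] [MetricSpace X]
    [MulAction G X] [ContinuousConstSMul G X]
    (H : Subgroup G) (w y : X)
    (hy : w ∈ closure ((fun g : G => g • y) '' (H : Set G))) :
    closure ((fun g : G => g • w) '' (H : Set G)) ⊆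
      closure ((fun g : G => g • y) '' (H : Set G)) := by
  refine closure_minimal ?_ isClosed_closure
  rintro _ ⟨g, hg, rfl⟩
  refine map_mem_closure (continuous_const_smul g) hy ?_
  rintro _ ⟨k, hk, rfl⟩
  exact ⟨g * k, H.mul_mem hg hk, mul_smul _ _ _⟩

lemma aux_unif {G X : Type} [Group G] [MetricSpace X]
    [MulAction G X] [ContinuousConstSMul G X]
    (hLag : ∀ x : X, IsCompact (closure (MulAction.orbit G x)))
    (hrap : ∀ x : X, ∀ U ∈ 𝓝 x, ∃ H : Subgroup G, H.Normal ∧ H.FiniteIndex ∧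
      ∀ h ∈ H, h • x ∈ U) (x : X) (ε : ℝ) (hε : 0 < ε) :
    ∃ H : Subgroup G, H.Normal ∧ H.FiniteIndex ∧ ∀ h ∈ H, ∀ g : G,
      dist (g • h • x) (g • x) < ε := by
  let ι := {H : Subgroup G // H.Normal ∧ H.FiniteIndex}
  haveI : Nonempty ι := ⟨⟨⊤, inferInstance, inferInstance⟩⟩
  let S : (H : ι) → G ⧸ H.1 → Set X := fun H q =>
    closure ((fun g : G => g • x) '' {g : G | (g : G ⧸ H.1) = q})
  let R : ι → Set (X × X) := fun H => ⋃ q : G ⧸ H.1, S H q ×ˢ S H q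
  have hSc : ∀ H q, IsCompact (S H q) := fun H q =>
    (hLag x).of_isClosed_subset isClosed_closure (closure_mono (by
      rintro _ ⟨g, -, rfl⟩; exact ⟨g, rfl⟩))
  have hRc : ∀ H, IsCompact (R H) := fun H => by
    haveI := H.2.2
    exact isCompact_iUnion fun q => (hSc H q).prod (hSc H q)
  have hmono : ∀ H K : ι, H.1 ≤ K.1 → R H ⊆ R K := by
    intro H K hHK p hp
    obtain ⟨q, hq⟩ := Set.mem_iUnion.1 hp
    induction q using QuotientGroup.induction_on with
    | H c =>
      have : S H (c : G ⧸ H.1) ⊆ S K (c : G ⧸ K.1) := by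
        refine closure_mono (Set.image_mono ?_)
        intro g hg
        exact QuotientGroup.eq.2 (hHK (QuotientGroup.eq.1 hg))
      exact Set.mem_iUnion.2 ⟨(c : G ⧸ K.1), this hq.1, this hq.2⟩
  have hdir : Directed (· ⊇ ·) R := by
    intro H K
    haveI := H.2.1; haveI := H.2.2; haveI := K.2.1; haveI := K.2.2
    exact ⟨⟨H.1 ⊓ K.1, inferInstance, inferInstance⟩, hmono _ _ inf_le_left,
      hmono _ _ inf_le_right⟩
  have hU : ∀ p ∈ ⋂ H, R H, {p : X × X | dist p.1 p.2 < ε} ∈ 𝓝 p := by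
    rintro ⟨y, z⟩ hp
    have hyz : dist y z < ε := by
      obtain ⟨H, hHn, hHf, hH⟩ := hrap y (Metric.closedBall y (ε/2))
        (Metric.closedBall_mem_nhds y (by positivity))
      obtain ⟨q, hq⟩ := Set.mem_iUnion.1 (Set.mem_iInter.1 hp ⟨H, hHn, hHf⟩)
      induction q using QuotientGroup.induction_on with
      | H c =>
        have hs : S ⟨H, hHn, hHf⟩ (c : G ⧸ H) ⊆
            closure ((fun g : G => g • (c • x)) '' (H : Set G)) := by
          refine closure_mono ?_
          rintro _ ⟨g, hg, rfl⟩
          have h1 : c⁻¹ * g ∈ H := QuotientGroup.eq.1 (Eq.symm hg)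
          refine ⟨g * c⁻¹, ?_, by simp [mul_smul]⟩
          have := hHn.conj_mem _ h1 c
          simpa using this
        have hz := aux_trans H _ _ (aux_symm hrap H _ _ (hs hq.1)) (hs hq.2)
        have : closure ((fun g : G => g • y) '' (H : Set G)) ⊆ Metric.closedBall y (ε/2) := by
          refine closure_minimal ?_ Metric.isClosed_closedBall
          rintro _ ⟨g, hg, rfl⟩
          exact hH g hg
        have := this hz
        rw [Metric.mem_closedBall, dist_comm] at this
        linarith
    exact (isOpen_lt (by fun_prop) (by fun_prop)).mem_nhds hyz
  obtain ⟨H, hH⟩ := exists_subset_nhds_of_isCompact' hdir hRc (fun H => (hRc H).isClosed) hU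
  refine ⟨H.1, H.2.1, H.2.2, fun h hh g => ?_⟩
  have : (g • h • x, g • x) ∈ R H := by
    refine Set.mem_iUnion.2 ⟨(g : G ⧸ H.1), subset_closure ⟨g * h, ?_, mul_smul _ _ _⟩,
      subset_closure ⟨g, rfl, rfl⟩⟩
    exact QuotientGroup.mk_mul_of_mem g hh
  exact hH this

/-- a flow on a metric space that is pointwise regularly almost periodic
with respect to the discrete topology on `G`, where `G` has only countably many
finite-index normal subgroups, is equicontinuous at a residual set of points. -/
theorem statement7 {G X : Type} [Group G] [TopologicalSpace G] [T2Space G]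
    [ContinuousMul G] [MetricSpace X] [LocallyCompactSpace X]
    [MulAction G X] [ContinuousSMul G X]
    (hLag : ∀ x : X, IsCompact (closure (MulAction.orbit G x)))
    (hrap : ∀ x : X, ∀ U ∈ 𝓝 x, ∃ H : Subgroup G, H.Normal ∧ H.FiniteIndex ∧
      ∀ h ∈ H, h • x ∈ U)
    (hcount : {H : Subgroup G | H.Normal ∧ H.FiniteIndex}.Countable) :
    {x : X | ∀ ε ∈ 𝓤 X, ∃ U ∈ 𝓝 x, ∀ y ∈ U, ∀ g : G, (g • y, g • x) ∈ ε} ∈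
      residual X := by

  let ι := {H : Subgroup G // H.Normal ∧ H.FiniteIndex}
  haveI : Countable ι := hcount.to_subtype
  let A : ℝ → ι → Set X := fun ε H =>
    {x | ∀ h ∈ H.1, ∀ g : G, dist (g • h • x) (g • x) ≤ ε}
  have hAc : ∀ ε H, IsClosed (A ε H) := by
    intro ε H
    have : A ε H = ⋂ h ∈ H.1, ⋂ g : G, {x | dist (g • h • x) (g • x) ≤ ε} := by
      ext x; simp [A]
    rw [this]
    exact isClosed_biInter fun h _ => isClosed_iInter fun g =>
      isClosed_le (by fun_prop) (by fun_prop)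
  have hAU : ∀ ε > 0, ⋃ H, A ε H = Set.univ := by
    intro ε hε
    refine Set.eq_univ_of_forall fun x => ?_
    obtain ⟨H, h1, h2, h3⟩ := aux_unif hLag hrap x ε hε
    exact Set.mem_iUnion.2 ⟨⟨H, h1, h2⟩, fun h hh g => (h3 h hh g).le⟩
  have hres : ∀ n : ℕ, (⋃ H, interior (A (1 / ((n : ℝ) + 1)) H)) ∈ residual X := fun n =>
    residual_of_dense_open (isOpen_iUnion fun _ => isOpen_interior)
      (dense_iUnion_interior_of_closed (fun H => hAc _ H) (hAU _ (by positivity)))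
  refine mem_of_superset (countable_iInter_mem.2 hres) ?_
  intro x hx ε hε
  obtain ⟨δ, hδ, hδε⟩ := Metric.mem_uniformity_dist.1 hε
  obtain ⟨n, hn⟩ := exists_nat_one_div_lt (show 0 < δ / 3 by positivity)
  obtain ⟨H, hH⟩ := Set.mem_iUnion.1 (Set.mem_iInter.1 hx n)
  haveI := H.2.2
  have hc : ∀ᶠ y in 𝓝 x, ∀ q : G ⧸ H.1, dist (q.out • y) (q.out • x) < δ / 3 := by
    rw [eventually_all]
    intro q
    exact (continuous_const_smul q.out).continuousAt.eventually
      (Metric.ball_mem_nhds _ (by positivity))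
  refine ⟨_, inter_mem hc (mem_interior_iff_mem_nhds.1 hH), ?_⟩
  rintro y ⟨hy1, hy2⟩ g
  apply hδε
  have hm : ((g : G ⧸ H.1).out)⁻¹ * g ∈ H.1 := QuotientGroup.eq.1 (QuotientGroup.out_eq' _)
  have e : ∀ z : X, (g : G ⧸ H.1).out • (((g : G ⧸ H.1).out)⁻¹ * g) • z = g • z := by
    intro z; simp [mul_smul]
  have a1 := hy2 _ hm (g : G ⧸ H.1).out
  have a2 := interior_subset hH _ hm (g : G ⧸ H.1).out
  have a3 : dist _ _ < _ := hy1 (g : G ⧸ H.1)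
  rw [e] at a1 a2
  rw [dist_comm] at a2
  have := dist_triangle4 (g • y) ((g : G ⧸ H.1).out • y) ((g : G ⧸ H.1).out • x) (g • x)
  linarith
end

section
/- Let X be a compact Hausdorff 0-dimensional space and f : X → X a homeomorphism. Then the following are pairwise equivalent: (i) f is weakly rigid: for every entourage ε of X and every finite set of points x_1, …, x_m ∈ X there exists n ∈ ℤ, n ≠ 0, with (fⁿx_j, x_j) ∈ ε for all j; (ii) f is rigid: there is a net n_k in ℤ with n_k → +∞ such that f^{n_k}x → x for every x ∈ X; (iii) f is uniformly rigid: there is a net n_k → +∞ such that f^{n_k} → id uniformly on X; (iv) the ℤ-flow generated by f is equicontinuous: for every x ∈ X and every entourage ε there is a neighborhood U of x with (fⁿy, fⁿx) ∈ ε for all y ∈ U and all n ∈ ℤ; (v) f is positively pointwise product recurrent: for every pair (x₁, x₂) ∈ X × X there is a net n_k → +∞ with (f^{n_k}x₁, f^{n_k}x₂) → (x₁, x₂); (vi) the ℤ-flow is regularly almost periodic: for every entourage ε there is an integer m ≥ 1 with (f^{mk}x, x) ∈ ε for all k ∈ ℤ and all x ∈ X. -/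
open Filter Topology Uniformity



/-- The `n`-th iterate (`n : ℤ`) of a homeomorphism. -/
noncomputable def hpow {X : Type} [TopologicalSpace X] (f : X ≃ₜ X) (n : ℤ) : X → X :=
  (f.toEquiv ^ n : Equiv.Perm X)

namespace S8

theorem hpow_add {X : Type} [TopologicalSpace X] (f : X ≃ₜ X) (a b : ℤ) (x : X) :
    hpow f (a + b) x = hpow f a (hpow f b x) := by
  simp only [hpow, zpow_add, Equiv.Perm.mul_apply]

theorem hpow_zero {X : Type} [TopologicalSpace X] (f : X ≃ₜ X) (x : X) :
    hpow f 0 x = x := by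
  simp [hpow]

theorem hpow_one {X : Type} [TopologicalSpace X] (f : X ≃ₜ X) (x : X) :
    hpow f 1 x = f x := by
  simp [hpow]

theorem hpow_symm {X : Type} [TopologicalSpace X] (f : X ≃ₜ X) (n : ℤ) (x : X) :
    hpow f.symm n x = hpow f (-n) x := by
  have h : f.symm.toEquiv = (f.toEquiv : Equiv.Perm X)⁻¹ := rfl
  simp only [hpow, h, inv_zpow']

theorem hpow_cont {X : Type} [TopologicalSpace X] (f : X ≃ₜ X) (n : ℤ) :
    Continuous (hpow f n) := by
  have key : ∀ (g : X ≃ₜ X) (k : ℕ), Continuous (hpow g (k : ℤ)) := by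
    intro g k
    induction k with
    | zero =>
      have : hpow g ((0 : ℕ) : ℤ) = id := by funext x; simpa using hpow_zero g x
      rw [this]; exact continuous_id
    | succ k ih =>
      have : hpow g ((k + 1 : ℕ) : ℤ) = fun x => hpow g k (g x) := by
        funext x; push_cast; rw [hpow_add, hpow_one]
      rw [this]; exact ih.comp g.continuous
  obtain ⟨k, rfl | rfl⟩ := n.eq_nat_or_neg
  · exact key f k
  · have : hpow f (-(k : ℤ)) = hpow f.symm k := by funext x; rw [hpow_symm]
    rw [this]; exact key _ k

/-- A finite-valued map whose fibres are permuted. -/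
theorem finite_period {X β : Type} (g : Equiv.Perm X) (w : X → β) (hfin : (Set.range w).Finite)
    (hw : ∀ x y, w x = w y → w (g x) = w (g y)) :
    ∃ m : ℤ, 1 ≤ m ∧ ∀ (k : ℤ) (x : X), w ((g ^ (m * k)) x) = w x := by
  classical
  haveI : Finite (Set.range w) := hfin
  let q : X → Set.range w := Set.rangeFactorization w
  have hqs : Function.Surjective q := Set.rangeFactorization_surjective
  have hq : ∀ x y, q x = q y ↔ w x = w y := fun x y => Subtype.ext_iff
  let φ : Set.range w → Set.range w := fun b => q (g (hqs b).choose)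
  have hφ : ∀ x, φ (q x) = q (g x) := by
    intro x
    exact (hq _ _).2 (hw _ _ ((hq _ _).1 (hqs (q x)).choose_spec))
  have hsurj : Function.Surjective φ := by
    intro b
    obtain ⟨x, rfl⟩ := hqs b
    exact ⟨q (g.symm x), by rw [hφ]; simp⟩
  let σ : Equiv.Perm (Set.range w) := Equiv.ofBijective φ (Finite.injective_iff_surjective.2 hsurj |> fun h => ⟨h, hsurj⟩)
  have hσ : ∀ x, σ (q x) = q (g x) := hφ
  have hnat : ∀ (k : ℕ) x, (σ ^ k) (q x) = q ((g ^ k) x) := by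
    intro k
    induction k with
    | zero => intro x; simp
    | succ k ih => intro x; rw [pow_succ, pow_succ, Equiv.Perm.mul_apply, Equiv.Perm.mul_apply, hσ, ih]
  have hm : ∀ x, q ((g ^ orderOf σ) x) = q x := by
    intro x; rw [← hnat, pow_orderOf_eq_one]; rfl
  have hmk : ∀ (k : ℕ) x, q ((g ^ (orderOf σ * k)) x) = q x := by
    intro k x
    rw [← hnat, pow_mul, pow_orderOf_eq_one, one_pow]; rfl
  refine ⟨orderOf σ, by exact_mod_cast orderOf_pos σ, ?_⟩
  intro k x
  obtain ⟨n, rfl | rfl⟩ := k.eq_nat_or_neg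
  · have := hmk n x
    rw [hq] at this
    exact_mod_cast this
  · have := hmk n ((g ^ ((orderOf σ : ℤ) * (-(n : ℤ)))) x)
    rw [hq] at this
    rw [← this, ← Equiv.Perm.mul_apply, ← zpow_natCast, ← zpow_add]
    simp

/-- No positively asymptotic pair for `P` implies periodicity of `P`. -/
theorem period_of_no_pair {X ι : Type} [TopologicalSpace X] [CompactSpace X] [Finite ι]
    (f : X ≃ₜ X) (P : X → ι) (hP : IsLocallyConstant P)
    (hno : ∀ x y : X, (∀ n : ℤ, 1 ≤ n → P (hpow f n x) = P (hpow f n y)) → P x = P y) :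
    ∃ m : ℤ, 1 ≤ m ∧ ∀ (k : ℤ) (x : X), P (hpow f (m * k) x) = P x := by
  letI : TopologicalSpace ι := ⊥
  haveI : DiscreteTopology ι := ⟨rfl⟩
  have hPc : Continuous P := hP.continuous
  have hc : ∀ n : ℤ, Continuous fun x => P (hpow f n x) := fun n => hPc.comp (hpow_cont f n)
  obtain ⟨N, hN⟩ : ∃ N : ℕ, ∀ x y : X,
      (∀ i : Fin N, P (hpow f (i + 1 : ℤ) x) = P (hpow f (i + 1 : ℤ) y)) → P x = P y := by
    by_contra! hcon
    let K : ℕ → Set (X × X) := fun N => {p | (∀ i : Fin N,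
      P (hpow f (i + 1 : ℤ) p.1) = P (hpow f (i + 1 : ℤ) p.2)) ∧ P p.1 ≠ P p.2}
    have hKc : ∀ N, IsClosed (K N) := by
      intro N
      have h1 : IsClosed (⋂ i : Fin N, {p : X × X |
          P (hpow f (i + 1 : ℤ) p.1) = P (hpow f (i + 1 : ℤ) p.2)}) :=
        isClosed_iInter fun i => isClosed_eq ((hc _).comp continuous_fst)
          ((hc _).comp continuous_snd)
      have h2 : IsClosed {p : X × X | P p.1 = P p.2}ᶜ := by
        have : IsOpen {p : X × X | P p.1 = P p.2} :=
          (isOpen_discrete {q : ι × ι | q.1 = q.2}).preimage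
            ((hPc.comp continuous_fst).prodMk (hPc.comp continuous_snd))
        exact this.isClosed_compl
      convert h1.inter h2 using 1
      ext p
      simp [K]
    obtain ⟨⟨x, y⟩, hxy⟩ := IsCompact.nonempty_iInter_of_sequence_nonempty_isCompact_isClosed K
      (fun N p hp => ⟨fun i => by simpa using hp.1 i.castSucc, hp.2⟩)
      (fun N => by obtain ⟨x, y, h1, h2⟩ := hcon N; exact ⟨(x, y), h1, h2⟩)
      (hKc 0).isCompact hKc
    rw [Set.mem_iInter] at hxy
    refine (hxy 0).2 (hno x y fun n hn => ?_)
    obtain ⟨j, hj⟩ : ∃ j : ℕ, n = j + 1 := ⟨(n - 1).toNat, by omega⟩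
    have := (hxy (j + 1)).1 ⟨j, Nat.lt_succ_self j⟩
    rw [hj]
    exact this
  obtain ⟨m, hm, h⟩ := finite_period (f.symm.toEquiv : Equiv.Perm X)
    (fun x (i : Fin N) => P (hpow f (i + 1 : ℤ) x)) (Set.toFinite _) (by
      intro x y hxy
      have hxy' := fun i => congrFun hxy i
      have hs : ∀ (z : X) (i : ℕ), hpow f (i + 1 : ℤ) (f.symm z) = hpow f i z := by
        intro z i; rw [hpow_add, hpow_one]; simp
      funext i
      have e : ∀ z, (f.symm.toEquiv : Equiv.Perm X) z = f.symm z := fun _ => rfl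
      simp only [e]
      rw [hs, hs]
      obtain ⟨i, hi⟩ := i
      cases i with
      | zero => simpa [hpow_zero] using hN x y hxy'
      | succ i => simpa using hxy' ⟨i, by omega⟩)
  refine ⟨m, hm, fun k x => hN _ _ fun i => ?_⟩
  have := congrFun (h (-k) x) i
  have e : (f.symm.toEquiv ^ (m * -k) : Equiv.Perm X) x = hpow f (m * k) x := by
    have := hpow_symm f (m * -k) x
    rw [show -(m * -k) = m * k by ring] at this
    exact this
  simpa only [e] using this

theorem exists_partition {X : Type} [UniformSpace X] [CompactSpace X]
    (h0dim : ∀ x : X, ∀ U ∈ 𝓝 x, ∃ V : Set X, IsClopen V ∧ x ∈ V ∧ V ⊆ U)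
    (ε : Set (X × X)) (hε : ε ∈ 𝓤 X) :
    ∃ (ι : Type) (_ : Finite ι) (P : X → ι), IsLocallyConstant P ∧
      ∀ x y, P x = P y → (x, y) ∈ ε := by
  obtain ⟨δ, hδ, hsymm, hcomp⟩ := comp_symm_mem_uniformity_sets hε
  choose V hV hxV hVs using fun x => h0dim x (UniformSpace.ball x δ) (UniformSpace.ball_mem_nhds x hδ)
  obtain ⟨t, ht⟩ := isCompact_univ.elim_nhds_subcover V
    (fun x _ => (hV x).isOpen.mem_nhds (hxV x))
  refine ⟨t → Prop, inferInstance, fun x i => x ∈ V i, ?_, ?_⟩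
  · rw [IsLocallyConstant.iff_eventually_eq]
    intro x
    have : ∀ i : t, ∀ᶠ y in 𝓝 x, (y ∈ V i) = (x ∈ V i) := by
      intro i
      by_cases hx : x ∈ V i
      · filter_upwards [(hV i).isOpen.mem_nhds hx] with y hy
        simp [hx, hy]
      · filter_upwards [(hV i).compl.isOpen.mem_nhds hx] with y hy
        simp only [hx, eq_iff_iff, iff_false]; exact hy
    filter_upwards [eventually_all.2 this] with y hy
    exact funext hy
  · intro x y hxy
    have hx := ht.2 (Set.mem_univ x)
    rw [Set.mem_iUnion₂] at hx
    obtain ⟨i, hi, hxi⟩ := hx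
    have hyi : y ∈ V i := by
      have := congrFun hxy ⟨i, hi⟩
      exact this.mp hxi
    have h1 : (i, x) ∈ δ := hVs i hxi
    have h2 : (i, y) ∈ δ := hVs i hyi
    exact hcomp ⟨i, hsymm.symm _ _ h1, h2⟩

theorem partition_entourage {X ι : Type} [UniformSpace X] [CompactSpace X]
    (P : X → ι) (hP : IsLocallyConstant P) : {p : X × X | P p.1 = P p.2} ∈ 𝓤 X := by
  rw [← nhdsSet_diagonal_eq_uniformity, mem_nhdsSet_iff_forall]
  rintro ⟨x, y⟩ hxy
  obtain rfl : x = y := hxy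
  have h := (IsLocallyConstant.iff_eventually_eq P).1 hP x
  rw [nhds_prod_eq]
  filter_upwards [h.prod_mk h] with p hp
  exact hp.1.trans hp.2.symm

end S8

/-- for a homeomorphism `f` of a compact Hausdorff 0-dimensional space,
weak rigidity, rigidity, uniform rigidity, equicontinuity, positive pointwise product
recurrence, and regular almost periodicity of the generated ℤ-flow are all
equivalent. -/
theorem statement8 {X : Type} [UniformSpace X] [CompactSpace X] [T2Space X]
    (h0dim : ∀ x : X, ∀ U ∈ 𝓝 x, ∃ V : Set X, IsClopen V ∧ x ∈ V ∧ V ⊆ U)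
    (f : X ≃ₜ X) :
    List.TFAE
      [ (∀ ε ∈ 𝓤 X, ∀ (m : ℕ) (xs : Fin m → X),
          ∃ n : ℤ, n ≠ 0 ∧ ∀ j : Fin m, (hpow f n (xs j), xs j) ∈ ε),
        (∃ l : Filter ℤ, l.NeBot ∧ l ≤ atTop ∧
          ∀ x : X, Tendsto (fun n : ℤ => hpow f n x) l (𝓝 x)),
        (∃ l : Filter ℤ, l.NeBot ∧ l ≤ atTop ∧
          TendstoUniformly (fun (n : ℤ) (x : X) => hpow f n x) id l),
        (∀ x : X, ∀ ε ∈ 𝓤 X, ∃ U ∈ 𝓝 x, ∀ y ∈ U, ∀ n : ℤ,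
          (hpow f n y, hpow f n x) ∈ ε),
        (∀ x₁ x₂ : X,
          MapClusterPt (x₁, x₂) atTop fun n : ℤ => (hpow f n x₁, hpow f n x₂)),
        (∀ ε ∈ 𝓤 X, ∃ m : ℤ, 1 ≤ m ∧ ∀ (k : ℤ) (x : X), (hpow f (m * k) x, x) ∈ ε) ]
    := by
  have reduce : (∀ (ι : Type) (_ : Finite ι) (P : X → ι), IsLocallyConstant P →
      ∃ m : ℤ, 1 ≤ m ∧ ∀ (k : ℤ) (x : X), P (hpow f (m * k) x) = P x) →
      ∀ ε ∈ 𝓤 X, ∃ m : ℤ, 1 ≤ m ∧ ∀ (k : ℤ) (x : X), (hpow f (m * k) x, x) ∈ ε := by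
    intro h ε hε
    obtain ⟨ι, hι, P, hP, hPε⟩ := S8.exists_partition h0dim ε hε
    obtain ⟨m, hm, hk⟩ := h ι hι P hP
    exact ⟨m, hm, fun k x => hPε _ _ (hk k x)⟩
  tfae_have 3 → 2 := by
    rintro ⟨l, hl, hle, h⟩
    exact ⟨l, hl, hle, fun x => h.tendsto_at x⟩
  tfae_have 2 → 1 := by
    rintro ⟨l, hl, hle, h⟩ ε hε m xs
    have h1 : ∀ᶠ n in l, ∀ j, (hpow f n (xs j), xs j) ∈ ε :=
      eventually_all.2 fun j => (h (xs j)) (UniformSpace.mem_nhds_iff_symm.2 (by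
        refine ⟨SetRel.symmetrize ε, symmetrize_mem_uniformity hε, inferInstance, ?_⟩
        intro y hy
        exact hy.2))
    obtain ⟨n, hn, hn1⟩ := (h1.and (hle (eventually_ge_atTop 1))).exists
    exact ⟨n, by have : (1 : ℤ) ≤ n := hn1; omega, hn⟩
  tfae_have 2 → 5 := by
    rintro ⟨l, hl, hle, h⟩ x y
    exact ((h x).prodMk_nhds (h y)).mapClusterPt.mono hle
  tfae_have 6 → 3 := by
    intro h
    let F : ℤ → UniformFun X X := fun n => UniformFun.ofFun (hpow f n)
    have hc : MapClusterPt (UniformFun.ofFun (id : X → X)) atTop F := by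
      rw [mapClusterPt_iff_frequently]
      intro s hs
      obtain ⟨ε, hε, hεs⟩ := (UniformFun.hasBasis_nhds X X _).mem_iff.1 hs
      obtain ⟨m, hm, hk⟩ := h _ (symm_le_uniformity hε)
      rw [frequently_atTop]
      intro N
      refine ⟨m * |N|, ?_, hεs fun x => hk |N| x⟩
      nlinarith [le_abs_self N, abs_nonneg N]
    obtain ⟨U, hU, hT⟩ := mapClusterPt_iff_ultrafilter.1 hc
    exact ⟨U, inferInstance, hU, UniformFun.tendsto_iff_tendstoUniformly.1 hT⟩
  tfae_have 6 → 4 := by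
    intro h x ε hε
    obtain ⟨δ, hδ, hsymm, hcomp⟩ := comp_comp_symm_mem_uniformity_sets hε
    obtain ⟨m, hm, hk⟩ := h δ hδ
    have h1 : ∀ᶠ y in 𝓝 x, ∀ r : Fin m.toNat, (hpow f r y, hpow f r x) ∈ δ :=
      eventually_all.2 fun r => (S8.hpow_cont f r).continuousAt.eventually
        (by
          filter_upwards [UniformSpace.ball_mem_nhds (hpow f r x) hδ] with y hy
          exact hsymm.symm _ _ hy)
    refine ⟨_, h1, fun y hy n => ?_⟩
    have hr0 := Int.emod_nonneg n (show m ≠ 0 by omega)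
    have hr1 := Int.emod_lt_of_pos n (show 0 < m by omega)
    have hr := hy ⟨(n % m).toNat, by omega⟩
    simp only [Int.toNat_of_nonneg hr0] at hr
    have e : ∀ z, hpow f n z = hpow f (m * (n / m)) (hpow f (n % m) z) := by
      intro z; rw [← S8.hpow_add, Int.mul_ediv_add_emod]
    rw [e, e]
    exact hcomp ⟨_, ⟨_, hk _ _, hr⟩, hsymm.symm _ _ (hk _ _)⟩
  tfae_have 4 → 6 := by
    intro h
    refine reduce ?_
    intro ι _ P hP
    have hE := S8.partition_entourage P hP
    have hw : IsLocallyConstant fun (x : X) (n : ℤ) => P (hpow f n x) := by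
      rw [IsLocallyConstant.iff_eventually_eq]
      intro x
      obtain ⟨U, hU, hy⟩ := h x _ hE
      filter_upwards [hU] with y hyU
      exact funext fun n => hy y hyU n
    obtain ⟨m, hm, hk⟩ := S8.finite_period (f.toEquiv : Equiv.Perm X) _ hw.range_finite (by
      intro x y hxy
      funext n
      have := congrFun hxy (n + 1)
      simp only [S8.hpow_add, S8.hpow_one] at this
      exact this)
    refine ⟨m, hm, fun k x => ?_⟩
    have := congrFun (hk k x) 0
    simp only [S8.hpow_zero] at this
    exact this
  tfae_have 5 → 6 := by
    intro h
    refine reduce ?_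
    intro ι _ P hP
    refine S8.period_of_no_pair f P hP fun x y hxy => ?_
    have hx := (IsLocallyConstant.iff_eventually_eq P).1 hP x
    have hy := (IsLocallyConstant.iff_eventually_eq P).1 hP y
    have hh := (mapClusterPt_iff_frequently.1 (h x y)) _ (prod_mem_nhds hx hy)
    obtain ⟨n, hn, hn1⟩ := (hh.and_eventually (eventually_ge_atTop 1)).exists
    have a : P (hpow f n x) = P x := hn.1
    have b : P (hpow f n y) = P y := hn.2
    rw [← a, ← b, hxy n hn1]
  tfae_have 1 → 6 := by
    intro h
    refine reduce ?_
    intro ι _ P hP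
    by_contra hcon
    have h1 : ¬ ∀ x y : X, (∀ n : ℤ, 1 ≤ n → P (hpow f n x) = P (hpow f n y)) → P x = P y :=
      fun hh => hcon (S8.period_of_no_pair f P hP hh)
    have h2 : ¬ ∀ x y : X,
        (∀ n : ℤ, 1 ≤ n → P (hpow f.symm n x) = P (hpow f.symm n y)) → P x = P y := by
      intro hh
      obtain ⟨m, hm, hk⟩ := S8.period_of_no_pair f.symm P hP hh
      refine hcon ⟨m, hm, fun k x => ?_⟩
      have := hk (-k) x
      rwa [S8.hpow_symm, show -(m * -k) = m * k by ring] at this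
    push Not at h1 h2
    obtain ⟨x, y, hxy, hne⟩ := h1
    obtain ⟨z, w, hzw, hne'⟩ := h2
    obtain ⟨n, hn0, hn⟩ := h _ (S8.partition_entourage P hP) 4 ![x, y, z, w]
    have hx : P (hpow f n x) = P x := hn 0
    have hy : P (hpow f n y) = P y := hn 1
    have hz : P (hpow f n z) = P z := hn 2
    have hw : P (hpow f n w) = P w := hn 3
    rcases lt_or_gt_of_ne hn0 with hlt | hgt
    · have := hzw (-n) (by omega)
      rw [S8.hpow_symm, S8.hpow_symm, neg_neg, hz, hw] at this
      exact hne' this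
    · have := hxy n (by omega)
      rw [hx, hy] at this
      exact hne this
  tfae_finish
end

section
/- Let X be a compact Hausdorff 0-dimensional space and f : X → X a pointwise periodic homeomorphism, i.e. for every x ∈ X there is an integer p ≥ 1 with f^p x = x. Then the ℤ-flow generated by f is regularly almost periodic: for every entourage ε of X there is an integer m ≥ 1 such that (f^{mk}x, x) ∈ ε for all k ∈ ℤ and all x ∈ X. -/
open Filter Topology Uniformity

lemma aux_iter {X : Type} (g : X → X) {x : X} {p q : ℕ} (h : g^[p] x = x) (hd : p ∣ q) :
    g^[q] x = x := by
  have h1 : Function.IsPeriodicPt g p x := h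
  exact h1.trans_dvd hd

lemma aux_window {X : Type} [TopologicalSpace X] [CompactSpace X]
    (f : X → X) (hf : Continuous f)
    (hpp : ∀ x : X, ∃ p : ℕ, 1 ≤ p ∧ f^[p] x = x) (U : Set X) (hU : IsClopen U) :
    ∃ N : ℕ, ∀ x y : X, (∀ i < N, (f^[i+1] x ∈ U ↔ f^[i+1] y ∈ U)) → (x ∈ U ↔ y ∈ U) := by
  by_contra! hcon
  have hE : IsClopen {z : X × X | (z.1 ∈ U ↔ z.2 ∈ U)} := by
    have : {z : X × X | (z.1 ∈ U ↔ z.2 ∈ U)} = (U ×ˢ U) ∪ (Uᶜ ×ˢ Uᶜ) := by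
      ext z; simp; tauto
    rw [this]
    exact (hU.prod hU).union (hU.compl.prod hU.compl)
  let A : ℕ → Set (X × X) := fun N =>
    {z | ¬ (z.1 ∈ U ↔ z.2 ∈ U)} ∩ {z | ∀ i < N, (f^[i+1] z.1 ∈ U ↔ f^[i+1] z.2 ∈ U)}
  have hAc : ∀ N, IsClosed (A N) := by
    intro N
    apply IsClosed.inter
    · exact hE.compl.1
    · simp only [Set.ofPred_forall]
      refine isClosed_iInter fun i => isClosed_iInter fun _ => ?_
      exact hE.1.preimage (((hf.iterate (i+1))).prodMap (hf.iterate (i+1)))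
  have hne : (⋂ N, A N).Nonempty := by
    apply IsCompact.nonempty_iInter_of_sequence_nonempty_isCompact_isClosed
    · rintro N z ⟨h1, h2⟩
      exact ⟨h1, fun i hi => h2 i (by omega)⟩
    · intro N
      obtain ⟨x, y, h1, h2⟩ := hcon N
      exact ⟨(x, y), by simp only [Set.mem_ofPred_eq]; tauto, h1⟩
    · exact (hAc 0).isCompact
    · exact hAc
  obtain ⟨⟨x, y⟩, hz⟩ := hne
  rw [Set.mem_iInter] at hz
  obtain ⟨p, hp, hpx⟩ := hpp x
  obtain ⟨q, hq, hqy⟩ := hpp y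
  have hpq : 1 ≤ p * q := Nat.mul_pos hp hq
  have h := (hz (p * q)).2 (p * q - 1) (by omega)
  rw [Nat.sub_add_cancel hpq] at h
  simp only [aux_iter f hpx (Dvd.intro q rfl), aux_iter f hqy (Dvd.intro_left p rfl)] at h
  exact (hz 0).1 h

lemma aux_clopen {X : Type} [TopologicalSpace X] [CompactSpace X]
    (f : X → X) (hf : Continuous f)
    (hpp : ∀ x : X, ∃ p : ℕ, 1 ≤ p ∧ f^[p] x = x) (U : Set X) (hU : IsClopen U) :
    ∃ P : ℕ, 1 ≤ P ∧ ∀ x, x ∈ U ↔ f^[P] x ∈ U := by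
  classical
  obtain ⟨N, hN⟩ := aux_window f hf hpp U hU
  let w : X → Fin N → Prop := fun x i => f^[(i : ℕ)+1] x ∈ U
  have hw : ∀ x y, w x = w y → ∀ i < N, (f^[i+1] x ∈ U ↔ f^[i+1] y ∈ U) := by
    intro x y h i hi
    exact iff_of_eq (congrFun h ⟨i, hi⟩)
  have hwU : ∀ x y, w x = w y → (x ∈ U ↔ y ∈ U) := fun x y h => hN x y (hw x y h)
  have hstep : ∀ x y, w (f x) = w (f y) → w x = w y := by
    intro x y h
    funext ⟨i, hi⟩
    apply propext
    change f^[i+1] x ∈ U ↔ f^[i+1] y ∈ U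
    cases i with
    | zero => exact hwU _ _ h
    | succ j => exact hw _ _ h j (by omega)
  have hsteps : ∀ n x y, w (f^[n] x) = w (f^[n] y) → w x = w y := by
    intro n
    induction n with
    | zero => intro x y h; exact h
    | succ n ih => intro x y h; exact hstep x y (ih _ _ h)
  have hrep : ∀ v : Fin N → Prop, ∃ p : ℕ, 1 ≤ p ∧ ∀ x, w x = v → ∃ y, w y = v ∧ f^[p] y = y := by
    intro v
    by_cases hv : ∃ y, w y = v
    · obtain ⟨y, hy⟩ := hv
      obtain ⟨p, hp, hpy⟩ := hpp y
      exact ⟨p, hp, fun _ _ => ⟨y, hy, hpy⟩⟩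
    · exact ⟨1, le_rfl, fun x hx => absurd ⟨x, hx⟩ hv⟩
  choose p hp hrep using hrep
  refine ⟨∏ v, p v, Nat.succ_le_of_lt (Finset.prod_pos fun v _ => hp v), fun x => ?_⟩
  obtain ⟨y, hy, hpy⟩ := hrep _ (f^[∏ v, p v] x) rfl
  have hy2 := aux_iter f hpy (Finset.dvd_prod_of_mem p (Finset.mem_univ _))
  have h3 : w x = w y := by
    apply hsteps (∏ v, p v)
    rw [hy2, hy]
  exact hwU _ _ (h3.trans hy)

lemma aux_zpow {X : Type} (σ : Equiv.Perm X) (U : Set X) (h : ∀ x, x ∈ U ↔ σ x ∈ U) (k : ℤ) :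
    ∀ x, x ∈ U ↔ (σ ^ k) x ∈ U := by
  induction k using Int.induction_on with
  | zero => intro x; simp
  | succ n ih => intro x; rw [zpow_add_one, Equiv.Perm.mul_apply, ← ih, ← h]
  | pred n ih =>
    intro x
    rw [zpow_sub_one, Equiv.Perm.mul_apply, ← ih, h (σ⁻¹ x), ← Equiv.Perm.mul_apply, mul_inv_cancel,
      Equiv.Perm.one_apply]

/-- a pointwise periodic homeomorphism of a compact Hausdorff
0-dimensional space generates a regularly almost periodic ℤ-flow. -/
theorem statement9 {X : Type} [UniformSpace X] [CompactSpace X] [T2Space X]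
    (h0dim : ∀ x : X, ∀ U ∈ 𝓝 x, ∃ V : Set X, IsClopen V ∧ x ∈ V ∧ V ⊆ U)
    (f : X ≃ₜ X)
    (hpp : ∀ x : X, ∃ p : ℕ, 1 ≤ p ∧ hpow f (p : ℤ) x = x) :
    ∀ ε ∈ 𝓤 X, ∃ m : ℤ, 1 ≤ m ∧ ∀ (k : ℤ) (x : X), (hpow f (m * k) x, x) ∈ ε := by
  intro ε hε
  have hit : ∀ (n : ℕ) (x : X), ((f.toEquiv : Equiv.Perm X) ^ n) x = f^[n] x := by
    intro n x
    rw [Equiv.Perm.coe_pow]; rfl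
  have hpp' : ∀ x : X, ∃ p : ℕ, 1 ≤ p ∧ f^[p] x = x := by
    intro x
    obtain ⟨p, hp, h⟩ := hpp x
    refine ⟨p, hp, ?_⟩
    rw [← hit]
    simpa [hpow] using h
  obtain ⟨t, ht, hsymm, htε⟩ := comp_symm_mem_uniformity_sets hε
  choose V hV hxV hVt using fun x : X => h0dim x _ (UniformSpace.ball_mem_nhds x ht)
  choose P hP hPV using fun x : X => aux_clopen f f.continuous hpp' (V x) (hV x)
  obtain ⟨s, hs⟩ := isCompact_univ.elim_finite_subcover V (fun x => (hV x).isOpen)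
    (fun x _ => Set.mem_iUnion.2 ⟨x, hxV x⟩)
  refine ⟨((∏ v ∈ s, P v : ℕ) : ℤ), by exact_mod_cast Nat.succ_le_of_lt (Finset.prod_pos fun v _ => hP v), ?_⟩
  intro k x
  obtain ⟨v, hv, hxv⟩ := Set.mem_iUnion₂.1 (hs (Set.mem_univ x))
  obtain ⟨c, hc⟩ := Finset.dvd_prod_of_mem P hv
  have key := (aux_zpow ((f.toEquiv : Equiv.Perm X) ^ (P v)) (V v)
    (fun x => by rw [hit]; exact hPV v x) (c * k) x).1 hxv
  have e : hpow f (((∏ v ∈ s, P v : ℕ) : ℤ) * k) x =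
      (((f.toEquiv : Equiv.Perm X) ^ (P v)) ^ ((c : ℤ) * k)) x := by
    rw [hc, ← zpow_natCast, ← zpow_mul]
    unfold hpow
    push_cast
    rw [mul_assoc]
  rw [← e] at key
  apply htε
  have h1 := hVt v key
  have h2 := hVt v hxv
  exact ⟨v, hsymm.symm _ _ h1, h2⟩
end

section
/- Let X be a locally compact Hausdorff uniform space and f : X → X a homeomorphism such that the closure of {fⁿx | n ∈ ℤ} is compact for every x ∈ X. Let x ∈ X and let κ ≥ 1 be an integer. If x is a cluster point of the sequence (fⁿx) as n → +∞ (i.e. there is a net i_n in ℕ with i_n → +∞ and f^{i_n}x → x), then x is a cluster point of the sequence (f^{κn}x) as n → +∞, i.e. there is a net k_n ∈ κℕ with k_n → +∞ and f^{k_n}x → x. -/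
open Filter Topology

theorem hpow_natCast_aux {X : Type} [TopologicalSpace X] (f : X ≃ₜ X) (n : ℕ) (x : X) :
    hpow f (n : ℤ) x = f^[n] x := by
  unfold hpow
  rw [zpow_natCast, ← Equiv.Perm.iterate_eq_pow]
  rfl

/-- Inductive construction of times all of whose differences are return times. -/
theorem return_times_aux {X : Type} [TopologicalSpace X] (f : X → X) (hf : Continuous f) (x : X)
    (U : Set X) (hU : U ∈ 𝓝 x) (N : ℕ)
    (h : ∀ V ∈ 𝓝 x, ∃ n, N ≤ n ∧ f^[n] x ∈ V) (m : ℕ) :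
    ∃ s : ℕ → ℕ, ∀ i j, i < j → j ≤ m → s i + N ≤ s j ∧ f^[s j - s i] x ∈ interior U := by
  induction m with
  | zero => exact ⟨id, fun i j h1 h2 => by omega⟩
  | succ m ih =>
    obtain ⟨s, hs⟩ := ih
    have hV : (⋂ i ∈ Finset.range (m + 1), f^[s m - s i] ⁻¹' interior U) ∈ 𝓝 x := by
      rw [Filter.biInter_finset_mem]
      intro i hi
      have hi' : i ≤ m := by simpa [Nat.lt_succ_iff] using hi
      refine (isOpen_interior.preimage (hf.iterate _)).mem_nhds ?_
      rcases hi'.lt_or_eq with h1 | rfl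
      · exact (hs i m h1 le_rfl).2
      · simpa using mem_interior_iff_mem_nhds.2 hU
    obtain ⟨n, hn, hnV⟩ := h _ hV
    refine ⟨fun j => if j = m + 1 then s m + n else s j, fun i j hij hj => ?_⟩
    have hi : i ≠ m + 1 := by omega
    simp only [hi, if_false]
    by_cases hjm : j = m + 1
    · simp only [hjm, if_true]
      have him : i ≤ m := by omega
      have hle : s i ≤ s m := by
        rcases him.lt_or_eq with h1 | rfl
        · have := (hs i m h1 le_rfl).1
          omega
        · exact le_rfl
      refine ⟨by omega, ?_⟩
      have h2 := Set.mem_iInter₂.1 hnV i (by simp; omega)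
      rw [show s m + n - s i = (s m - s i) + n by omega, Function.iterate_add_apply]
      exact h2
    · simp only [hjm, if_false]
      exact hs i j hij (by omega)

/-- for a homeomorphism of a locally compact Hausdorff uniform space
with compact orbit closures, if `x` is a cluster point of `(fⁿ x)` as `n → +∞`, then
for every `κ ≥ 1`, `x` is a cluster point of `(f^{κ n} x)` as `n → +∞`. -/
theorem statement10 {X : Type} [UniformSpace X] [T2Space X] [LocallyCompactSpace X]
    (f : X ≃ₜ X)
    (hLag : ∀ x : X, IsCompact (closure (Set.range fun n : ℤ => hpow f n x)))
    (x : X) (κ : ℕ) (hκ : 1 ≤ κ)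
    (hrec : MapClusterPt x atTop fun n : ℕ => hpow f (n : ℤ) x) :
    MapClusterPt x atTop fun n : ℕ => hpow f ((κ * n : ℕ) : ℤ) x := by
  simp only [hpow_natCast_aux] at hrec ⊢
  rw [mapClusterPt_iff_frequently] at hrec ⊢
  intro U hU
  rw [Filter.frequently_atTop]
  intro N
  obtain ⟨s, hs⟩ := return_times_aux f f.continuous x U hU (κ * N)
    (fun V hV => by
      obtain ⟨n, h1, h2⟩ := Filter.frequently_atTop.1 (hrec V hV) (κ * N)
      exact ⟨n, h1, h2⟩) κ
  have key : ∃ i j, i < j ∧ j ≤ κ ∧ s i % κ = s j % κ := by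
    obtain ⟨i, hi, j, hj, hne, he⟩ := Finset.exists_ne_map_eq_of_card_lt_of_maps_to
      (s := Finset.range (κ + 1)) (t := Finset.range κ) (f := fun i => s i % κ) (by simp)
      (fun i _ => by simpa using Nat.mod_lt _ hκ)
    simp only [Finset.mem_range] at hi hj
    rcases lt_or_gt_of_ne hne with h | h
    · exact ⟨i, j, h, by omega, he⟩
    · exact ⟨j, i, h, by omega, he.symm⟩
  obtain ⟨i, j, hij, hj, he⟩ := key
  obtain ⟨h1, h2⟩ := hs i j hij hj
  obtain ⟨t, ht⟩ := (Nat.modEq_iff_dvd' (show s i ≤ s j by omega)).1 he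
  refine ⟨t, ?_, ?_⟩
  · exact Nat.le_of_mul_le_mul_left (show κ * N ≤ κ * t by omega) hκ
  · rw [← ht]
    exact interior_subset h2
end

section
/- Let X be a locally compact Hausdorff uniform space and f : X → X a homeomorphism such that the closure of {fⁿx | n ∈ ℤ} is compact for every x ∈ X, and let x ∈ X. Then the following are pairwise equivalent: (1) x is Poisson stable: x is a cluster point of (fⁿx) both as n → +∞ and as n → −∞; (2) for every nonempty subsemigroup S of (ℤ,+) and every neighborhood U of x there is s ∈ S with f^s x ∈ U; (3) for every nonempty discretely thick subsemigroup S of (ℤ,+) and every neighborhood U of x there is s ∈ S with f^s x ∈ U. -/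
open Filter Topology

theorem hpow_add_apply {X : Type} [TopologicalSpace X] (f : X ≃ₜ X) (m n : ℤ) (x : X) :
    hpow f (m + n) x = hpow f m (hpow f n x) := by
  simp [hpow, zpow_add]

theorem hpow_continuous {X : Type} [TopologicalSpace X] (f : X ≃ₜ X) (n : ℤ) :
    Continuous (hpow f n) := by
  have hnat : ∀ k : ℕ, Continuous (hpow f k) := by
    intro k
    induction k with
    | zero => simpa [hpow] using continuous_id
    | succ k ih =>
      have : hpow f ((k + 1 : ℕ) : ℤ) = hpow f k ∘ f := by
        funext y
        rw [Nat.cast_add, hpow_add_apply]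
        simp [hpow]
      rw [this]
      exact ih.comp f.continuous
  have hneg : ∀ k : ℕ, Continuous (hpow f (-(k : ℤ))) := by
    intro k
    induction k with
    | zero => simpa [hpow] using continuous_id
    | succ k ih =>
      have : hpow f (-((k + 1 : ℕ) : ℤ)) = hpow f (-(k : ℤ)) ∘ f.symm := by
        funext y
        rw [Nat.cast_add, neg_add, hpow_add_apply]
        simp only [hpow, Nat.cast_one, zpow_neg_one, Function.comp]
        rfl
      rw [this]
      exact ih.comp f.symm.continuous
  obtain ⟨k, rfl | rfl⟩ := n.eq_nat_or_neg
  · exact hnat k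
  · exact hneg k

/-- Recurrence along an additively closed set of times implies recurrence along the multiples
of `a` in this set. -/
theorem exists_dvd_return {X : Type} [TopologicalSpace X] (f : X ≃ₜ X) (x : X) (N : Set ℤ)
    (hN : ∀ p ∈ N, ∀ q ∈ N, p + q ∈ N)
    (hrec : ∀ V ∈ 𝓝 x, ∃ n ∈ N, hpow f n x ∈ V) (a : ℤ) (ha : a ≠ 0) :
    ∀ U ∈ 𝓝 x, ∃ n ∈ N, a ∣ n ∧ hpow f n x ∈ U := by
  have : NeZero a.natAbs := ⟨Int.natAbs_ne_zero.2 ha⟩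
  let R : ZMod a.natAbs → Prop := fun r =>
    ∀ U ∈ 𝓝 x, ∃ n ∈ N, ((n : ℤ) : ZMod a.natAbs) = r ∧ hpow f n x ∈ U
  have hadd : ∀ r s, R r → R s → R (r + s) := by
    intro r s hr hs U hU
    obtain ⟨n, hn, hnr, hnU⟩ := hr _ (interior_mem_nhds.2 hU)
    obtain ⟨m, hm, hms, hmU⟩ := hs _ ((hpow_continuous f n).continuousAt.preimage_mem_nhds
      (isOpen_interior.mem_nhds hnU))
    refine ⟨n + m, hN n hn m hm, by push_cast; rw [hnr, hms], ?_⟩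
    rw [hpow_add_apply]
    exact interior_subset hmU
  have hex : ∃ r, R r := by
    by_contra hcon
    have hcon : ∀ r, ∃ U, U ∈ 𝓝 x ∧ ¬ ∃ n ∈ N, ((n : ℤ) : ZMod a.natAbs) = r ∧ hpow f n x ∈ U := by
      intro r
      by_contra h
      refine hcon ⟨r, fun U hU => ?_⟩
      by_contra h2
      exact h ⟨U, hU, h2⟩
    choose U hU hbad using hcon
    obtain ⟨n, hn, hnU⟩ := hrec (⋂ r, U r) (iInter_mem.2 hU)
    refine hbad (n : ZMod a.natAbs) ⟨n, hn, rfl, Set.mem_iInter.1 hnU _⟩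
  obtain ⟨r, hr⟩ := hex
  have hmul : ∀ k : ℕ, R (((k + 1 : ℕ) : ZMod a.natAbs) * r) := by
    intro k
    induction k with
    | zero => simpa using hr
    | succ k ih =>
      have h := hadd _ _ ih hr
      convert h using 1
      push_cast
      ring
  have h0 : R 0 := by
    have h := hmul (a.natAbs - 1)
    rw [Nat.sub_add_cancel (Nat.one_le_iff_ne_zero.2 (NeZero.ne _))] at h
    simpa only [ZMod.natCast_self, zero_mul] using h
  intro U hU
  obtain ⟨n, hn, hn0, hnU⟩ := h0 U hU
  exact ⟨n, hn, Int.natAbs_dvd.1 ((ZMod.intCast_zmod_eq_zero_iff_dvd n _).1 hn0), hnU⟩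

/-- for a homeomorphism of a locally compact Hausdorff uniform space
with compact orbit closures, Poisson stability of `x` is equivalent to hitting every
neighborhood of `x` along every nonempty subsemigroup of `ℤ`, and to hitting it
along every nonempty discretely thick subsemigroup of `ℤ`. -/
theorem statement11 {X : Type} [UniformSpace X] [T2Space X] [LocallyCompactSpace X]
    (f : X ≃ₜ X)
    (hLag : ∀ x : X, IsCompact (closure (Set.range fun n : ℤ => hpow f n x)))
    (x : X) :
    List.TFAE
      [ (MapClusterPt x atTop (fun n : ℤ => hpow f n x) ∧
          MapClusterPt x atBot fun n : ℤ => hpow f n x),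
        (∀ S : Set ℤ, S.Nonempty → (∀ a ∈ S, ∀ b ∈ S, a + b ∈ S) →
          ∀ U ∈ 𝓝 x, ∃ s ∈ S, hpow f s x ∈ U),
        (∀ S : Set ℤ, S.Nonempty → (∀ a ∈ S, ∀ b ∈ S, a + b ∈ S) →
          (∀ K : Finset ℤ, ∃ t ∈ S, ∀ k ∈ K, k + t ∈ S) →
          ∀ U ∈ 𝓝 x, ∃ s ∈ S, hpow f s x ∈ U) ] := by
  tfae_have 1 → 2 := by
    rintro ⟨hp, hn⟩ S ⟨a, ha⟩ hS U hU
    have hmul : ∀ m : ℕ, a * ((m : ℤ) + 1) ∈ S := by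
      intro m
      induction m with
      | zero => simpa using ha
      | succ k ih =>
        have := hS _ ih _ ha
        convert this using 1
        push_cast
        ring
    have hmul' : ∀ m : ℤ, 0 < m → a * m ∈ S := by
      intro m hm
      have := hmul (m - 1).toNat
      rwa [Int.toNat_of_nonneg (by omega), sub_add_cancel] at this
    rcases lt_trichotomy a 0 with h | h | h
    · obtain ⟨n, hn0, ⟨m, rfl⟩, hnU⟩ := exists_dvd_return f x (Set.Iio 0)
        (fun p hp q hq => by simp only [Set.mem_Iio] at *; omega)
        (fun V hV => by
          obtain ⟨n, h1, h2⟩ := ((mapClusterPt_iff_frequently.1 hn V hV).and_eventually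
            (eventually_lt_atBot 0)).exists
          exact ⟨n, h2, h1⟩) a h.ne U hU
      refine ⟨_, hmul' m ?_, hnU⟩
      simp only [Set.mem_Iio] at hn0
      exact pos_of_mul_neg_right hn0 h.le
    · exact ⟨a, ha, by subst h; simpa [hpow] using mem_of_mem_nhds hU⟩
    · obtain ⟨n, hn0, ⟨m, rfl⟩, hnU⟩ := exists_dvd_return f x (Set.Ioi 0)
        (fun p hp q hq => by simp only [Set.mem_Ioi] at *; omega)
        (fun V hV => by
          obtain ⟨n, h1, h2⟩ := ((mapClusterPt_iff_frequently.1 hp V hV).and_eventually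
            (eventually_gt_atTop 0)).exists
          exact ⟨n, h2, h1⟩) a h.ne' U hU
      refine ⟨_, hmul' m ?_, hnU⟩
      simp only [Set.mem_Ioi] at hn0
      exact pos_of_mul_pos_right hn0 h.le
  tfae_have 2 → 3 := fun h S h1 h2 _ => h S h1 h2
  tfae_have 3 → 1 := by
    intro h
    constructor
    · rw [mapClusterPt_iff_frequently]
      intro U hU
      rw [frequently_atTop]
      intro N
      obtain ⟨s, hs, hsU⟩ := h (Set.Ici (max N 0)) Set.nonempty_Ici
        (fun a ha b hb => by simp only [Set.mem_Ici] at *; omega)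
        (fun K => by
          obtain ⟨B, hB⟩ := K.bddBelow
          refine ⟨max N 0 + |B|, by simp, fun k hk => ?_⟩
          have h1 := hB hk
          have h2 := neg_abs_le B
          simp only [Set.mem_Ici]
          omega) U hU
      exact ⟨s, (le_max_left _ _).trans hs, hsU⟩
    · rw [mapClusterPt_iff_frequently]
      intro U hU
      rw [frequently_atBot]
      intro N
      obtain ⟨s, hs, hsU⟩ := h (Set.Iic (min N 0)) Set.nonempty_Iic
        (fun a ha b hb => by simp only [Set.mem_Iic] at *; omega)
        (fun K => by
          obtain ⟨B, hB⟩ := K.bddAbove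
          refine ⟨min N 0 - |B|, by simp, fun k hk => ?_⟩
          have h1 := hB hk
          have h2 := le_abs_self B
          simp only [Set.mem_Iic]
          omega) U hU
      exact ⟨s, le_trans hs (min_le_left _ _), hsU⟩
  tfae_finish
end

section
/- Let G be a finitely generated discrete group acting by homeomorphisms on a compact Hausdorff 0-dimensional space X. If every point of X is regularly almost periodic, i.e. for every x ∈ X and every neighborhood U of x there is a finite-index normal subgroup H of G with H•x ⊆ U, then (G,X) is uniformly regularly almost periodic: for every entourage ε of X there is a finite-index normal subgroup A of G such that (a•x, x) ∈ ε for all a ∈ A and all x ∈ X. -/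
open Filter Topology Uniformity

section Helpers

open Pointwise

/-- balls exhaust the group -/
theorem exists_balls (G : Type) [Group G] [Group.FG G] :
    ∃ K : Set G, K.Finite ∧ (1 : G) ∈ K ∧ ∀ g : G, ∃ n : ℕ, g ∈ K ^ n := by
  obtain ⟨S, hS⟩ := (Group.fg_iff_monoid_fg.1 (inferInstance : Group.FG G)).fg_top
  refine ⟨insert 1 (S : Set G), S.finite_toSet.insert 1, Set.mem_insert _ _, fun g => ?_⟩
  have hg : g ∈ Submonoid.closure (S : Set G) := by rw [hS]; trivial
  induction hg using Submonoid.closure_induction with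
  | mem x hx => exact ⟨1, by rw [pow_one]; exact Set.mem_insert_of_mem _ hx⟩
  | one => exact ⟨0, by simp⟩
  | mul x y _ _ hx hy =>
    obtain ⟨n, hn⟩ := hx
    obtain ⟨m, hm⟩ := hy
    exact ⟨n + m, by rw [pow_add]; exact Set.mul_mem_mul hn hm⟩

theorem finite_pow_set {G : Type} [Group G] {K : Set G} (hK : K.Finite) (n : ℕ) :
    (K ^ n).Finite := by
  induction n with
  | zero => simp
  | succ n ih => rw [pow_succ]; exact ih.mul hK

theorem shorten {G : Type} [Group G] {K : Set G} (hK : K.Finite) (h1 : (1 : G) ∈ K)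
    (hall : ∀ g : G, ∃ n : ℕ, g ∈ K ^ n) (H : Subgroup G) (hH : H.FiniteIndex) :
    ∃ F : Set G, F.Finite ∧ F ⊆ H ∧ ∃ C : ℕ, ∀ n, C ≤ n → ∀ g ∈ K ^ (n + 1),
      ∃ w ∈ F, w * g ∈ K ^ n := by
  have hfin : Finite (G ⧸ H) := inferInstance
  choose len hlen using hall
  -- representative of the coset `H u` is `(out (u⁻¹ H))⁻¹`
  let rep : G ⧸ H → G := fun q => (Quotient.out q)⁻¹
  obtain ⟨C, hC⟩ := (Set.finite_range (fun q => len (rep q))).bddAbove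
  have hrep : ∀ q, rep q ∈ K ^ C := fun q =>
    Set.pow_subset_pow_right h1 (hC ⟨q, rfl⟩) (hlen (rep q))
  refine ⟨(K ^ C * (K ^ (C + 1))⁻¹) ∩ H, ?_, Set.inter_subset_right, C, ?_⟩
  · exact ((finite_pow_set hK C).mul (finite_pow_set hK (C + 1)).inv).inter_of_left _
  · intro n hn g hg
    have e : n + 1 = (C + 1) + (n - C) := by omega
    rw [e, pow_add] at hg
    obtain ⟨u, hu, v, hv, rfl⟩ := hg
    refine ⟨rep (u⁻¹ : G) * u⁻¹, ⟨Set.mul_mem_mul (hrep _) (Set.inv_mem_inv.2 hu), ?_⟩, ?_⟩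
    · have := QuotientGroup.eq.1 (QuotientGroup.out_eq' ((u⁻¹ : G) : G ⧸ H))
      exact this
    · have e2 : n = C + (n - C) := by omega
      rw [e2, pow_add]
      refine ⟨rep (u⁻¹ : G), hrep _, v, by simpa using hv, by simp⟩

theorem core_open {G Y : Type} [Group G] [Group.FG G] [TopologicalSpace Y] [CompactSpace Y]
    [MulAction G Y] [ContinuousConstSMul G Y]
    (hrap : ∀ x : Y, ∀ U ∈ 𝓝 x, ∃ H : Subgroup G, H.FiniteIndex ∧ ∀ h ∈ H, h • x ∈ U)
    (V : Set Y) (hV : IsClopen V) : IsOpen {y : Y | ∀ g : G, g • y ∈ V} := by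
  obtain ⟨K, hK, h1, hall⟩ := exists_balls G
  have hloc : ∀ z ∈ Vᶜ, ∃ N ∈ 𝓝 z, ∃ C : ℕ, ∀ n, C ≤ n → ∀ g ∈ K ^ (n + 1), ∀ y ∈ N,
      ∃ w : G, w * g ∈ K ^ n ∧ w • y ∉ V := by
    intro z hz
    obtain ⟨H, hH, hHz⟩ := hrap z Vᶜ (hV.compl.isOpen.mem_nhds hz)
    obtain ⟨F, hF, hFH, C, hC⟩ := shorten hK h1 hall H hH
    refine ⟨⋂ w ∈ F, (fun y => w • y) ⁻¹' Vᶜ, ?_, C, ?_⟩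
    · refine (Filter.biInter_mem hF).2 fun w hw => ?_
      exact (hV.compl.isOpen.preimage (continuous_const_smul w)).mem_nhds (hHz w (hFH hw))
    · intro n hn g hg y hy
      obtain ⟨w, hw, hwg⟩ := hC n hn g hg
      exact ⟨w, hwg, Set.mem_iInter₂.1 hy w hw⟩
  choose! N hN C hC using hloc
  obtain ⟨t, ht, hcov⟩ := hV.compl.isClosed.isCompact.elim_nhds_subcover N hN
  let r := t.sup C
  have hdown : ∀ k, ∀ y : Y, (∃ g ∈ K ^ (r + k), g • y ∉ V) → ∃ g ∈ K ^ r, g • y ∉ V := by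
    intro k
    induction k with
    | zero => intro y h; exact h
    | succ k ih =>
      rintro y ⟨g, hg, hgy⟩
      obtain ⟨z, hz, hzN⟩ := Set.mem_iUnion₂.1 (hcov hgy)
      have hle : C z ≤ r := Finset.le_sup hz
      obtain ⟨w, hw, hwy⟩ := hC z (ht z hz) (r + k) (by omega) g hg _ hzN
      exact ih y ⟨w * g, hw, by rwa [mul_smul]⟩
  have heq : {y : Y | ∀ g : G, g • y ∈ V} = ⋂ g ∈ K ^ r, (fun y => g • y) ⁻¹' V := by
    ext y
    simp only [Set.mem_setOf_eq, Set.mem_iInter, Set.mem_preimage]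
    refine ⟨fun h g _ => h g, fun h g => ?_⟩
    by_contra hg
    obtain ⟨n, hn⟩ := hall g
    obtain ⟨g', hg', hy⟩ := hdown n y
      ⟨g, Set.pow_subset_pow_right h1 (Nat.le_add_left n r) hn, hg⟩
    exact hy (h g' hg')
  rw [heq]
  exact (finite_pow_set hK r).isOpen_biInter fun g _ =>
    hV.isOpen.preimage (continuous_const_smul g)

end Helpers

/-- a pointwise regularly almost periodic action of a finitely
generated discrete group on a compact Hausdorff 0-dimensional space is uniformly
regularly almost periodic. -/
theorem statement12 {G X : Type} [Group G] [Group.FG G]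
    [UniformSpace X] [CompactSpace X] [T2Space X]
    [MulAction G X] [ContinuousConstSMul G X]
    (h0dim : ∀ x : X, ∀ U ∈ 𝓝 x, ∃ V : Set X, IsClopen V ∧ x ∈ V ∧ V ⊆ U)
    (hrap : ∀ x : X, ∀ U ∈ 𝓝 x, ∃ H : Subgroup G, H.Normal ∧ H.FiniteIndex ∧
      ∀ h ∈ H, h • x ∈ U) :
    ∀ ε ∈ 𝓤 X, ∃ A : Subgroup G, A.Normal ∧ A.FiniteIndex ∧
      ∀ a ∈ A, ∀ x : X, (a • x, x) ∈ ε := by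
  intro ε hε
  obtain ⟨E1, hE1, hE1s, hE1c⟩ := comp_symm_mem_uniformity_sets hε
  obtain ⟨E, hE, hEs, hEc⟩ := comp_symm_mem_uniformity_sets hE1
  have hEE1 : E ⊆ E1 := fun p hp => hEc ⟨p.1, refl_mem_uniformity hE, hp⟩
  have hcl : ∀ x : X, ∃ D : Set X, IsClopen D ∧ x ∈ D ∧ D ×ˢ D ⊆ E := by
    intro x
    have : E ∈ 𝓝 (x, x) := nhds_le_uniformity x hE
    rw [nhds_prod_eq, Filter.mem_prod_same_iff] at this
    obtain ⟨U, hU, hUE⟩ := this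
    obtain ⟨D, hD, hx, hDU⟩ := h0dim x U hU
    exact ⟨D, hD, hx, (Set.prod_mono hDU hDU).trans hUE⟩
  choose D hD hxD hDE using hcl
  obtain ⟨t, ht⟩ := CompactSpace.elim_nhds_subcover D fun x => (hD x).isOpen.mem_nhds (hxD x)
  let V : Set (X × X) := ⋃ i ∈ t, D i ×ˢ D i
  have hVc : IsClopen V := t.finite_toSet.isClopen_biUnion fun i _ => (hD i).prod (hD i)
  have hVE : V ⊆ E := Set.iUnion₂_subset fun i _ => hDE i
  have hdiag : ∀ x, (x, x) ∈ V := by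
    intro x
    have hx : x ∈ ⋃ i ∈ t, D i := by rw [ht]; trivial
    obtain ⟨i, hi, hxi⟩ := Set.mem_iUnion₂.1 hx
    exact Set.mem_iUnion₂.2 ⟨i, hi, hxi, hxi⟩
  have hrap2 : ∀ p : X × X, ∀ U ∈ 𝓝 p, ∃ H : Subgroup G, H.FiniteIndex ∧ ∀ h ∈ H, h • p ∈ U := by
    rintro ⟨x, y⟩ U hU
    rw [nhds_prod_eq, Filter.mem_prod_iff] at hU
    obtain ⟨U1, hU1, U2, hU2, hUU⟩ := hU
    obtain ⟨H1, -, hf1, hh1⟩ := hrap x U1 hU1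
    obtain ⟨H2, -, hf2, hh2⟩ := hrap y U2 hU2
    exact ⟨H1 ⊓ H2, inferInstance, fun h hh => hUU ⟨hh1 h hh.1, hh2 h hh.2⟩⟩
  have hopen := core_open hrap2 V hVc
  set W : Set (X × X) := {p | ∀ g : G, g • p ∈ V} with hW
  have hWd : ∀ x, (x, x) ∈ W := fun x g => hdiag (g • x)
  -- finitely many `W`-balls cover
  obtain ⟨s, hs⟩ := CompactSpace.elim_nhds_subcover (fun x => {y : X | (y, x) ∈ W}) fun x =>
    (hopen.preimage (by fun_prop : Continuous fun y : X => (y, x))).mem_nhds (hWd x)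
  choose H hHn hHf hH using fun x : X => hrap x {y | (y, x) ∈ E} (mem_nhds_right x hE)
  refine ⟨⨅ i : s, H i, Subgroup.normal_iInf_normal fun i => hHn i,
    Subgroup.finiteIndex_iInf fun i => hHf i, ?_⟩
  intro a ha x
  have hx : x ∈ ⋃ i ∈ s, {y : X | (y, i) ∈ W} := by rw [hs]; trivial
  obtain ⟨i, hi, hxi⟩ := Set.mem_iUnion₂.1 hx
  have h1 : (a • x, a • i) ∈ E := hVE (hxi a)
  have h2 : (a • i, i) ∈ E := hH i a ((Subgroup.mem_iInf.1 ha) ⟨i, hi⟩)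
  have h3 : (x, i) ∈ E := hVE (by simpa using hxi 1)
  have h4 : (i, x) ∈ E := hEs.symm _ _ h3
  exact hE1c ⟨i, hEc ⟨a • i, h1, h2⟩, hEE1 h4⟩
end

section
/- Let G be a finitely generated discrete group acting by homeomorphisms on a locally compact Hausdorff space X such that the closure of every orbit G•x is compact. Let U ⊆ X be a compact open subset all of whose points are almost periodic. Then there is a finite set K ⊆ G with G•U = K•U. -/
open Pointwise Filter Topology

/-- for a finitely generated discrete group acting on a locally compact
Hausdorff space with compact orbit closures, if `U` is a compact open set consisting
of almost periodic points, then `G • U = K • U` for some finite `K ⊆ G`. -/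
theorem statement13 {G X : Type} [Group G] [Group.FG G]
    [TopologicalSpace X] [T2Space X] [LocallyCompactSpace X]
    [MulAction G X] [ContinuousConstSMul G X]
    (hLag : ∀ x : X, IsCompact (closure (MulAction.orbit G x)))
    (U : Set X) (hUc : IsCompact U) (hUo : IsOpen U)
    (hap : ∀ x ∈ U, ∀ V ∈ 𝓝 x, ∃ F : Finset G, ∀ g : G, ∃ f ∈ F, (f * g) • x ∈ V) :
    ∃ K : Finset G, (⋃ g : G, g • U) = ⋃ k ∈ K, k • U := by
  classical
  obtain ⟨S, hS, hSf⟩ := Group.fg_iff.1 (inferInstance : Group.FG G)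
  obtain ⟨T, hTf, hT1, hTi, hTg⟩ : ∃ T : Set G, T.Finite ∧ (1 : G) ∈ T ∧ T⁻¹ = T ∧
      ∀ g : G, ∃ n : ℕ, g ∈ T ^ n := by
    have hTi : (S ∪ S⁻¹ ∪ {1})⁻¹ = S ∪ S⁻¹ ∪ {1} := by
      ext x
      simp only [Set.mem_inv, Set.mem_union, Set.mem_singleton_iff, inv_inv, inv_eq_one]
      tauto
    refine ⟨S ∪ S⁻¹ ∪ {1}, (hSf.union hSf.inv).union (Set.finite_singleton 1), by simp,
      hTi, fun g => ?_⟩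
    have hg : g ∈ Subgroup.closure S := by rw [hS]; trivial
    induction hg using Subgroup.closure_induction with
    | mem x hx => exact ⟨1, by simp [hx]⟩
    | one => exact ⟨0, by simp⟩
    | mul x y _ _ hx hy =>
      obtain ⟨n, hn⟩ := hx
      obtain ⟨m, hm⟩ := hy
      exact ⟨n + m, by rw [pow_add]; exact Set.mul_mem_mul hn hm⟩
    | inv x _ hx =>
      obtain ⟨n, hn⟩ := hx
      refine ⟨n, ?_⟩
      rw [← hTi, inv_pow]
      simpa using hn
  have hmono : ∀ {m n : ℕ}, m ≤ n → T ^ m ⊆ T ^ n := fun h => Set.pow_subset_pow_right hT1 h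
  have hinv : ∀ (n : ℕ) (g : G), g ∈ T ^ n → g⁻¹ ∈ T ^ n := by
    intro n g hg
    rw [← hTi, inv_pow]
    simpa using hg
  have hBf : ∀ n : ℕ, (T ^ n).Finite := by
    intro n
    induction n with
    | zero => simp
    | succ n ih => rw [pow_succ]; exact ih.mul hTf
  -- points which reach U within n steps
  let D : ℕ → Set X := fun n => {x | ∃ g ∈ T ^ n, g • x ∈ U}
  have hDo : ∀ n, IsOpen (D n) := by
    intro n
    have : D n = ⋃ g ∈ T ^ n, (fun x : X => g • x) ⁻¹' U := by
      ext x; simp [D]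
    rw [this]
    exact isOpen_biUnion fun g _ => hUo.preimage (continuous_const_smul g)
  have hDs : ∀ n x, x ∈ D (n + 1) ↔ ∃ s ∈ T, s • x ∈ D n := by
    intro n x
    constructor
    · rintro ⟨g, hg, hx⟩
      rw [pow_succ] at hg
      obtain ⟨a, ha, s, hs, rfl⟩ := Set.mem_mul.1 hg
      exact ⟨s, hs, a, ha, by rwa [smul_smul]⟩
    · rintro ⟨s, hs, a, ha, hx⟩
      exact ⟨a * s, by rw [pow_succ]; exact Set.mul_mem_mul ha hs, by rwa [mul_smul]⟩
  let E : ℕ → Set X := fun k => {y | ∃ w ∈ T ^ (k + 1), w • y ∉ D k}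
  have hEc : ∀ k, IsClosed (E k) := by
    intro k
    have : E k = ⋃ w ∈ T ^ (k + 1), (fun x : X => w • x) ⁻¹' (D k)ᶜ := by
      ext x; simp [E]
    rw [this]
    exact (hBf _).isClosed_biUnion fun w _ =>
      (hDo k).isClosed_compl.preimage (continuous_const_smul w)
  have key : ∀ n x, x ∈ D (n + 1) → x ∉ D n →
      ∃ y ∈ U, (∃ w ∈ T ^ (n + 1), w • y = x) ∧ ∀ k ≤ n, y ∈ E k := by
    intro n
    induction n with
    | zero =>
      rintro x ⟨g, hg, hx⟩ hx'
      refine ⟨g • x, hx, ⟨g⁻¹, hinv _ _ hg, by simp⟩, fun k hk => ?_⟩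
      obtain rfl : k = 0 := by omega
      exact ⟨g⁻¹, hinv _ _ hg, by simpa using hx'⟩
    | succ n ih =>
      intro x hx hx'
      obtain ⟨s, hs, hsx⟩ := (hDs _ _).1 hx
      have h2 : s • x ∉ D n := fun h => hx' ((hDs _ _).2 ⟨s, hs, h⟩)
      obtain ⟨y, hy, ⟨w, hw, hwy⟩, hE⟩ := ih _ hsx h2
      have hs' : s⁻¹ ∈ T := by rw [← hTi]; simpa using hs
      have hw' : s⁻¹ * w ∈ T ^ (n + 1 + 1) := by
        rw [pow_succ' T (n + 1)]; exact Set.mul_mem_mul hs' hw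
      have hwx : (s⁻¹ * w) • y = x := by rw [mul_smul, hwy]; simp
      refine ⟨y, hy, ⟨_, hw', hwx⟩, fun k hk => ?_⟩
      rcases Nat.lt_or_ge n k with h | h
      · obtain rfl : k = n + 1 := by omega
        exact ⟨_, hw', by rwa [hwx]⟩
      · exact hE k h
  have hnot : ∀ y ∈ U, ∃ k, y ∉ E k := by
    intro y hy
    obtain ⟨F, hF⟩ := hap y hy U (hUo.mem_nhds hy)
    choose N hN using hTg
    refine ⟨F.sup N, ?_⟩
    rintro ⟨w, _, hw⟩
    obtain ⟨f, hf, hfy⟩ := hF w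
    exact hw ⟨f, hmono (Finset.le_sup hf) (hN f), by rwa [smul_smul]⟩
  obtain ⟨n, hn⟩ : ∃ n, U ∩ (⋂ k ∈ Set.Iic n, E k) = ∅ := by
    apply hUc.elim_directed_family_closed (fun n => ⋂ k ∈ Set.Iic n, E k)
    · exact fun n => isClosed_biInter fun k _ => hEc k
    · ext y
      simp only [Set.mem_inter_iff, Set.mem_iInter, Set.mem_Iic, Set.mem_empty_iff_false,
        iff_false, not_and]
      intro hy h
      obtain ⟨k, hk⟩ := hnot y hy
      exact hk (h k k le_rfl)
    · refine directed_of_isDirected_le fun a b hab => ?_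
      exact Set.biInter_subset_biInter_left (Set.Iic_subset_Iic.2 hab)
  have hstep : D (n + 1) ⊆ D n := by
    intro x hx
    by_contra hx'
    obtain ⟨y, hy, _, hE⟩ := key n x hx hx'
    have : y ∈ U ∩ (⋂ k ∈ Set.Iic n, E k) := ⟨hy, by simpa using hE⟩
    rw [hn] at this
    exact this
  have hall : ∀ m, D m ⊆ D n := by
    intro m
    induction m with
    | zero => 
      rintro x ⟨g, hg, hx⟩
      exact ⟨g, hmono (Nat.zero_le n) hg, hx⟩
    | succ m ih =>
      intro x hx
      obtain ⟨s, hs, hsx⟩ := (hDs _ _).1 hx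
      exact hstep ((hDs _ _).2 ⟨s, hs, ih hsx⟩)
  refine ⟨(hBf n).toFinset, ?_⟩
  ext x
  simp only [Set.mem_iUnion, Set.Finite.mem_toFinset, exists_prop]
  constructor
  · rintro ⟨g, hg⟩
    obtain ⟨m, hm⟩ := hTg g⁻¹
    obtain ⟨a, ha, hax⟩ := hall m ⟨g⁻¹, hm, Set.mem_smul_set_iff_inv_smul_mem.1 hg⟩
    exact ⟨a⁻¹, hinv _ _ ha, Set.mem_smul_set_iff_inv_smul_mem.2 (by simpa using hax)⟩
  · rintro ⟨g, _, hg⟩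
    exact ⟨g, hg⟩
end

section
/- Let (G,X) be a flow and A a syndetic normal subgroup of G, i.e. A ⊴ G and K⁻¹A = G for some compact K ⊆ G. Then every point of X is almost periodic for the G-action if and only if every point of X is almost periodic for the restricted A-action, where x is almost periodic for the A-action if for every neighborhood U of x there is a compact set K' ⊆ A with A ⊆ K'⁻¹·{a ∈ A | a•x ∈ U}. -/
open Pointwise Filter Topology

lemma aux_closed {G X : Type} [Group G] [TopologicalSpace G]
    [TopologicalSpace X] [MulAction G X] [ContinuousSMul G X]
    {K : Set G} (hK : IsCompact K) {C : Set X} (hC : IsClosed C) :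
    IsClosed {y : X | ∃ k ∈ K, k • y ∈ C} := by
  have : CompactSpace K := isCompact_iff_compactSpace.mp hK
  have h1 : IsClosed {p : K × X | (p.1 : G) • p.2 ∈ C} :=
    hC.preimage (by fun_prop)
  have h2 := isClosedMap_snd_of_compactSpace (X := K) (Y := X) _ h1
  convert h2 using 1
  ext y
  constructor
  · rintro ⟨k, hk, h⟩
    exact ⟨(⟨k, hk⟩, y), h, rfl⟩
  · rintro ⟨⟨k, z⟩, h, rfl⟩
    exact ⟨k, k.2, h⟩

lemma aux_minimal {G X : Type} [Group G]
    [TopologicalSpace X] [T2Space X] [MulAction G X] [ContinuousConstSMul G X]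
    (A : Subgroup G) (Y : Set X) (hY : IsCompact Y) (hne : Y.Nonempty)
    (hinv : ∀ a ∈ A, ∀ y ∈ Y, a • y ∈ Y) :
    ∃ M ⊆ Y, M.Nonempty ∧ IsCompact M ∧ (∀ a ∈ A, ∀ y ∈ M, a • y ∈ M) ∧
      ∀ m ∈ M, M ⊆ closure {z | ∃ a ∈ A, z = a • m} := by
  let S : Set (Set X) := {M | M ⊆ Y ∧ M.Nonempty ∧ IsClosed M ∧ ∀ a ∈ A, ∀ y ∈ M, a • y ∈ M}
  have hYS : Y ∈ S := ⟨subset_rfl, hne, hY.isClosed, hinv⟩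
  obtain ⟨M, hMY, hM⟩ := zorn_superset_nonempty S (by
    intro c hc hchain hcne
    refine ⟨⋂₀ c, ⟨?_, ?_, ?_, ?_⟩, fun s hs => Set.sInter_subset_of_mem hs⟩
    · obtain ⟨s, hs⟩ := hcne
      exact (Set.sInter_subset_of_mem hs).trans (hc hs).1
    · have := hcne.to_subtype
      refine IsCompact.nonempty_sInter_of_directed_nonempty_isCompact_isClosed
        (S := c) ?_ ?_ ?_ ?_
      · exact (show IsChain (· ⊇ ·) c from hchain.symm).directedOn
      · exact fun s hs => (hc hs).2.1
      · exact fun s hs => hY.of_isClosed_subset (hc hs).2.2.1 (hc hs).1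
      · exact fun s hs => (hc hs).2.2.1
    · exact isClosed_sInter fun s hs => (hc hs).2.2.1
    · exact fun a ha y hy s hs => (hc hs).2.2.2 a ha y (hy s hs)) Y hYS
  obtain ⟨⟨h1, h2, h3, h4⟩, hmin⟩ := hM
  refine ⟨M, h1, h2, hY.of_isClosed_subset h3 h1, h4, fun m hm => ?_⟩
  have hsub : closure {z | ∃ a ∈ A, z = a • m} ⊆ M := by
    apply closure_minimal _ h3
    rintro z ⟨a, ha, rfl⟩
    exact h4 a ha m hm
  refine hmin ⟨hsub.trans h1, ⟨m, subset_closure ⟨1, A.one_mem, by simp⟩⟩,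
    isClosed_closure, ?_⟩ hsub
  intro a ha y hy
  refine map_mem_closure (continuous_const_smul a) hy ?_
  rintro z ⟨b, hb, rfl⟩
  exact ⟨a * b, A.mul_mem ha hb, by rw [mul_smul]⟩

/-- for a flow `(G,X)` and a syndetic normal subgroup `A` of `G`,
every point is almost periodic for the `G`-action iff every point is almost
periodic for the restricted `A`-action. -/
theorem statement15 {G X : Type} [Group G] [TopologicalSpace G] [T2Space G]
    [ContinuousMul G] [UniformSpace X] [T2Space X] [LocallyCompactSpace X]
    [MulAction G X] [ContinuousSMul G X]
    (hLag : ∀ x : X, IsCompact (closure (MulAction.orbit G x)))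
    (A : Subgroup G) (hnorm : A.Normal)
    (hsynd : ∃ K : Set G, IsCompact K ∧ K⁻¹ * (A : Set G) = Set.univ) :
    (∀ x : X, ∀ U ∈ 𝓝 x,
        ∃ K : Set G, IsCompact K ∧ K⁻¹ * {g : G | g • x ∈ U} = Set.univ) ↔
      (∀ x : X, ∀ U ∈ 𝓝 x, ∃ K' : Set G, K' ⊆ (A : Set G) ∧ IsCompact K' ∧
        (A : Set G) ⊆ K'⁻¹ * {a : G | a ∈ A ∧ a • x ∈ U}) := by
  obtain ⟨K, hK, hKA⟩ := hsynd
  have hKA' : ∀ g : G, ∃ k ∈ K, k * g ∈ A := by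
    intro g
    have : g ∈ K⁻¹ * (A : Set G) := hKA ▸ Set.mem_univ g
    obtain ⟨k, hk, a, ha, rfl⟩ := this
    exact ⟨k⁻¹, hk, by simpa using ha⟩
  constructor
  · intro hG x U hU
    obtain ⟨M, hMY, ⟨m, hm⟩, hMc, hMinv, hMmin⟩ := aux_minimal A
      (closure (MulAction.orbit G x)) (hLag x)
      ⟨x, subset_closure (MulAction.mem_orbit_self x)⟩ (by
        intro a _ y hy
        refine map_mem_closure (continuous_const_smul a) hy ?_
        rintro z ⟨b, rfl⟩
        exact ⟨a * b, by simp [mul_smul]⟩)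
    -- x is in the closure of the orbit of m
    have hxm : x ∈ closure (MulAction.orbit G m) := by
      rw [mem_closure_iff_nhds]
      intro V hV
      obtain ⟨C, hC, hCc, hCV⟩ := exists_mem_nhds_isClosed_subset hV
      obtain ⟨L, hL, hLG⟩ := hG x C hC
      have hcl := aux_closed (X := X) hL hCc
      have : closure (MulAction.orbit G x) ⊆ {y : X | ∃ k ∈ L, k • y ∈ C} := by
        apply closure_minimal _ hcl
        rintro z ⟨g, rfl⟩
        have : g ∈ L⁻¹ * {g : G | g • x ∈ C} := hLG ▸ Set.mem_univ g
        obtain ⟨k, hk, a, ha, rfl⟩ := this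
        exact ⟨k⁻¹, hk, by simpa [mul_smul] using ha⟩
      obtain ⟨k, -, hk⟩ := this (hMY hm)
      exact ⟨k • m, hCV hk, ⟨k, rfl⟩⟩
    have hxK : x ∈ {y : X | ∃ k ∈ K, k • y ∈ M} := by
      refine closure_minimal ?_ (aux_closed hK hMc.isClosed) hxm
      rintro z ⟨g, rfl⟩
      obtain ⟨k, hk, hkg⟩ := hKA' g
      exact ⟨k, hk, by simpa [mul_smul] using hMinv _ hkg m hm⟩
    obtain ⟨k, -, hkx⟩ := hxK
    -- `k • x ∈ M`
    have hW : (fun z : X => k⁻¹ • z) ⁻¹' (interior U) ∈ 𝓝 (k • x) := by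
      apply (continuous_const_smul k⁻¹).continuousAt.preimage_mem_nhds
      simpa using hU
    have hcov : ∀ z ∈ M, ∃ b : A, k⁻¹ • (b : G) • z ∈ interior U := by
      intro z hz
      have := mem_closure_iff_nhds.mp (hMmin z hz hkx) _ hW
      obtain ⟨_, h1, b, hb, rfl⟩ := this
      exact ⟨⟨b, hb⟩, h1⟩
    obtain ⟨t, ht⟩ := hMc.elim_finite_subcover
      (fun b : A => {z : X | k⁻¹ • (b : G) • z ∈ interior U})
      (fun b => isOpen_interior.preimage (by fun_prop))
      (fun z hz => Set.mem_iUnion.mpr (hcov z hz))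
    refine ⟨(fun b : A => k⁻¹ * (b : G) * k) '' (t : Set A), ?_,
      (t.finite_toSet.image _).isCompact, ?_⟩
    · rintro _ ⟨b, -, rfl⟩
      simpa using hnorm.conj_mem b b.2 k⁻¹
    · intro a ha
      have h1 : (k * a * k⁻¹) • k • x ∈ M := hMinv _ (hnorm.conj_mem a ha k) _ hkx
      obtain ⟨b, hb, hbU⟩ := Set.mem_iUnion₂.mp (ht h1)
      have hc : k⁻¹ * (b : G) * k ∈ A := by simpa using hnorm.conj_mem b b.2 k⁻¹
      refine ⟨(k⁻¹ * (b : G) * k)⁻¹, Set.inv_mem_inv.mpr ⟨b, hb, rfl⟩,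
        (k⁻¹ * (b : G) * k) * a, ⟨A.mul_mem hc ha, ?_⟩, by simp only [inv_mul_cancel_left]⟩
      have := interior_subset hbU
      simpa [mul_smul] using this
  · intro hA x U hU
    obtain ⟨K', hK'A, hK', hAK⟩ := hA x U hU
    refine ⟨K' * K, hK'.mul hK, Set.eq_univ_of_forall fun g => ?_⟩
    obtain ⟨k, hk, hkg⟩ := hKA' g
    obtain ⟨l, hl, a, ⟨_, ha⟩, hla⟩ := hAK hkg
    simp only at hla
    refine ⟨(l⁻¹ * k)⁻¹, Set.inv_mem_inv.mpr ⟨l⁻¹, hl, k, hk, rfl⟩, a, ha, ?_⟩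
    simp [mul_assoc, hla]
end

section
/- Let T be a group, S a subgroup of T, and Γ ⊆ T a subset with e ∈ Γ = Γ⁻¹ and T = Γ·S. Put Ψ = Γ³ ∩ S. Then Γⁿ ∩ S ⊆ Ψⁿ for every integer n ≥ 1. -/
open Pointwise

/-- if `T = Γ·S` with `e ∈ Γ = Γ⁻¹` and `Ψ = Γ³ ∩ S`, then
`Γⁿ ∩ S ⊆ Ψⁿ` for every `n ≥ 1`. -/
theorem statement16 {T : Type*} [Group T] (S : Subgroup T) (Γ : Set T)
    (h1 : (1 : T) ∈ Γ) (hinv : Γ⁻¹ = Γ) (hcov : Γ * (S : Set T) = Set.univ) :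
    ∀ n : ℕ, 1 ≤ n → Γ ^ n ∩ (S : Set T) ⊆ (Γ ^ 3 ∩ (S : Set T)) ^ n := by
  have hinv' : ∀ x ∈ Γ, x⁻¹ ∈ Γ := fun x hx => by
    rw [← hinv]; simpa using hx
  have h3 : ∀ a ∈ Γ, ∀ b ∈ Γ, ∀ c ∈ Γ, a * b * c ∈ Γ ^ 3 := fun a ha b hb c hc => by
    rw [pow_succ, pow_two]
    exact Set.mul_mem_mul (Set.mul_mem_mul ha hb) hc
  have key : ∀ k : ℕ, ∀ x ∈ Γ ^ k,
      ∃ s ∈ (Γ ^ 3 ∩ (S : Set T)) ^ k, s ∈ S ∧ ∃ d ∈ Γ, x = s * d := by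
    intro k
    induction k with
    | zero =>
      intro x hx
      have hx1 : x = 1 := by simpa using hx
      exact ⟨1, by simp, S.one_mem, 1, h1, by simp [hx1]⟩
    | succ k ih =>
      intro x hx
      rw [pow_succ] at hx
      obtain ⟨y, hy, g, hg, rfl⟩ := Set.mem_mul.1 hx
      obtain ⟨s, hs, hsS, d, hd, rfl⟩ := ih y hy
      have hu : (d * g)⁻¹ ∈ Γ * (S : Set T) := by rw [hcov]; trivial
      obtain ⟨c, hc, t, ht, hct⟩ := Set.mem_mul.1 hu
      have e : d * g * c = t⁻¹ := by
        have h : d * g = (c * t)⁻¹ := by rw [hct, inv_inv]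
        rw [h]; group
      have hS : d * g * c ∈ S := by rw [e]; exact S.inv_mem ht
      refine ⟨s * (d * g * c), ?_, S.mul_mem hsS hS, c⁻¹, hinv' c hc, by group⟩
      rw [pow_succ]
      exact Set.mul_mem_mul hs ⟨h3 d hd g hg c hc, hS⟩
  intro n hn x hx
  obtain ⟨m, rfl⟩ : ∃ m, n = m + 1 := ⟨n - 1, by omega⟩
  obtain ⟨hx, hxS⟩ := hx
  rw [pow_succ] at hx
  obtain ⟨y, hy, g, hg, rfl⟩ := Set.mem_mul.1 hx
  obtain ⟨s, hs, hsS, d, hd, rfl⟩ := key m y hy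
  have hS : d * g ∈ S := by
    rw [← S.mul_mem_cancel_left hsS, ← mul_assoc]; exact hxS
  rw [pow_succ, mul_assoc]
  exact Set.mul_mem_mul hs ⟨by simpa using h3 d hd g hg 1 h1, hS⟩
end

section
/- A flow (G,X) is locally weakly almost periodic with G discrete if and only if the orbit closure mapping x ↦ closure(G•x) is upper semicontinuous. -/
open Pointwise Filter Topology

/-- a flow `(G,X)` is locally weakly almost periodic with `G` discrete
iff the orbit closure mapping `x ↦ closure (G • x)` is upper semicontinuous. -/
theorem statement19 {G X : Type} [Group G] [TopologicalSpace G] [T2Space G]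
    [ContinuousMul G] [UniformSpace X] [T2Space X] [LocallyCompactSpace X]
    [MulAction G X] [ContinuousSMul G X]
    (hLag : ∀ x : X, IsCompact (closure (MulAction.orbit G x))) :
    (∀ x : X, ∀ U ∈ 𝓝 x, ∃ F : Finset G, ∃ V ∈ 𝓝 x,
        ∀ g : G, ∀ v ∈ V, ∃ f ∈ F, f • g • v ∈ U) ↔
      (∀ (x : X) (U : Set X), IsOpen U → closure (MulAction.orbit G x) ⊆ U →
        ∃ V ∈ 𝓝 x, ∀ y ∈ V, closure (MulAction.orbit G y) ⊆ U) := by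
  constructor
  · intro h x U hU hxU
    obtain ⟨U', hU'o, hKU', hU'U, -⟩ := exists_open_between_and_isCompact_closure (hLag x) hU hxU
    obtain ⟨C, hC, hCx⟩ := exists_compact_mem_nhds x
    obtain ⟨F, V₀, hV₀, hF⟩ := h x C hCx
    have hcomp : IsCompact ((⋃ f ∈ F, (fun y : X => f⁻¹ • y) '' C) \ U') :=
      (F.isCompact_biUnion fun f _ => hC.image (continuous_const_smul _)).diff hU'o
    have key : ∃ O ∈ 𝓝 x, ∀ y ∈ O, ∀ g : G,
        g • y ∉ ((⋃ f ∈ F, (fun y : X => f⁻¹ • y) '' C) \ U') := by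
      refine hcomp.induction_on (p := fun S => ∃ O ∈ 𝓝 x, ∀ y ∈ O, ∀ g : G, g • y ∉ S) ?_ ?_ ?_ ?_
      · exact ⟨Set.univ, univ_mem, fun y _ g hg => hg⟩
      · rintro s t hst ⟨O, hO, h'⟩
        exact ⟨O, hO, fun y hy g hg => h' y hy g (hst hg)⟩
      · rintro s t ⟨O, hO, h1⟩ ⟨P, hP, h2⟩
        refine ⟨O ∩ P, inter_mem hO hP, fun y hy g hg => ?_⟩
        rcases hg with hg | hg
        · exact h1 y hy.1 g hg
        · exact h2 y hy.2 g hg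
      · intro z hz
        have hzK : (closure (MulAction.orbit G x))ᶜ ∈ 𝓝 z :=
          isClosed_closure.isOpen_compl.mem_nhds fun hzK => hz.2 (hKU' hzK)
        obtain ⟨N, hN, hNc, hNK⟩ := exists_mem_nhds_isClosed_subset hzK
        obtain ⟨F', V', hV', hF'⟩ := h z N hN
        refine ⟨V', mem_nhdsWithin_of_mem_nhds hV', {y | ∀ f ∈ F', f • y ∈ Nᶜ}, ?_, ?_⟩
        · refine (Filter.eventually_all_finset F').2 fun f _ => ?_
          refine (continuous_const_smul f).continuousAt.eventually_mem (hNc.isOpen_compl.mem_nhds ?_)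
          exact fun hfx => hNK hfx (subset_closure ⟨f, rfl⟩)
        · intro y hy g hg
          obtain ⟨f, hf, hfy⟩ := hF' g⁻¹ _ hg
          rw [inv_smul_smul] at hfy
          exact hy f hf hfy
    obtain ⟨O, hO, hOk⟩ := key
    refine ⟨O ∩ V₀, inter_mem hO hV₀, fun y hy => (closure_mono ?_).trans hU'U⟩
    rintro _ ⟨g, rfl⟩
    by_contra hg
    obtain ⟨f, hf, hfy⟩ := hF g y hy.2
    refine hOk y hy.1 g ⟨?_, hg⟩
    simp only [Set.mem_iUnion]
    exact ⟨f, hf, _, hfy, inv_smul_smul _ _⟩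
  · intro h x U hU
    have hmin : ∀ y ∈ closure (MulAction.orbit G x), x ∈ closure (MulAction.orbit G y) := by
      intro y hy
      by_contra hx
      obtain ⟨V, hV, hVs⟩ := h y {x}ᶜ isOpen_compl_singleton (fun z hz hzx => hx (by
        rw [Set.mem_singleton_iff] at hzx; exact hzx ▸ hz))
      obtain ⟨_, hgV, ⟨g, rfl⟩⟩ := mem_closure_iff_nhds.1 hy V hV
      exact hVs _ hgV (subset_closure ⟨g⁻¹, inv_smul_smul g x⟩) rfl
    obtain ⟨U', hU'U, hU'o, hxU'⟩ := mem_nhds_iff.1 hU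
    obtain ⟨F, hF⟩ := (hLag x).elim_finite_subcover (fun g : G => (fun y : X => g • y) ⁻¹' U')
      (fun g => hU'o.preimage (continuous_const_smul g)) (by
        intro y hy
        obtain ⟨_, hgU, ⟨g, rfl⟩⟩ := mem_closure_iff.1 (hmin y hy) U' hU'o hxU'
        exact Set.mem_iUnion.2 ⟨g, hgU⟩)
    obtain ⟨V, hV, hVs⟩ := h x _ (isOpen_biUnion fun g _ =>
      hU'o.preimage (continuous_const_smul g)) hF
    refine ⟨F, V, hV, fun g v hv => ?_⟩
    have := hVs v hv (subset_closure ⟨g, rfl⟩)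
    simp only [Set.mem_iUnion] at this
    obtain ⟨f, hf, hfg⟩ := this
    exact ⟨f, hf, hU'U hfg⟩
end
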